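/- For every δ > 0 there is N ∈ ℕ such that the following holds. Let G be a finite abelian group (written additively) of order n ≥ N, let p be a real with n^{−1/10^{100}} ≤ p ≤ 1, and let R be a p-random subset of G. Then with probability at least 1 − δ the following event holds: for every X ⊆ G and every α ∈ G such that |X Δ R| ≤ p^{10^{10}}·n/(log n)^{10^{22}}, 0 ∉ X, |X| is divisible by 4, and ∑_{x∈X} x = (|X|/4)·α, the set X can be partitioned into sets of size 4 each of which has sum α. -/

import Mathlib

open scoped Classical

/-- The probability that a `p`-random subset of the finite type `G` (each element included
independently with probability `p`) equals the finset `A`. -/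
noncomputable def setProb (G : Type) [Fintype G] [DecidableEq G] (p : ℝ) (A : Finset G) : ℝ :=
  p ^ A.card * (1 - p) ^ (Fintype.card G - A.card)

/-!
With high probability every set `X` close to `R` has almost the expected number of points, of pairs
`{a, t - a}` with given sum `t`, and of pairs of such pairs; nothing else about `X` is used.

By random colouring, `X` contains a small *reserve*: disjoint quadruples `{p, p', e, e'}` of sum
`α` in which `p + p'` is `t₀` or `t₀ + x` for a letter `x` from a set `S` of polylogarithmic size in
which every element of the group is a short sum. Outside the reserve, the quadruples of sum `α` form
an almost regular hypergraph with small codegrees; solving a perturbed linear system for the vertex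
corrections gives it almost equal weighted degrees, and the nibble then covers all but few points.

The leftover `Z` has `|Z| = 4j` and sum `j • α`. To move the sum of a group `{u, v, w, z}` by the
letter `x`, pick reserve quadruples `i` of class `x` and `j` of class `0` with
`u + v + p i + e j = α`: the group becomes `{p' i, w, e' j, z}`, and the pairs `{e i, e' i}` and
`{p j, p' j}` remain. Moving another group by `-x` leaves the complementary pairs, so sums can be
transferred between groups letter by letter: each group is brought to sum `α` in turn, and the last
one is then correct because the total is.
-/

/-! ### Independent random subsets -/

section Bernoulli

variable {ι : Type*} [DecidableEq ι] {S : Finset ι} {q : ι → ℝ}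

/-- Expectation of `f A`, where `A` is the random subset of `S` containing each `i ∈ S`
independently with probability `q i`. -/
noncomputable def bernoulliExp (S : Finset ι) (q : ι → ℝ) (f : Finset ι → ℝ) : ℝ :=
  ∑ A ∈ S.powerset, ((∏ i ∈ A, q i) * ∏ i ∈ S \ A, (1 - q i)) * f A

/-- Probability that the random subset `A` of `S` of `bernoulliExp` satisfies `P A`. -/
noncomputable def bernoulliProb (S : Finset ι) (q : ι → ℝ) (P : Finset ι → Prop) : ℝ :=
  bernoulliExp S q fun A => if P A then 1 else 0

theorem bernoulliExp_ite (P : Finset ι → Prop) [DecidablePred P] :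
    bernoulliExp S q (fun A => if P A then 1 else 0) = bernoulliProb S q P := by
  unfold bernoulliProb
  congr!

theorem bernoulliExp_insert {i : ι} (hi : i ∉ S) (f : Finset ι → ℝ) :
    bernoulliExp (insert i S) q f =
      (1 - q i) * bernoulliExp S q f + q i * bernoulliExp S q (fun A => f (insert i A)) := by
  unfold bernoulliExp
  rw [Finset.sum_powerset_insert hi, Finset.mul_sum, Finset.mul_sum]
  congr 1
  · refine Finset.sum_congr rfl fun A hA => ?_
    have hiA : i ∉ A := fun h => hi (Finset.mem_powerset.1 hA h)
    rw [Finset.insert_sdiff_of_notMem _ hiA, Finset.prod_insert (by simp [hi])]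
    ring
  · refine Finset.sum_congr rfl fun A hA => ?_
    have hiA : i ∉ A := fun h => hi (Finset.mem_powerset.1 hA h)
    rw [Finset.prod_insert hiA, Finset.insert_sdiff_insert, Finset.sdiff_insert_of_notMem hi]
    ring

theorem bernoulliExp_add (f g : Finset ι → ℝ) :
    bernoulliExp S q (fun A => f A + g A) = bernoulliExp S q f + bernoulliExp S q g := by
  simp only [bernoulliExp, mul_add, Finset.sum_add_distrib]

theorem bernoulliExp_const_mul (c : ℝ) (f : Finset ι → ℝ) :
    bernoulliExp S q (fun A => c * f A) = c * bernoulliExp S q f := by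
  simp only [bernoulliExp, Finset.mul_sum]
  exact Finset.sum_congr rfl fun A _ => by ring

theorem bernoulliExp_neg (f : Finset ι → ℝ) :
    bernoulliExp S q (fun A => -f A) = -bernoulliExp S q f := by
  simpa only [neg_one_mul] using bernoulliExp_const_mul (-1) f

theorem bernoulliExp_sum {κ : Type*} (s : Finset κ) (f : κ → Finset ι → ℝ) :
    bernoulliExp S q (fun A => ∑ k ∈ s, f k A) = ∑ k ∈ s, bernoulliExp S q (f k) := by
  simp only [bernoulliExp, Finset.mul_sum]
  rw [Finset.sum_comm]

theorem bernoulliExp_mono (hq : ∀ i ∈ S, 0 ≤ q i ∧ q i ≤ 1) {f g : Finset ι → ℝ}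
    (h : ∀ A ⊆ S, f A ≤ g A) : bernoulliExp S q f ≤ bernoulliExp S q g := by
  refine Finset.sum_le_sum fun A hA => ?_
  have hA := Finset.mem_powerset.1 hA
  refine mul_le_mul_of_nonneg_left (h A hA) (mul_nonneg ?_ ?_)
  · exact Finset.prod_nonneg fun i hi => (hq i (hA hi)).1
  · exact Finset.prod_nonneg fun i hi => sub_nonneg.2 (hq i (Finset.sdiff_subset hi)).2

theorem bernoulliExp_congr {f g : Finset ι → ℝ} (h : ∀ A ⊆ S, f A = g A) :
    bernoulliExp S q f = bernoulliExp S q g :=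
  Finset.sum_congr rfl fun A hA => by rw [h A (Finset.mem_powerset.1 hA)]

theorem bernoulliExp_prod (a b : ι → ℝ) :
    bernoulliExp S q (fun A => (∏ i ∈ A, a i) * ∏ i ∈ S \ A, b i) =
      ∏ i ∈ S, (q i * a i + (1 - q i) * b i) := by
  rw [Finset.prod_add]
  refine Finset.sum_congr rfl fun A _ => ?_
  rw [Finset.prod_mul_distrib, Finset.prod_mul_distrib]
  ring

theorem bernoulliExp_const (c : ℝ) : bernoulliExp S q (fun _ => c) = c := by
  have h := bernoulliExp_const_mul (S := S) (q := q) c fun A => (∏ _i ∈ A, 1) * ∏ _i ∈ S \ A, 1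
  rw [bernoulliExp_prod] at h
  simpa using h

theorem exists_le_bernoulliExp (hq : ∀ i ∈ S, 0 ≤ q i ∧ q i ≤ 1) (f : Finset ι → ℝ) :
    ∃ A ⊆ S, f A ≤ bernoulliExp S q f := by
  obtain ⟨A₀, hA₀, hmin⟩ := S.powerset.exists_min_image f ⟨∅, by simp⟩
  refine ⟨A₀, Finset.mem_powerset.1 hA₀, ?_⟩
  calc f A₀ = bernoulliExp S q (fun _ => f A₀) := (bernoulliExp_const _).symm
    _ ≤ bernoulliExp S q f := bernoulliExp_mono hq fun A hA => hmin A (Finset.mem_powerset.2 hA)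

theorem bernoulliProb_mono (hq : ∀ i ∈ S, 0 ≤ q i ∧ q i ≤ 1) {P Q : Finset ι → Prop}
    (h : ∀ A ⊆ S, P A → Q A) : bernoulliProb S q P ≤ bernoulliProb S q Q :=
  bernoulliExp_mono hq fun A hA => by
    split_ifs with hP hQ
    exacts [le_rfl, absurd (h A hA hP) hQ, zero_le_one, le_rfl]

theorem bernoulliProb_not (P : Finset ι → Prop) :
    bernoulliProb S q (fun A => ¬ P A) = 1 - bernoulliProb S q P := by
  rw [eq_sub_iff_add_eq, bernoulliProb, bernoulliProb, ← bernoulliExp_add]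
  refine (bernoulliExp_congr fun A _ => ?_).trans (bernoulliExp_const 1)
  by_cases h : P A <;> simp [h]

theorem bernoulliProb_or_le (hq : ∀ i ∈ S, 0 ≤ q i ∧ q i ≤ 1) (P Q : Finset ι → Prop) :
    bernoulliProb S q (fun A => P A ∨ Q A) ≤ bernoulliProb S q P + bernoulliProb S q Q := by
  simp only [bernoulliProb, ← bernoulliExp_add]
  exact bernoulliExp_mono hq fun A _ => by by_cases hP : P A <;> by_cases hQ : Q A <;> simp [hP, hQ]

theorem bernoulliProb_exists_le {κ : Type*} (hq : ∀ i ∈ S, 0 ≤ q i ∧ q i ≤ 1) (s : Finset κ)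
    (P : κ → Finset ι → Prop) :
    bernoulliProb S q (fun A => ∃ k ∈ s, P k A) ≤ ∑ k ∈ s, bernoulliProb S q (P k) := by
  simp only [bernoulliProb, ← bernoulliExp_sum]
  refine bernoulliExp_mono hq fun A _ => ?_
  have hnonneg : ∀ k ∈ s, (0 : ℝ) ≤ if P k A then 1 else 0 := fun k _ => by positivity
  split_ifs with h
  · obtain ⟨k, hk, hP⟩ := h
    simpa only [if_pos hP] using Finset.single_le_sum hnonneg hk
  · exact Finset.sum_nonneg hnonneg

theorem exists_le_bernoulliExp_add (hq : ∀ i ∈ S, 0 ≤ q i ∧ q i ≤ 1) {f : Finset ι → ℝ}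
    {P : Finset ι → Prop} {c : ℝ} (hf : ∀ A ⊆ S, 0 ≤ f A)
    (h : bernoulliExp S q f + c * bernoulliProb S q (fun A => ¬ P A) < c) :
    ∃ A ⊆ S, P A ∧ f A ≤ bernoulliExp S q f + c * bernoulliProb S q (fun A => ¬ P A) := by
  obtain ⟨A, hA, hle⟩ := exists_le_bernoulliExp hq fun A => f A + c * if ¬ P A then 1 else 0
  rw [bernoulliExp_add, bernoulliExp_const_mul, bernoulliExp_ite] at hle
  by_cases hP : P A
  · exact ⟨A, hA, hP, by simpa [hP] using hle⟩
  · rw [if_pos hP, mul_one] at hle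
    linarith [hf A hA]

theorem exists_of_bernoulliProb_not_lt_one (hq : ∀ i ∈ S, 0 ≤ q i ∧ q i ≤ 1)
    {P : Finset ι → Prop} (h : bernoulliProb S q (fun A => ¬ P A) < 1) : ∃ A ⊆ S, P A := by
  obtain ⟨A, hA, hP, -⟩ := exists_le_bernoulliExp_add (P := P) hq (f := fun _ => 0)
    (fun _ _ => le_rfl) (by rwa [bernoulliExp_const, zero_add, one_mul])
  exact ⟨A, hA, hP⟩

theorem bernoulliProb_subset_and_disjoint {B₁ B₂ : Finset ι} (h₁ : B₁ ⊆ S) (h₂ : B₂ ⊆ S)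
    (hd : Disjoint B₁ B₂) :
    bernoulliProb S q (fun A => B₁ ⊆ A ∧ Disjoint B₂ A) =
      (∏ i ∈ B₁, q i) * ∏ i ∈ B₂, (1 - q i) := by
  have hindicator : bernoulliProb S q (fun A => B₁ ⊆ A ∧ Disjoint B₂ A) = bernoulliExp S q
      fun A => (∏ i ∈ A, if i ∉ B₂ then 1 else 0) * ∏ i ∈ S \ A, if i ∉ B₁ then 1 else 0 := by
    refine bernoulliExp_congr fun A hA => ?_
    simp only [Finset.prod_ite_zero, Finset.prod_const_one, ← Finset.disjoint_right,
      show Disjoint B₁ (S \ A) ↔ B₁ ⊆ A from disjoint_sdiff_iff_le h₁ hA]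
    by_cases hB : B₁ ⊆ A <;> by_cases hB' : Disjoint B₂ A <;> simp [hB, hB']
  rw [hindicator, bernoulliExp_prod]
  have hfactor : ∀ i ∈ S, (q i * (if i ∉ B₂ then 1 else 0) + (1 - q i) * if i ∉ B₁ then 1 else 0) =
      (if i ∈ B₁ then q i else 1) * if i ∈ B₂ then 1 - q i else 1 := fun i _ => by
    by_cases hi : i ∈ B₁
    · simp [hi, Finset.disjoint_left.1 hd hi]
    · by_cases hi₂ : i ∈ B₂ <;> simp [hi, hi₂]
  rw [Finset.prod_congr rfl hfactor, Finset.prod_mul_distrib, Finset.prod_ite_mem,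
    Finset.prod_ite_mem, Finset.inter_eq_right.2 h₁, Finset.inter_eq_right.2 h₂]

theorem bernoulliProb_disjoint {B : Finset ι} (hB : B ⊆ S) :
    bernoulliProb S q (Disjoint B) = ∏ i ∈ B, (1 - q i) := by
  have h := bernoulliProb_subset_and_disjoint (q := q) (Finset.empty_subset S) hB
    (Finset.disjoint_empty_left _)
  simpa only [Finset.empty_subset, true_and, Finset.prod_empty, one_mul] using h

theorem bernoulliProb_subset {B : Finset ι} (hB : B ⊆ S) :
    bernoulliProb S q (B ⊆ ·) = ∏ i ∈ B, q i := by
  have h := bernoulliProb_subset_and_disjoint (q := q) hB (Finset.empty_subset S)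
    (Finset.disjoint_empty_right _)
  simpa only [Finset.disjoint_empty_left, and_true, Finset.prod_empty, mul_one] using h

theorem exp_le_one_add_add_sq {z : ℝ} (hz : |z| ≤ 1) : Real.exp z ≤ 1 + z + z ^ 2 := by
  linarith [(abs_le.1 (Real.abs_exp_sub_one_sub_id_le hz)).2]

theorem two_point_exp_le {t x c : ℝ} (ht0 : 0 ≤ t) (ht1 : t ≤ 1) (hx : |x| ≤ 1) (hxc : x ^ 2 ≤ c) :
    (1 - t) * Real.exp (-(t * x)) + t * Real.exp ((1 - t) * x) ≤ Real.exp (t * c) := by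
  have ht1' : 0 ≤ 1 - t := sub_nonneg.2 ht1
  have hsmall₀ : |-(t * x)| ≤ 1 := by
    rw [abs_neg, abs_mul, abs_of_nonneg ht0]
    exact mul_le_one₀ ht1 (abs_nonneg x) hx
  have hsmall₁ : |(1 - t) * x| ≤ 1 := by
    rw [abs_mul, abs_of_nonneg ht1']
    exact mul_le_one₀ (by linarith) (abs_nonneg x) hx
  calc _ ≤ (1 - t) * (1 + -(t * x) + (-(t * x)) ^ 2) +
        t * (1 + (1 - t) * x + ((1 - t) * x) ^ 2) := by
        gcongr <;> exact exp_le_one_add_add_sq ‹_›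
    _ = 1 + (1 - t) * (t * x ^ 2) := by ring
    _ ≤ 1 + t * c := by nlinarith [mul_nonneg ht0 (sq_nonneg x), mul_le_mul_of_nonneg_left hxc ht0]
    _ ≤ Real.exp (t * c) := by linarith [Real.add_one_le_exp (t * c)]

theorem abs_bernoulliExp_sub_le (hq : ∀ i ∈ S, 0 ≤ q i ∧ q i ≤ 1) {f g : Finset ι → ℝ} {c : ℝ}
    (h : ∀ A ⊆ S, |f A - g A| ≤ c) : |bernoulliExp S q f - bernoulliExp S q g| ≤ c := by
  have hfg : bernoulliExp S q f ≤ bernoulliExp S q (fun A => g A + c) :=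
    bernoulliExp_mono hq fun A hA => by linarith [(abs_le.1 (h A hA)).2]
  have hgf : bernoulliExp S q g ≤ bernoulliExp S q (fun A => f A + c) :=
    bernoulliExp_mono hq fun A hA => by linarith [(abs_le.1 (h A hA)).1]
  rw [bernoulliExp_add, bernoulliExp_const] at hfg hgf
  exact abs_le.2 ⟨by linarith, by linarith⟩

theorem bernoulliExp_exp_sub (l m a : ℝ) (f : Finset ι → ℝ) :
    bernoulliExp S q (fun A => Real.exp (l * (f A - m))) =
      Real.exp (l * (a - m)) * bernoulliExp S q (fun A => Real.exp (l * (f A - a))) := by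
  rw [← bernoulliExp_const_mul]
  refine bernoulliExp_congr fun A _ => ?_
  rw [← Real.exp_add]
  ring_nf

theorem bernoulliExp_exp_le (hq : ∀ i ∈ S, 0 ≤ q i ∧ q i ≤ 1) {f : Finset ι → ℝ} {c : ι → ℝ}
    {l : ℝ} (hl : 0 ≤ l) (hc : ∀ i ∈ S, l * c i ≤ 1)
    (hf : ∀ i ∈ S, ∀ A ⊆ S, i ∉ A → |f (insert i A) - f A| ≤ c i) :
    bernoulliExp S q (fun A => Real.exp (l * (f A - bernoulliExp S q f))) ≤
      Real.exp (l ^ 2 * ∑ i ∈ S, q i * c i ^ 2) := by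
  induction S using Finset.induction_on generalizing f with
  | empty => simp [bernoulliExp]
  | insert i S hi ih =>
    rw [Finset.forall_mem_insert] at hq hc
    obtain ⟨⟨hqi0, hqi1⟩, hqS⟩ := hq
    have hSi := Finset.subset_insert i S
    set g : Finset ι → ℝ := fun A => f (insert i A)
    set m₀ := bernoulliExp S q f
    set m₁ := bernoulliExp S q g
    have hmean : bernoulliExp (insert i S) q f = (1 - q i) * m₀ + q i * m₁ :=
      bernoulliExp_insert hi f
    have ihf := ih hqS hc.2 (f := f) fun j hj A hA hjA => hf j (hSi hj) A (hA.trans hSi) hjA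
    have ihg := ih hqS hc.2 (f := g) fun j hj A hA hjA => by
      have hji : j ≠ i := fun h => hi (h ▸ hj)
      have := hf j (hSi hj) (insert i A) (Finset.insert_subset_insert i hA) (by simp [hji, hjA])
      rwa [Finset.insert_comm] at this
    have hdiff : |m₁ - m₀| ≤ c i := abs_bernoulliExp_sub_le hqS fun A hA =>
      hf i (Finset.mem_insert_self i S) A (hA.trans hSi) fun h => hi (hA h)
    have hlow : l * (m₀ - ((1 - q i) * m₀ + q i * m₁)) = -(q i * (l * (m₁ - m₀))) := by ring
    have hhigh : l * (m₁ - ((1 - q i) * m₀ + q i * m₁)) = (1 - q i) * (l * (m₁ - m₀)) := by ring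
    have htwo : (1 - q i) * Real.exp (-(q i * (l * (m₁ - m₀)))) +
        q i * Real.exp ((1 - q i) * (l * (m₁ - m₀))) ≤ Real.exp (q i * (l * c i) ^ 2) := by
      have hle : |l * (m₁ - m₀)| ≤ l * c i := by
        rw [abs_mul, abs_of_nonneg hl]
        exact mul_le_mul_of_nonneg_left hdiff hl
      exact two_point_exp_le hqi0 hqi1 (hle.trans hc.1) (sq_le_sq.2 (hle.trans (le_abs_self _)))
    rw [hmean, bernoulliExp_insert hi, bernoulliExp_exp_sub _ _ m₀,
      bernoulliExp_exp_sub _ _ m₁ g, hlow, hhigh, Finset.sum_insert hi]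
    calc _ ≤ (1 - q i) * (Real.exp (-(q i * (l * (m₁ - m₀)))) *
            Real.exp (l ^ 2 * ∑ j ∈ S, q j * c j ^ 2)) +
          q i * (Real.exp ((1 - q i) * (l * (m₁ - m₀))) *
            Real.exp (l ^ 2 * ∑ j ∈ S, q j * c j ^ 2)) := by
          have : 0 ≤ 1 - q i := sub_nonneg.2 hqi1
          gcongr
      _ ≤ Real.exp (q i * (l * c i) ^ 2) * Real.exp (l ^ 2 * ∑ j ∈ S, q j * c j ^ 2) := by
          rw [← mul_assoc (1 - q i) (Real.exp _), ← mul_assoc (q i) (Real.exp _), ← add_mul]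
          gcongr
      _ = _ := by
          rw [← Real.exp_add]
          ring_nf

theorem bernoulliProb_upper_tail_le (hq : ∀ i ∈ S, 0 ≤ q i ∧ q i ≤ 1) {f : Finset ι → ℝ}
    {c : ι → ℝ} {s t : ℝ} (hs : 0 < s) (ht : 0 ≤ t) (hc : ∀ i ∈ S, t * c i ≤ 2 * s)
    (hf : ∀ i ∈ S, ∀ A ⊆ S, i ∉ A → |f (insert i A) - f A| ≤ c i)
    (hvar : ∑ i ∈ S, q i * c i ^ 2 ≤ s) :
    bernoulliProb S q (fun A => t ≤ f A - bernoulliExp S q f) ≤ Real.exp (-(t ^ 2 / (4 * s))) := by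
  -- Markov's inequality for `exp (l * (f - E f))` with the optimal `l = t / (2 * s)`.
  set l := t / (2 * s) with hl
  have hl0 : 0 ≤ l := by positivity
  have hlc : ∀ i ∈ S, l * c i ≤ 1 := fun i hi => by
    rw [hl, div_mul_eq_mul_div, div_le_one (by positivity)]
    exact hc i hi
  calc _ ≤ bernoulliExp S q
        (fun A => Real.exp (-(l * t)) * Real.exp (l * (f A - bernoulliExp S q f))) := by
        refine bernoulliExp_mono hq fun A _ => ?_
        rw [← Real.exp_add]
        split_ifs with h
        · exact Real.one_le_exp (by nlinarith)
        · exact Real.exp_nonneg _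
    _ ≤ Real.exp (-(l * t)) * Real.exp (l ^ 2 * ∑ i ∈ S, q i * c i ^ 2) := by
        rw [bernoulliExp_const_mul]
        gcongr
        exact bernoulliExp_exp_le hq hl0 hlc hf
    _ ≤ Real.exp (-(l * t) + l ^ 2 * s) := by
        rw [← Real.exp_add]
        gcongr
    _ = Real.exp (-(t ^ 2 / (4 * s))) := by
        rw [hl]
        congr 1
        field_simp
        ring

theorem bernoulliProb_tail_le (hq : ∀ i ∈ S, 0 ≤ q i ∧ q i ≤ 1) {f : Finset ι → ℝ} {c : ι → ℝ}
    {s t : ℝ} (hs : 0 < s) (ht : 0 ≤ t) (hc : ∀ i ∈ S, t * c i ≤ 2 * s)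
    (hf : ∀ i ∈ S, ∀ A ⊆ S, i ∉ A → |f (insert i A) - f A| ≤ c i)
    (hvar : ∑ i ∈ S, q i * c i ^ 2 ≤ s) :
    bernoulliProb S q (fun A => t ≤ |f A - bernoulliExp S q f|) ≤
      2 * Real.exp (-(t ^ 2 / (4 * s))) := by
  have hupper := bernoulliProb_upper_tail_le hq hs ht hc hf hvar
  have hlower := bernoulliProb_upper_tail_le hq hs ht hc (f := fun A => -f A)
    (fun i hi A hA hiA => by
      rw [← abs_neg, neg_sub_neg, neg_sub]
      exact hf i hi A hA hiA) hvar
  have hunion := bernoulliProb_or_le hq (fun A => t ≤ f A - bernoulliExp S q f)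
    (fun A => t ≤ -f A - bernoulliExp S q (fun A => -f A))
  simp only [le_abs, neg_sub', bernoulliExp_neg, sub_neg_eq_add] at hunion hlower ⊢
  linarith

end Bernoulli

/-! ### The Rödl nibble -/

section Nibble

theorem prod_one_sub_bounds {ι : Type*} (B : Finset ι) (q : ι → ℝ)
    (hq : ∀ i ∈ B, 0 ≤ q i ∧ q i ≤ 1) :
    1 - ∑ i ∈ B, q i ≤ ∏ i ∈ B, (1 - q i) ∧
      ∏ i ∈ B, (1 - q i) ≤ 1 - ∑ i ∈ B, q i + (∑ i ∈ B, q i) ^ 2 := by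
  classical
  induction B using Finset.induction_on with
  | empty => simp
  | insert i B hi ih =>
    rw [Finset.forall_mem_insert] at hq
    obtain ⟨⟨hqi0, hqi1⟩, hqB⟩ := hq
    obtain ⟨hlower, hupper⟩ := ih hqB
    have hsum : 0 ≤ ∑ j ∈ B, q j := Finset.sum_nonneg fun j hj => (hqB j hj).1
    have hqi1' : 0 ≤ 1 - q i := sub_nonneg.2 hqi1
    rw [Finset.prod_insert hi, Finset.sum_insert hi]
    constructor
    · nlinarith [mul_le_mul_of_nonneg_left hlower hqi1', mul_nonneg hqi0 hsum]
    · nlinarith [mul_le_mul_of_nonneg_left hupper hqi1', mul_nonneg hqi0 hsum,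
        mul_nonneg hqi0 (sq_nonneg (∑ j ∈ B, q j)), sq_nonneg (q i)]

variable {α : Type*} [DecidableEq α]

/-- The edges of `H` that meet `T`. -/
def meeting (H : Finset (Finset α)) (T : Finset α) : Finset (Finset α) :=
  H.filter fun e => ¬ Disjoint e T

/-- A weighted `4`-uniform hypergraph with weighted degrees `1 ± δ` and weighted codegrees
at most `κ`. -/
structure NearRegular (V : Finset α) (H : Finset (Finset α)) (w : Finset α → ℝ) (δ κ : ℝ) :
    Prop where
  sub : ∀ e ∈ H, e ⊆ V
  card : ∀ e ∈ H, e.card = 4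
  nonneg : ∀ e ∈ H, 0 ≤ w e
  deg : ∀ v ∈ V, |∑ e ∈ H with v ∈ e, w e - 1| ≤ δ
  codeg : ∀ u v, u ≠ v → ∑ e ∈ H with u ∈ e ∧ v ∈ e, w e ≤ κ

theorem sum_deg_eq_sum_card_inter (H : Finset (Finset α)) (w : Finset α → ℝ) (T : Finset α) :
    ∑ u ∈ T, ∑ e ∈ H with u ∈ e, w e = ∑ e ∈ H, ((T ∩ e).card : ℝ) * w e := by
  simp only [Finset.sum_filter]
  rw [Finset.sum_comm]
  refine Finset.sum_congr rfl fun e _ => ?_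
  rw [← Finset.sum_filter, Finset.sum_const, nsmul_eq_mul, Finset.filter_mem_eq_inter]

theorem sum_codeg_eq_sum_card_inter (H : Finset (Finset α)) (w : Finset α → ℝ) (T : Finset α) :
    ∑ x ∈ T.offDiag, ∑ e ∈ H with x.1 ∈ e ∧ x.2 ∈ e, w e =
      ∑ e ∈ H, ((T ∩ e).offDiag.card : ℝ) * w e := by
  simp only [Finset.sum_filter]
  rw [Finset.sum_comm]
  refine Finset.sum_congr rfl fun e _ => ?_
  rw [← Finset.sum_filter, Finset.sum_const, nsmul_eq_mul]
  congr 3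
  ext x
  simp only [Finset.mem_filter, Finset.mem_offDiag, Finset.mem_inter]
  tauto

theorem sum_meeting_le {H : Finset (Finset α)} {w : Finset α → ℝ} (hw : ∀ e ∈ H, 0 ≤ w e)
    (T : Finset α) : ∑ e ∈ meeting H T, w e ≤ ∑ u ∈ T, ∑ e ∈ H with u ∈ e, w e := by
  rw [sum_deg_eq_sum_card_inter, meeting, Finset.sum_filter]
  refine Finset.sum_le_sum fun e he => ?_
  split_ifs with h
  · exact mul_nonneg (Nat.cast_nonneg _) (hw e he)
  · refine le_mul_of_one_le_left (hw e he) ?_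
    rw [disjoint_comm, Finset.not_disjoint_iff_nonempty_inter] at h
    exact_mod_cast h.card_pos

theorem le_sum_meeting {H : Finset (Finset α)} {w : Finset α → ℝ} (hw : ∀ e ∈ H, 0 ≤ w e)
    (T : Finset α) : ∑ u ∈ T, ∑ e ∈ H with u ∈ e, w e -
      ∑ x ∈ T.offDiag, ∑ e ∈ H with x.1 ∈ e ∧ x.2 ∈ e, w e ≤ ∑ e ∈ meeting H T, w e := by
  rw [sum_deg_eq_sum_card_inter, sum_codeg_eq_sum_card_inter, ← Finset.sum_sub_distrib, meeting,
    Finset.sum_filter]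
  refine Finset.sum_le_sum fun e he => ?_
  have hle : (T ∩ e).card ≤ (T ∩ e).card * (T ∩ e).card := Nat.le_mul_self _
  rw [← sub_mul, Finset.offDiag_card, Nat.cast_sub hle, Nat.cast_mul]
  split_ifs with h
  · simp [Finset.disjoint_iff_inter_eq_empty.1 h.symm]
  · have hbonferroni : ((T ∩ e).card : ℝ) - ((T ∩ e).card * (T ∩ e).card - (T ∩ e).card) ≤ 1 := by
      nlinarith [sq_nonneg (((T ∩ e).card : ℝ) - 1)]
    exact mul_le_of_le_one_left (hw e he) hbonferroni

variable {V : Finset α} {H : Finset (Finset α)} {w : Finset α → ℝ} {δ κ θ : ℝ}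

theorem NearRegular.weight_le (h : NearRegular V H w δ κ) {e : Finset α} (he : e ∈ H) :
    w e ≤ κ := by
  obtain ⟨u, hu, v, hv, huv⟩ := Finset.one_lt_card.1 (by rw [h.card e he]; norm_num : 1 < e.card)
  refine le_trans ?_ (h.codeg u v huv)
  exact Finset.single_le_sum (f := w) (fun f hf => h.nonneg f (Finset.mem_filter.1 hf).1)
    (Finset.mem_filter.2 ⟨he, hu, hv⟩)

theorem NearRegular.deg_le (h : NearRegular V H w δ κ) {v : α} (hv : v ∈ V) :
    ∑ e ∈ H with v ∈ e, w e ≤ 1 + δ := by linarith [(abs_le.1 (h.deg v hv)).2]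

theorem NearRegular.le_deg (h : NearRegular V H w δ κ) {v : α} (hv : v ∈ V) :
    1 - δ ≤ ∑ e ∈ H with v ∈ e, w e := by linarith [(abs_le.1 (h.deg v hv)).1]

theorem NearRegular.sum_meeting_le (h : NearRegular V H w δ κ) {T : Finset α} (hT : T ⊆ V) :
    ∑ e ∈ meeting H T, w e ≤ T.card * (1 + δ) := by
  refine (_root_.sum_meeting_le h.nonneg T).trans ?_
  rw [← nsmul_eq_mul]
  exact Finset.sum_le_card_nsmul _ _ _ fun u hu => h.deg_le (hT hu)

theorem NearRegular.le_sum_meeting (h : NearRegular V H w δ κ) {T : Finset α} (hT : T ⊆ V)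
    (hκ : 0 ≤ κ) :
    T.card * (1 - δ) - T.card * T.card * κ ≤ ∑ e ∈ meeting H T, w e := by
  have hdeg : (T.card : ℝ) * (1 - δ) ≤ ∑ u ∈ T, ∑ e ∈ H with u ∈ e, w e := by
    rw [← nsmul_eq_mul]
    exact Finset.card_nsmul_le_sum _ _ _ fun u hu => h.le_deg (hT hu)
  have hcodeg : ∑ x ∈ T.offDiag, ∑ e ∈ H with x.1 ∈ e ∧ x.2 ∈ e, w e ≤ T.card * T.card * κ := by
    refine (Finset.sum_le_card_nsmul _ _ κ fun x hx =>
      h.codeg _ _ (Finset.mem_offDiag.1 hx).2.2).trans ?_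
    rw [nsmul_eq_mul, Finset.offDiag_card, ← Nat.cast_mul]
    gcongr
    exact Nat.sub_le _ _
  linarith [_root_.le_sum_meeting h.nonneg T]

theorem NearRegular.total_weight_le (h : NearRegular V H w δ κ) :
    4 * ∑ e ∈ H, w e ≤ V.card * (1 + δ) :=
  calc 4 * ∑ e ∈ H, w e = ∑ v ∈ V, ∑ e ∈ H with v ∈ e, w e := by
        rw [sum_deg_eq_sum_card_inter, Finset.mul_sum]
        refine Finset.sum_congr rfl fun e he => ?_
        rw [Finset.inter_eq_right.2 (h.sub e he), h.card e he, Nat.cast_ofNat]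
    _ ≤ V.card * (1 + δ) := by
        rw [← nsmul_eq_mul]
        exact Finset.sum_le_card_nsmul _ _ _ fun v hv => h.deg_le hv

theorem NearRegular.mul_weight_mem_unitInterval (h : NearRegular V H w δ κ) (hθ : 0 ≤ θ)
    (hκθ : κ * θ ≤ 1) : ∀ e ∈ H, 0 ≤ θ * w e ∧ θ * w e ≤ 1 := fun e he =>
  ⟨mul_nonneg hθ (h.nonneg e he), by nlinarith [mul_le_mul_of_nonneg_left (h.weight_le he) hθ]⟩

/-- The weight of the edges at `v` such that no edge of `A` meets their other vertices: the degree
of `v` after the random selection `A` of edges, when `v` itself is left uncovered. -/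
noncomputable def survivingDeg (H : Finset (Finset α)) (w : Finset α → ℝ) (v : α)
    (A : Finset (Finset α)) : ℝ :=
  ∑ e ∈ H with v ∈ e, w e * if Disjoint (meeting H (e.erase v)) A then 1 else 0

theorem bernoulliExp_survivingDeg (H : Finset (Finset α)) (q w : Finset α → ℝ) (v : α) :
    bernoulliExp H q (survivingDeg H w v) =
      ∑ e ∈ H with v ∈ e, w e * ∏ a ∈ meeting H (e.erase v), (1 - q a) := by
  unfold survivingDeg
  rw [bernoulliExp_sum]
  refine Finset.sum_congr rfl fun e _ => ?_
  rw [bernoulliExp_const_mul, bernoulliExp_ite,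
    bernoulliProb_disjoint (B := meeting H (e.erase v)) (Finset.filter_subset _ _)]

theorem NearRegular.sum_meeting_erase_le (h : NearRegular V H w δ κ) {e : Finset α} {v : α}
    (he : e ∈ H) (hv : v ∈ e) : ∑ a ∈ meeting H (e.erase v), w a ≤ 3 * (1 + δ) := by
  simpa [Finset.card_erase_of_mem hv, h.card e he] using
    h.sum_meeting_le ((Finset.erase_subset v e).trans (h.sub e he))

theorem NearRegular.le_sum_meeting_erase (h : NearRegular V H w δ κ) (hκ : 0 ≤ κ) {e : Finset α}
    {v : α} (he : e ∈ H) (hv : v ∈ e) :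
    3 * (1 - δ) - 9 * κ ≤ ∑ a ∈ meeting H (e.erase v), w a := by
  have hle := h.le_sum_meeting ((Finset.erase_subset v e).trans (h.sub e he)) hκ
  rw [Finset.card_erase_of_mem hv, h.card e he] at hle
  norm_num at hle
  linarith

theorem NearRegular.abs_prod_meeting_erase_sub_le (h : NearRegular V H w δ κ) (hθ : 0 < θ)
    (hθ' : θ ≤ 1 / 100) (hκ : 0 ≤ κ) (hκθ : κ ≤ θ) (hδ' : δ ≤ 1 / 2) {e : Finset α} {v : α}
    (he : e ∈ H) (hv : v ∈ e) :
    |∏ a ∈ meeting H (e.erase v), (1 - θ * w a) - (1 - 3 * θ)| ≤ 3 * θ * δ + 30 * θ ^ 2 := by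
  have hsub : meeting H (e.erase v) ⊆ H := Finset.filter_subset _ _
  obtain ⟨hlower, hupper⟩ := prod_one_sub_bounds (meeting H (e.erase v)) (fun a => θ * w a)
    fun a ha => h.mul_weight_mem_unitInterval hθ.le (by nlinarith) a (hsub ha)
  have hT := h.sum_meeting_erase_le he hv
  have hT' := h.le_sum_meeting_erase hκ he hv
  have hT0 : 0 ≤ ∑ a ∈ meeting H (e.erase v), w a :=
    Finset.sum_nonneg fun a ha => h.nonneg a (hsub ha)
  rw [← Finset.mul_sum] at hlower hupper
  set T := ∑ a ∈ meeting H (e.erase v), w a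
  have hθT : θ * T ≤ θ * (3 * (1 + δ)) := mul_le_mul_of_nonneg_left hT hθ.le
  have hθT' : θ * (3 * (1 - δ) - 9 * κ) ≤ θ * T := mul_le_mul_of_nonneg_left hT' hθ.le
  have hθκ : θ * κ ≤ θ * θ := mul_le_mul_of_nonneg_left hκθ hθ.le
  have hsq : θ ^ 2 * T ^ 2 ≤ θ ^ 2 * (9 / 2) ^ 2 := by
    gcongr
    linarith
  rw [abs_le]
  constructor <;> nlinarith

theorem NearRegular.abs_bernoulliExp_survivingDeg_sub_le (h : NearRegular V H w δ κ) (hθ : 0 < θ)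
    (hθ' : θ ≤ 1 / 100) (hκ : 0 ≤ κ) (hκθ : κ ≤ θ) (hδ : 0 ≤ δ) (hδ' : δ ≤ 1 / 2) {v : α}
    (hv : v ∈ V) :
    |bernoulliExp H (fun e => θ * w e) (survivingDeg H w v) - (1 - 3 * θ)| ≤
      (1 - 3 * θ) * δ + (3 / 2) * (3 * θ * δ + 30 * θ ^ 2) := by
  have hsplit : bernoulliExp H (fun e => θ * w e) (survivingDeg H w v) - (1 - 3 * θ) =
      (1 - 3 * θ) * (∑ e ∈ H with v ∈ e, w e - 1) +
      ∑ e ∈ H with v ∈ e, w e * (∏ a ∈ meeting H (e.erase v), (1 - θ * w a) - (1 - 3 * θ)) := by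
    simp only [bernoulliExp_survivingDeg, mul_sub, Finset.sum_sub_distrib, ← Finset.sum_mul]
    ring
  have hθ3 : 0 ≤ 1 - 3 * θ := by linarith
  have hfirst : |(1 - 3 * θ) * (∑ e ∈ H with v ∈ e, w e - 1)| ≤ (1 - 3 * θ) * δ := by
    rw [abs_mul, abs_of_nonneg hθ3]
    exact mul_le_mul_of_nonneg_left (h.deg v hv) hθ3
  have hsecond : |∑ e ∈ H with v ∈ e,
      w e * (∏ a ∈ meeting H (e.erase v), (1 - θ * w a) - (1 - 3 * θ))| ≤
        (3 / 2) * (3 * θ * δ + 30 * θ ^ 2) :=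
    calc _ ≤ ∑ e ∈ H with v ∈ e, w e * (3 * θ * δ + 30 * θ ^ 2) := by
          refine (Finset.abs_sum_le_sum_abs _ _).trans (Finset.sum_le_sum fun e he => ?_)
          obtain ⟨heH, hve⟩ := Finset.mem_filter.1 he
          rw [abs_mul, abs_of_nonneg (h.nonneg e heH)]
          exact mul_le_mul_of_nonneg_left
            (h.abs_prod_meeting_erase_sub_le hθ hθ' hκ hκθ hδ' heH hve) (h.nonneg e heH)
      _ ≤ _ := by
          rw [← Finset.sum_mul]
          gcongr
          linarith [h.deg_le hv]
  rw [hsplit]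
  exact (abs_add_le _ _).trans (add_le_add hfirst hsecond)

/-- The most by which adding the edge `a` to the random selection can change `survivingDeg H w v`:
the weight of the edges at `v` that meet `a` outside `v`. -/
noncomputable def influence (H : Finset (Finset α)) (w : Finset α → ℝ) (v : α) (a : Finset α) : ℝ :=
  ∑ e ∈ H with v ∈ e ∧ a ∈ meeting H (e.erase v), w e

theorem NearRegular.influence_nonneg (h : NearRegular V H w δ κ) (v : α) (a : Finset α) :
    0 ≤ influence H w v a :=
  Finset.sum_nonneg fun e he => h.nonneg e (Finset.mem_filter.1 he).1

theorem NearRegular.influence_le (h : NearRegular V H w δ κ) (hκ : 0 ≤ κ) (v : α)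
    {a : Finset α} (ha : a ∈ H) : influence H w v a ≤ 4 * κ := by
  have hcard : ((a.erase v).card : ℝ) ≤ 4 := by
    have := Finset.card_erase_le (s := a) (a := v)
    rw [h.card a ha] at this
    exact_mod_cast this
  calc influence H w v a
      ≤ ∑ e ∈ H, ∑ u ∈ a.erase v, if u ∈ e ∧ v ∈ e then w e else 0 := by
        rw [influence, Finset.sum_filter]
        refine Finset.sum_le_sum fun e he => ?_
        have hterm : ∀ u ∈ a.erase v, 0 ≤ if u ∈ e ∧ v ∈ e then w e else 0 := fun u _ => by
          have := h.nonneg e he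
          positivity
        split_ifs with hcond
        · obtain ⟨u, hua, hue⟩ := Finset.not_disjoint_iff.1 (Finset.mem_filter.1 hcond.2).2
          obtain ⟨huv, hue⟩ := Finset.mem_erase.1 hue
          simpa only [hue, hcond.1, and_self, if_true] using
            Finset.single_le_sum hterm (Finset.mem_erase.2 ⟨huv, hua⟩)
        · exact Finset.sum_nonneg hterm
    _ = ∑ u ∈ a.erase v, ∑ e ∈ H with u ∈ e ∧ v ∈ e, w e := by
        rw [Finset.sum_comm]
        simp only [Finset.sum_filter]
    _ ≤ (a.erase v).card * κ := by
        rw [← nsmul_eq_mul]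
        exact Finset.sum_le_card_nsmul _ _ κ fun u hu => h.codeg u v (Finset.mem_erase.1 hu).1
    _ ≤ 4 * κ := by gcongr

theorem sum_weight_mul_influence (H : Finset (Finset α)) (w : Finset α → ℝ) (v : α) :
    ∑ a ∈ H, w a * influence H w v a =
      ∑ e ∈ H with v ∈ e, w e * ∑ a ∈ meeting H (e.erase v), w a := by
  simp only [influence, Finset.mul_sum, Finset.sum_filter, meeting, Finset.mem_filter]
  rw [Finset.sum_comm]
  refine Finset.sum_congr rfl fun e _ => ?_
  by_cases hve : v ∈ e
  · simp only [hve, true_and, if_true]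
    refine Finset.sum_congr rfl fun a ha => ?_
    simp only [ha, true_and, mul_ite, ite_mul, zero_mul, mul_zero, mul_comm (w a)]
  · simp [hve]

theorem NearRegular.sum_weight_mul_influence_sq_le (h : NearRegular V H w δ κ) (hκ : 0 ≤ κ)
    (hδ' : δ ≤ 1 / 2) {v : α} (hv : v ∈ V) :
    ∑ a ∈ H, w a * influence H w v a ^ 2 ≤ 27 * κ := by
  have hlinear : ∑ a ∈ H, w a * influence H w v a ≤ (3 / 2) * (9 / 2) :=
    calc _ ≤ ∑ e ∈ H with v ∈ e, w e * (9 / 2) := by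
          rw [sum_weight_mul_influence]
          refine Finset.sum_le_sum fun e he => ?_
          obtain ⟨heH, hve⟩ := Finset.mem_filter.1 he
          exact mul_le_mul_of_nonneg_left (by linarith [h.sum_meeting_erase_le heH hve])
            (h.nonneg e heH)
      _ ≤ _ := by
          rw [← Finset.sum_mul]
          gcongr
          linarith [h.deg_le hv]
  calc _ ≤ ∑ a ∈ H, 4 * κ * (w a * influence H w v a) := Finset.sum_le_sum fun a ha => by
        nlinarith [mul_le_mul_of_nonneg_left (h.influence_le hκ v ha)
          (mul_nonneg (h.nonneg a ha) (h.influence_nonneg v a))]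
    _ ≤ 27 * κ := by
        rw [← Finset.mul_sum]
        nlinarith

theorem NearRegular.abs_survivingDeg_insert_sub_le (h : NearRegular V H w δ κ) (v : α)
    (a : Finset α) (A : Finset (Finset α)) :
    |survivingDeg H w v (insert a A) - survivingDeg H w v A| ≤ influence H w v a := by
  have hinfluence : influence H w v a =
      ∑ e ∈ H with v ∈ e, if a ∈ meeting H (e.erase v) then w e else 0 := by
    simp only [influence, Finset.sum_filter, ite_and]
  rw [hinfluence, survivingDeg, survivingDeg, ← Finset.sum_sub_distrib]
  refine (Finset.abs_sum_le_sum_abs _ _).trans (Finset.sum_le_sum fun e he => ?_)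
  have hw := h.nonneg e (Finset.mem_filter.1 he).1
  simp only [Finset.disjoint_insert_right]
  by_cases hae : a ∈ meeting H (e.erase v)
  · by_cases hd : Disjoint (meeting H (e.erase v)) A
    · simp [hae, hd, abs_of_nonneg hw]
    · simp [hd, hae, hw]
  · simp [hae]

theorem NearRegular.survivingDeg_tail (h : NearRegular V H w δ κ) (hθ : 0 < θ)
    (hθ' : θ ≤ 1 / 100) (hκ : 0 < κ) (hκθ : κ ≤ θ) (hδ' : δ ≤ 1 / 2) {v : α}
    (hv : v ∈ V) :
    bernoulliProb H (fun e => θ * w e) (fun A => θ ^ 2 ≤ |survivingDeg H w v A -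
      bernoulliExp H (fun e => θ * w e) (survivingDeg H w v)|) ≤
      2 * Real.exp (-(θ ^ 3 / (108 * κ))) := by
  have hvar : ∑ a ∈ H, θ * w a * influence H w v a ^ 2 ≤ 27 * κ * θ := by
    simp only [mul_assoc θ, ← Finset.mul_sum]
    nlinarith [h.sum_weight_mul_influence_sq_le hκ.le hδ' hv]
  have hstep : ∀ a ∈ H, θ ^ 2 * influence H w v a ≤ 2 * (27 * κ * θ) := fun a ha => by
    nlinarith [mul_le_mul_of_nonneg_left (h.influence_le hκ.le v ha) (sq_nonneg θ),
      mul_pos hκ hθ, mul_pos (mul_pos hκ hθ) hθ]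
  refine (bernoulliProb_tail_le (h.mul_weight_mem_unitInterval hθ.le (by nlinarith))
    (by positivity : 0 < 27 * κ * θ) (sq_nonneg θ) hstep
    (fun a _ A _ _ => h.abs_survivingDeg_insert_sub_le v a A) hvar).trans_eq ?_
  congr 3
  field_simp
  ring

end Nibble

section Round

variable {α : Type*} [DecidableEq α]
variable {V : Finset α} {H : Finset (Finset α)} {w : Finset α → ℝ} {δ κ θ : ℝ}

/-- The edges of `A` disjoint from all other edges of `A`; one nibble adds these to the matching. -/
def isolatedEdges (A : Finset (Finset α)) : Finset (Finset α) :=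
  A.filter fun e => ∀ f ∈ A, f ≠ e → Disjoint e f

/-- The vertices that a nibble loses: those covered by `A` but not by its isolated edges. -/
def wasted (A : Finset (Finset α)) : Finset α :=
  A.biUnion id \ (isolatedEdges A).biUnion id

theorem wasted_subset (A : Finset (Finset α)) : wasted A ⊆ (A \ isolatedEdges A).biUnion id := by
  intro x hx
  obtain ⟨hxA, hxiso⟩ := Finset.mem_sdiff.1 hx
  obtain ⟨e, he, hxe⟩ := Finset.mem_biUnion.1 hxA
  exact Finset.mem_biUnion.2 ⟨e, Finset.mem_sdiff.2
    ⟨he, fun hiso => hxiso (Finset.mem_biUnion.2 ⟨e, hiso, hxe⟩)⟩, hxe⟩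

theorem exists_mem_meeting_of_notMem_isolatedEdges {A : Finset (Finset α)} (hA : A ⊆ H)
    {e : Finset α} (he : e ∈ A \ isolatedEdges A) :
    ∃ f ∈ (meeting H e).erase e, {e, f} ⊆ A := by
  obtain ⟨heA, hiso⟩ := Finset.mem_sdiff.1 he
  obtain ⟨f, hf, hfe, hef⟩ : ∃ f ∈ A, f ≠ e ∧ ¬ Disjoint e f := by
    by_contra! hcon
    exact hiso (Finset.mem_filter.2 ⟨heA, hcon⟩)
  exact ⟨f, Finset.mem_erase.2 ⟨hfe, Finset.mem_filter.2 ⟨hA hf, fun hd => hef hd.symm⟩⟩,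
    Finset.insert_subset heA (Finset.singleton_subset_iff.2 hf)⟩

theorem card_wasted_le {A : Finset (Finset α)} {k : ℕ} (hk : ∀ e ∈ H, e.card ≤ k) (hA : A ⊆ H) :
    ((wasted A).card : ℝ) ≤
      ∑ e ∈ H, ∑ f ∈ (meeting H e).erase e, k * if {e, f} ⊆ A then (1 : ℝ) else 0 := by
  have hterm : ∀ e, ∀ f ∈ (meeting H e).erase e, 0 ≤ k * if {e, f} ⊆ A then (1 : ℝ) else 0 :=
    fun _ _ _ => by positivity
  calc ((wasted A).card : ℝ) ≤ ∑ _e ∈ A \ isolatedEdges A, (k : ℝ) := by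
        exact_mod_cast ((Finset.card_le_card (wasted_subset A)).trans Finset.card_biUnion_le).trans
          (Finset.sum_le_sum fun e he => hk e (hA (Finset.sdiff_subset he)))
    _ ≤ ∑ e ∈ A \ isolatedEdges A,
          ∑ f ∈ (meeting H e).erase e, k * if {e, f} ⊆ A then (1 : ℝ) else 0 := by
        refine Finset.sum_le_sum fun e he => ?_
        obtain ⟨f, hf, hef⟩ := exists_mem_meeting_of_notMem_isolatedEdges hA he
        simpa only [if_pos hef, mul_one] using Finset.single_le_sum (hterm e) hf
    _ ≤ _ := Finset.sum_le_sum_of_subset_of_nonneg (Finset.sdiff_subset.trans hA)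
        fun e _ _ => Finset.sum_nonneg (hterm e)

theorem NearRegular.sum_meeting_edge_le (h : NearRegular V H w δ κ) (hδ' : δ ≤ 1 / 2)
    {e : Finset α} (he : e ∈ H) : ∑ f ∈ (meeting H e).erase e, w f ≤ 6 :=
  calc _ ≤ ∑ f ∈ meeting H e, w f :=
        Finset.sum_le_sum_of_subset_of_nonneg (Finset.erase_subset _ _)
          fun f hf _ => h.nonneg f (Finset.mem_filter.1 hf).1
    _ ≤ 4 * (1 + δ) := by simpa [h.card e he] using h.sum_meeting_le (h.sub e he)
    _ ≤ 6 := by linarith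

theorem NearRegular.bernoulliExp_wasted_le (h : NearRegular V H w δ κ)
    (hq : ∀ e ∈ H, 0 ≤ θ * w e ∧ θ * w e ≤ 1) (hδ' : δ ≤ 1 / 2) :
    bernoulliExp H (fun e => θ * w e) (fun A => ((wasted A).card : ℝ)) ≤ 9 * θ ^ 2 * V.card := by
  have hpair : ∀ e ∈ H, ∀ f ∈ (meeting H e).erase e,
      bernoulliExp H (fun e => θ * w e) (fun A => (4 : ℕ) * if {e, f} ⊆ A then 1 else 0) =
        4 * θ ^ 2 * w e * w f := fun e he f hf => by
    obtain ⟨hfe, hf⟩ := Finset.mem_erase.1 hf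
    have hef : {e, f} ⊆ H := Finset.insert_subset he
      (Finset.singleton_subset_iff.2 (Finset.mem_filter.1 hf).1)
    rw [bernoulliExp_const_mul, bernoulliExp_ite, bernoulliProb_subset hef,
      Finset.prod_pair hfe.symm]
    push_cast
    ring
  calc _ ≤ ∑ e ∈ H, ∑ f ∈ (meeting H e).erase e, 4 * θ ^ 2 * w e * w f := by
        refine (bernoulliExp_mono hq fun _ => card_wasted_le fun e he =>
          (h.card e he).le).trans_eq ?_
        simp only [bernoulliExp_sum]
        exact Finset.sum_congr rfl fun e he => Finset.sum_congr rfl (hpair e he)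
    _ ≤ ∑ e ∈ H, 4 * θ ^ 2 * w e * 6 := by
        refine Finset.sum_le_sum fun e he => ?_
        have := h.nonneg e he
        rw [← Finset.mul_sum]
        gcongr
        exact h.sum_meeting_edge_le hδ' he
    _ = 6 * θ ^ 2 * (4 * ∑ e ∈ H, w e) := by
        rw [Finset.mul_sum, Finset.mul_sum]
        exact Finset.sum_congr rfl fun e _ => by ring
    _ ≤ 6 * θ ^ 2 * (V.card * (3 / 2)) :=
        mul_le_mul_of_nonneg_left (h.total_weight_le.trans (by gcongr; linarith)) (by positivity)
    _ = 9 * θ ^ 2 * V.card := by ring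

theorem card_sdiff_biUnion_eq_sum {A : Finset (Finset α)} (hA : A ⊆ H) :
    ((V \ A.biUnion id).card : ℝ) = ∑ v ∈ V, if Disjoint {e ∈ H | v ∈ e} A then 1 else 0 := by
  rw [Finset.sum_boole]
  congr 2
  ext v
  simp only [Finset.mem_sdiff, Finset.mem_biUnion, id, Finset.mem_filter, Finset.disjoint_left]
  refine and_congr_right fun _ => ⟨fun hv e he heA => hv ⟨e, heA, he.2⟩, ?_⟩
  rintro hv ⟨e, he, hve⟩
  exact hv ⟨hA he, hve⟩ he

theorem NearRegular.bernoulliProb_uncovered_le (h : NearRegular V H w δ κ) (hθ : 0 ≤ θ)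
    (hθ' : θ ≤ 1) (hq : ∀ e ∈ H, 0 ≤ θ * w e ∧ θ * w e ≤ 1) (hδ' : δ ≤ 1 / 2) {v : α}
    (hv : v ∈ V) :
    bernoulliProb H (fun e => θ * w e) (Disjoint {e ∈ H | v ∈ e}) ≤ 1 - θ / 4 := by
  rw [bernoulliProb_disjoint (Finset.filter_subset _ _)]
  calc _ ≤ ∏ e ∈ H with v ∈ e, Real.exp (-(θ * w e)) :=
        Finset.prod_le_prod (fun e he => by linarith [(hq e (Finset.mem_filter.1 he).1).2])
          fun e _ => by linarith [Real.add_one_le_exp (-(θ * w e))]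
    _ = Real.exp (-(θ * ∑ e ∈ H with v ∈ e, w e)) := by
        rw [← Real.exp_sum, Finset.sum_neg_distrib, Finset.mul_sum]
    _ ≤ Real.exp (-(θ / 2)) := by
        rw [Real.exp_le_exp]
        nlinarith [h.le_deg hv]
    _ ≤ 1 + -(θ / 2) + (-(θ / 2)) ^ 2 := by
        refine exp_le_one_add_add_sq ?_
        rw [abs_neg, abs_of_nonneg (by positivity)]
        linarith
    _ ≤ 1 - θ / 4 := by nlinarith

theorem NearRegular.bernoulliExp_uncovered_le (h : NearRegular V H w δ κ) (hθ : 0 ≤ θ)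
    (hθ' : θ ≤ 1) (hq : ∀ e ∈ H, 0 ≤ θ * w e ∧ θ * w e ≤ 1) (hδ' : δ ≤ 1 / 2) :
    bernoulliExp H (fun e => θ * w e) (fun A => ((V \ A.biUnion id).card : ℝ)) ≤
      (1 - θ / 4) * V.card := by
  rw [bernoulliExp_congr fun _ => card_sdiff_biUnion_eq_sum, bernoulliExp_sum, mul_comm,
    ← nsmul_eq_mul]
  refine Finset.sum_le_card_nsmul _ _ _ fun v hv => ?_
  rw [bernoulliExp_ite]
  exact h.bernoulliProb_uncovered_le hθ hθ' hq hδ' hv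

theorem subset_sdiff_biUnion_iff {A : Finset (Finset α)} (hA : A ⊆ H) {e : Finset α} (he : e ⊆ V)
    {v : α} (hv : v ∉ A.biUnion id) :
    e ⊆ V \ A.biUnion id ↔ Disjoint (meeting H (e.erase v)) A := by
  rw [Finset.disjoint_left]
  constructor
  · intro hsub a ha haA
    obtain ⟨u, hua, hue⟩ := Finset.not_disjoint_iff.1 (Finset.mem_filter.1 ha).2
    exact (Finset.mem_sdiff.1 (hsub (Finset.mem_of_mem_erase hue))).2
      (Finset.mem_biUnion.2 ⟨a, haA, hua⟩)
  · intro hdisj x hx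
    refine Finset.mem_sdiff.2 ⟨he hx, fun hxA => ?_⟩
    obtain ⟨a, haA, hxa⟩ := Finset.mem_biUnion.1 hxA
    have hxv : x ≠ v := fun hxv => hv (hxv ▸ hxA)
    exact hdisj (Finset.mem_filter.2 ⟨hA haA, Finset.not_disjoint_iff.2
      ⟨x, hxa, Finset.mem_erase.2 ⟨hxv, hx⟩⟩⟩) haA

theorem deg_restrict_eq_survivingDeg {A : Finset (Finset α)} (hA : A ⊆ H) (hH : ∀ e ∈ H, e ⊆ V)
    {v : α} (hv : v ∉ A.biUnion id) :
    ∑ e ∈ H.filter (· ⊆ V \ A.biUnion id) with v ∈ e, w e = survivingDeg H w v A := by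
  rw [survivingDeg, Finset.filter_filter, Finset.sum_filter, Finset.sum_filter]
  refine Finset.sum_congr rfl fun e he => ?_
  simp only [subset_sdiff_biUnion_iff hA (hH e he) hv, mul_ite, mul_one, mul_zero, ← ite_and,
    and_comm]

theorem NearRegular.abs_survivingDeg_sub_le (h : NearRegular V H w δ κ) (hθ : 0 < θ)
    (hθ' : θ ≤ 1 / 100) (hκ : 0 ≤ κ) (hκθ : κ ≤ θ) (hδ : 0 ≤ δ) (hδ' : δ ≤ 1 / 2)
    {A : Finset (Finset α)} {v : α} (hv : v ∈ V)
    (hgood : |survivingDeg H w v A -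
      bernoulliExp H (fun e => θ * w e) (survivingDeg H w v)| < θ ^ 2) :
    |survivingDeg H w v A - (1 - 3 * θ)| ≤ (δ * (1 + 9 * θ) + 50 * θ ^ 2) * (1 - 3 * θ) := by
  have hmean := h.abs_bernoulliExp_survivingDeg_sub_le hθ hθ' hκ hκθ hδ hδ' hv
  have htri := abs_sub_le (survivingDeg H w v A)
    (bernoulliExp H (fun e => θ * w e) (survivingDeg H w v)) (1 - 3 * θ)
  have hδθ : 0 ≤ δ * θ * (1 / 100 - θ) := mul_nonneg (by positivity) (by linarith)
  have hθθ : 0 ≤ θ ^ 2 * (1 / 100 - θ) := mul_nonneg (by positivity) (by linarith)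
  nlinarith [mul_nonneg hδ hθ.le]

theorem NearRegular.restrict (h : NearRegular V H w δ κ) (hθ : 0 < θ)
    (hθ' : θ ≤ 1 / 100) (hκ : 0 ≤ κ) (hκθ : κ ≤ θ) (hδ : 0 ≤ δ) (hδ' : δ ≤ 1 / 2)
    {A : Finset (Finset α)} (hA : A ⊆ H)
    (hgood : ∀ v ∈ V, |survivingDeg H w v A -
      bernoulliExp H (fun e => θ * w e) (survivingDeg H w v)| < θ ^ 2) :
    NearRegular (V \ A.biUnion id) (H.filter (· ⊆ V \ A.biUnion id))
      (fun e => w e / (1 - 3 * θ)) (δ * (1 + 9 * θ) + 50 * θ ^ 2) (κ * (1 + 6 * θ)) := by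
  have hpos : 0 < 1 - 3 * θ := by linarith
  refine ⟨fun e he => (Finset.mem_filter.1 he).2, fun e he => h.card e (Finset.mem_filter.1 he).1,
    fun e he => div_nonneg (h.nonneg e (Finset.mem_filter.1 he).1) hpos.le,
    fun v hv => ?_, fun u v huv => ?_⟩
  · obtain ⟨hvV, hvA⟩ := Finset.mem_sdiff.1 hv
    rw [← Finset.sum_div, deg_restrict_eq_survivingDeg hA h.sub hvA, div_sub_one hpos.ne', abs_div,
      abs_of_pos hpos, div_le_iff₀ hpos]
    exact h.abs_survivingDeg_sub_le hθ hθ' hκ hκθ hδ hδ' hvV (hgood v hvV)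
  · rw [← Finset.sum_div, div_le_iff₀ hpos]
    have hcodeg : ∑ e ∈ H.filter (· ⊆ V \ A.biUnion id) with u ∈ e ∧ v ∈ e, w e ≤ κ :=
      (Finset.sum_le_sum_of_subset_of_nonneg
        (Finset.filter_subset_filter _ (Finset.filter_subset _ _))
        fun e he _ => h.nonneg e (Finset.mem_filter.1 he).1).trans (h.codeg u v huv)
    nlinarith [mul_nonneg hκ (mul_nonneg hθ.le (by linarith : 0 ≤ 1 / 6 - θ))]

theorem NearRegular.exists_round (h : NearRegular V H w δ κ) (hθ : 0 < θ)
    (hθ' : θ ≤ 1 / 100) (hκ : 0 < κ) (hκθ : κ ≤ θ) (hδ : 0 ≤ δ) (hδ' : δ ≤ 1 / 2)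
    (hfail : V.card * (2 * Real.exp (-(θ ^ 3 / (108 * κ)))) ≤ θ ^ 2) {l : ℝ} (hl : 0 ≤ l)
    (hl' : l ≤ 2) :
    ∃ A ⊆ H, (wasted A).card + l * (V \ A.biUnion id).card ≤
        V.card * (12 * θ ^ 2 + l * (1 - θ / 4)) ∧
      NearRegular (V \ A.biUnion id) (H.filter (· ⊆ V \ A.biUnion id))
      (fun e => w e / (1 - 3 * θ)) (δ * (1 + 9 * θ) + 50 * θ ^ 2) (κ * (1 + 6 * θ)) := by
  have hrestrict {A : Finset (Finset α)} (hA : A ⊆ H) :=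
    h.restrict (A := A) hθ hθ' hκ.le hκθ hδ hδ' hA
  rcases V.eq_empty_or_nonempty with rfl | hV
  · exact ⟨∅, Finset.empty_subset _, by simp [wasted], hrestrict (Finset.empty_subset _) (by simp)⟩
  have hVpos : (0 : ℝ) < V.card := by exact_mod_cast hV.card_pos
  have hq := h.mul_weight_mem_unitInterval hθ.le (by nlinarith)
  have hbad : bernoulliProb H (fun e => θ * w e) (fun A => ¬ ∀ v ∈ V, |survivingDeg H w v A -
      bernoulliExp H (fun e => θ * w e) (survivingDeg H w v)| < θ ^ 2) ≤ θ ^ 2 := by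
    push Not
    refine (bernoulliProb_exists_le hq V _).trans (le_trans ?_ hfail)
    rw [← nsmul_eq_mul]
    exact Finset.sum_le_card_nsmul _ _ _ fun v hv => h.survivingDeg_tail hθ hθ' hκ hκθ hδ' hv
  have hcost : bernoulliExp H (fun e => θ * w e)
      (fun A => ((wasted A).card : ℝ) + l * ((V \ A.biUnion id).card : ℝ)) ≤
        V.card * (9 * θ ^ 2 + l * (1 - θ / 4)) := by
    rw [bernoulliExp_add, bernoulliExp_const_mul]
    linarith [h.bernoulliExp_wasted_le hq hδ', mul_le_mul_of_nonneg_left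
      (h.bernoulliExp_uncovered_le hθ.le (by linarith) hq hδ') hl]
  have hbad' := mul_le_mul_of_nonneg_left hbad (by positivity : 0 ≤ 3 * (V.card : ℝ))
  have hlt : V.card * (12 * θ ^ 2 + l * (1 - θ / 4)) < 3 * (V.card : ℝ) := by
    have : 12 * θ ^ 2 + l * (1 - θ / 4) < 3 := by nlinarith
    nlinarith
  obtain ⟨A, hA, hgood, hle⟩ := exists_le_bernoulliExp_add hq
    (fun A _ => add_nonneg (Nat.cast_nonneg (wasted A).card)
      (mul_nonneg hl (Nat.cast_nonneg (V \ A.biUnion id).card)))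
    (c := 3 * (V.card : ℝ)) (by linarith)
  exact ⟨A, hA, by linarith, hrestrict hA hgood⟩

theorem pairwiseDisjoint_isolatedEdges_union {A M : Finset (Finset α)}
    (hM : (M : Set (Finset α)).PairwiseDisjoint id) (hMA : ∀ f ∈ M, Disjoint f (A.biUnion id)) :
    ((isolatedEdges A ∪ M : Finset (Finset α)) : Set (Finset α)).PairwiseDisjoint id := by
  have hsub : isolatedEdges A ⊆ A := Finset.filter_subset _ _
  rw [Finset.coe_union, Set.pairwiseDisjoint_union]
  refine ⟨fun e he f hf hef => (Finset.mem_filter.1 he).2 f (hsub hf) hef.symm, hM,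
    fun e he f hf _ => ?_⟩
  exact ((hMA f hf).mono_right (Finset.subset_biUnion_of_mem id (hsub he))).symm

theorem card_sdiff_biUnion_isolatedEdges_union_le (A M : Finset (Finset α)) :
    (V \ (isolatedEdges A ∪ M).biUnion id).card ≤
      (wasted A).card + ((V \ A.biUnion id) \ M.biUnion id).card := by
  refine (Finset.card_le_card fun x hx => ?_).trans (Finset.card_union_le _ _)
  rw [Finset.union_biUnion] at hx
  simp only [wasted, Finset.mem_union, Finset.mem_sdiff, not_or] at hx ⊢
  tauto

theorem NearRegular.exists_matching {K : ℝ} (hθ : 0 < θ) (hθ' : θ ≤ 1 / 100) (hK : K ≤ θ) {n : ℕ}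
    (hfail : n * (2 * Real.exp (-(θ ^ 3 / (108 * K)))) ≤ θ ^ 2) (r : ℕ)
    (h : NearRegular V H w δ κ) (hn : V.card ≤ n) (hκ : 0 < κ) (hδ : 0 ≤ δ)
    (hκr : κ * (1 + 6 * θ) ^ r ≤ K) (hδr : (δ + 50 * θ ^ 2 * r) * (1 + 9 * θ) ^ r ≤ 1 / 2) :
    ∃ M ⊆ H, (M : Set (Finset α)).PairwiseDisjoint id ∧
      ((V \ M.biUnion id).card : ℝ) ≤ (48 * θ + (1 - θ / 4) ^ r) * V.card := by
  induction r generalizing V H w δ κ with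
  | zero =>
    refine ⟨∅, Finset.empty_subset _, by simp, ?_⟩
    simp only [Finset.biUnion_empty, Finset.sdiff_empty, pow_zero]
    nlinarith [mul_nonneg hθ.le (Nat.cast_nonneg (α := ℝ) V.card)]
  | succ r ih =>
    have hκK : κ ≤ K := hκr.trans' (le_mul_of_one_le_right hκ.le (one_le_pow₀ (by linarith)))
    have hδ' : δ ≤ 1 / 2 := by
      have hone : (1 : ℝ) ≤ (1 + 9 * θ) ^ (r + 1) := one_le_pow₀ (by linarith)
      have : 0 ≤ 50 * θ ^ 2 * ((r + 1 : ℕ) : ℝ) := by positivity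
      nlinarith
    have hfail' : V.card * (2 * Real.exp (-(θ ^ 3 / (108 * κ)))) ≤ θ ^ 2 :=
      hfail.trans' (by gcongr)
    have hdecay : 0 ≤ 1 - θ / 4 := by linarith
    obtain ⟨A, hA, hwaste, hnew⟩ := h.exists_round hθ hθ' hκ (hκK.trans hK) hδ hδ' hfail'
      (l := 48 * θ + (1 - θ / 4) ^ r) (by positivity)
      (by linarith [pow_le_one₀ (n := r) hdecay (by linarith : 1 - θ / 4 ≤ 1)])
    have hκr' : κ * (1 + 6 * θ) * (1 + 6 * θ) ^ r ≤ K := by rwa [mul_assoc, ← pow_succ']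
    have hδr' : (δ * (1 + 9 * θ) + 50 * θ ^ 2 + 50 * θ ^ 2 * r) * (1 + 9 * θ) ^ r ≤ 1 / 2 := by
      refine hδr.trans' ?_
      rw [pow_succ' (1 + 9 * θ) r, ← mul_assoc]
      gcongr
      have : 0 ≤ θ ^ 3 * (r + 1) := by positivity
      push_cast
      nlinarith
    obtain ⟨M, hM, hdisj, hleft⟩ := ih hnew ((Finset.card_le_card Finset.sdiff_subset).trans hn)
      (by positivity) (by positivity) hκr' hδr'
    have hMA : ∀ f ∈ M, Disjoint f (A.biUnion id) := fun f hf =>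
      Finset.disjoint_of_subset_left (Finset.mem_filter.1 (hM hf)).2 Finset.sdiff_disjoint
    refine ⟨isolatedEdges A ∪ M, Finset.union_subset ((Finset.filter_subset _ _).trans hA)
      (hM.trans (Finset.filter_subset _ _)), pairwiseDisjoint_isolatedEdges_union hdisj hMA, ?_⟩
    calc ((V \ (isolatedEdges A ∪ M).biUnion id).card : ℝ)
        ≤ (wasted A).card + ((V \ A.biUnion id) \ M.biUnion id).card := by
          exact_mod_cast card_sdiff_biUnion_isolatedEdges_union_le A M
      _ ≤ V.card * (12 * θ ^ 2 + (48 * θ + (1 - θ / 4) ^ r) * (1 - θ / 4)) := by linarith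
      _ = (48 * θ + (1 - θ / 4) ^ (r + 1)) * V.card := by ring

end Round

/-! ### Almost regular edge weights -/

section Fractional

-- The sum of all rows bounds `k * ∑ y`; the row of an entry of maximal modulus then bounds `y`.
theorem mul_abs_le_of_perturbed_system {α : Type*} {V : Finset α} {E : α → α → ℝ} {y : α → ℝ}
    {k d ρ : ℝ} (hk : 0 < k) (hd : 3 * d = k * V.card)
    (hE : ∀ v ∈ V, ∑ u ∈ V, |E v u| ≤ d / 20)
    (hrow : ∀ v ∈ V, |d * y v + k * ∑ u ∈ V, y u + ∑ u ∈ V, E v u * y u| ≤ ρ) :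
    ∀ v ∈ V, d * |y v| ≤ 2 * ρ := by
  intro v hv
  have hVpos : (0 : ℝ) < V.card := by exact_mod_cast Finset.card_pos.2 ⟨v, hv⟩
  have hdpos : 0 < d := by nlinarith [mul_pos hk hVpos]
  obtain ⟨v₀, hv₀, hmax⟩ := V.exists_max_image (fun v => |y v|) ⟨v, hv⟩
  set s := ∑ u ∈ V, y u
  set M := |y v₀|
  have hError : ∀ v ∈ V, |∑ u ∈ V, E v u * y u| ≤ d * M / 20 := fun v hv =>
    calc |∑ u ∈ V, E v u * y u|
        ≤ ∑ u ∈ V, |E v u * y u| := Finset.abs_sum_le_sum_abs _ _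
      _ ≤ ∑ u ∈ V, |E v u| * M := Finset.sum_le_sum fun u hu => by
          rw [abs_mul]
          exact mul_le_mul_of_nonneg_left (hmax u hu) (abs_nonneg _)
      _ = (∑ u ∈ V, |E v u|) * M := by rw [Finset.sum_mul]
      _ ≤ d / 20 * M := mul_le_mul_of_nonneg_right (hE v hv) (abs_nonneg _)
      _ = d * M / 20 := by ring
  have hmain : ∀ v ∈ V, |d * y v + k * s| ≤ ρ + d * M / 20 := by
    intro v hv
    have := abs_sub (d * y v + k * s + ∑ u ∈ V, E v u * y u) (∑ u ∈ V, E v u * y u)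
    rw [add_sub_cancel_right] at this
    linarith [hrow v hv, hError v hv]
  have hs : |k * s| ≤ 3 / 4 * (ρ + d * M / 20) := by
    have htotal : ∑ v ∈ V, (d * y v + k * s) = 4 / 3 * V.card * (k * s) := by
      rw [Finset.sum_add_distrib, ← Finset.mul_sum, Finset.sum_const, nsmul_eq_mul,
        show ∑ v ∈ V, y v = s from rfl]
      linear_combination s / 3 * hd
    have hle : |∑ v ∈ V, (d * y v + k * s)| ≤ V.card * (ρ + d * M / 20) := by
      rw [← nsmul_eq_mul]
      exact (Finset.abs_sum_le_sum_abs _ _).trans (Finset.sum_le_card_nsmul _ _ _ hmain)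
    rw [htotal, abs_mul, abs_of_pos (by positivity)] at hle
    exact le_of_mul_le_mul_left (by linarith) hVpos
  have hdM : d * M ≤ ρ + d * M / 20 + |k * s| := by
    have htri := abs_sub (d * y v₀ + k * s) (k * s)
    rw [add_sub_cancel_right, abs_mul, abs_of_pos hdpos] at htri
    linarith [hmain v₀ hv₀]
  have hvM : d * |y v| ≤ d * M := mul_le_mul_of_nonneg_left (hmax v hv) hdpos.le
  have hM : 0 ≤ d * M := mul_nonneg hdpos.le (abs_nonneg _)
  linarith

variable {α : Type*} [DecidableEq α]

/-- The codegree of `u` and `v`: the number of edges of `H` containing both. -/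
def pairDeg (H : Finset (Finset α)) (u v : α) : ℕ := (H.filter fun e => u ∈ e ∧ v ∈ e).card

variable {V : Finset α} {H : Finset (Finset α)} {k : ℝ}

theorem sum_edges_sum (hsub : ∀ e ∈ H, e ⊆ V) (y : α → ℝ) (v : α) :
    ∑ e ∈ H with v ∈ e, ∑ u ∈ e, y u = ∑ u ∈ V, pairDeg H v u * y u := by
  have hedge : ∀ e ∈ H.filter (v ∈ ·), ∑ u ∈ e, y u = ∑ u ∈ V, if u ∈ e then y u else 0 := by
    intro e he
    rw [← Finset.sum_filter, Finset.filter_mem_eq_inter,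
      Finset.inter_eq_right.2 (hsub e (Finset.mem_filter.1 he).1)]
  rw [Finset.sum_congr rfl hedge, Finset.sum_comm]
  refine Finset.sum_congr rfl fun u _ => ?_
  rw [← Finset.sum_filter, Finset.sum_const, nsmul_eq_mul, Finset.filter_filter, pairDeg]

theorem four_mul_pairDeg_self (hsub : ∀ e ∈ H, e ⊆ V) (hcard : ∀ e ∈ H, e.card = 4) (v : α) :
    4 * (pairDeg H v v : ℝ) = ∑ u ∈ V, (pairDeg H v u : ℝ) := by
  have h := sum_edges_sum hsub (fun _ => 1) v
  simp only [mul_one] at h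
  rw [← h, Finset.sum_congr rfl (g := fun _ => (4 : ℝ)) fun e he => by
    simp [hcard e (Finset.mem_filter.1 he).1]]
  simp [pairDeg, mul_comm]

theorem abs_pairDeg_self_sub_le (hsub : ∀ e ∈ H, e ⊆ V) (hcard : ∀ e ∈ H, e.card = 4)
    (hk : 0 < k) {v : α} (hv : v ∈ V)
    (hcodeg : ∑ u ∈ V.erase v, |(pairDeg H v u : ℝ) - k| ≤ k * V.card / 100) :
    |(pairDeg H v v : ℝ) - k * V.card / 3| ≤ k * V.card / 300 + k / 3 := by
  have hself := four_mul_pairDeg_self hsub hcard v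
  rw [← Finset.add_sum_erase V _ hv] at hself
  have hsum : ∑ u ∈ V.erase v, ((pairDeg H v u : ℝ) - k) =
      ∑ u ∈ V.erase v, (pairDeg H v u : ℝ) - k * (V.card - 1) := by
    rw [Finset.sum_sub_distrib, Finset.sum_const, nsmul_eq_mul, Finset.cast_card_erase_of_mem hv]
    ring
  have hdev := (Finset.abs_sum_le_sum_abs _ _).trans hcodeg
  rw [hsum] at hdev
  obtain ⟨hlow, hup⟩ := abs_le.1 hdev
  exact abs_le.2 ⟨by linarith, by linarith⟩

theorem sum_abs_pairDeg_error_le (hsub : ∀ e ∈ H, e ⊆ V) (hcard : ∀ e ∈ H, e.card = 4)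
    (hk : 0 < k) (hV : 400 ≤ V.card) {v : α} (hv : v ∈ V)
    (hcodeg : ∑ u ∈ V.erase v, |(pairDeg H v u : ℝ) - k| ≤ k * V.card / 100) :
    ∑ u ∈ V, |(pairDeg H v u : ℝ) - k - if u = v then k * V.card / 3 else 0| ≤
      k * V.card / 60 := by
  have hV' : (400 : ℝ) ≤ V.card := by exact_mod_cast hV
  have hkV : 400 * k ≤ k * V.card := by nlinarith
  have hdiag : |(pairDeg H v v : ℝ) - k - k * V.card / 3| ≤ k * V.card / 300 + k / 3 + k := by
    have hself := abs_pairDeg_self_sub_le hsub hcard hk hv hcodeg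
    rw [abs_le] at hself ⊢
    constructor <;> linarith
  have hoff : ∑ u ∈ V.erase v, |(pairDeg H v u : ℝ) - k - if u = v then k * V.card / 3 else 0| ≤
      k * V.card / 100 := by
    refine le_trans (le_of_eq (Finset.sum_congr rfl fun u hu => ?_)) hcodeg
    rw [if_neg (Finset.ne_of_mem_erase hu), sub_zero]
  rw [← Finset.add_sum_erase V _ hv, if_pos rfl]
  linarith

theorem abs_le_of_abs_sum_edges_le (hsub : ∀ e ∈ H, e ⊆ V) (hcard : ∀ e ∈ H, e.card = 4)
    (hk : 0 < k) (hV : 400 ≤ V.card)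
    (hcodeg : ∀ v ∈ V, ∑ u ∈ V.erase v, |(pairDeg H v u : ℝ) - k| ≤ k * V.card / 100)
    {y : α → ℝ} {ρ : ℝ} (hy : ∀ v ∈ V, |∑ e ∈ H with v ∈ e, ∑ u ∈ e, y u| ≤ ρ) :
    ∀ v ∈ V, k * V.card / 3 * |y v| ≤ 2 * ρ := by
  refine mul_abs_le_of_perturbed_system hk (by ring)
    (E := fun v u => (pairDeg H v u : ℝ) - k - if u = v then k * V.card / 3 else 0)
    (fun v hv => (sum_abs_pairDeg_error_le hsub hcard hk hV hv (hcodeg v hv)).trans_eq (by ring))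
    fun v hv => ?_
  have hrow : ∑ u ∈ V, ((pairDeg H v u : ℝ) - k - if u = v then k * V.card / 3 else 0) * y u =
      ∑ u ∈ V, (pairDeg H v u : ℝ) * y u - k * ∑ u ∈ V, y u - k * V.card / 3 * y v := by
    simp only [sub_mul, Finset.sum_sub_distrib, Finset.mul_sum, ite_mul, zero_mul]
    rw [Finset.sum_ite_eq' V v, if_pos hv]
  refine le_of_eq_of_le (congrArg abs ?_) (hy v hv)
  rw [hrow, sum_edges_sum hsub]
  ring

theorem exists_sum_edges_eq [Finite α] (hsub : ∀ e ∈ H, e ⊆ V) (hcard : ∀ e ∈ H, e.card = 4)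
    (hk : 0 < k) (hV : 400 ≤ V.card)
    (hcodeg : ∀ v ∈ V, ∑ u ∈ V.erase v, |(pairDeg H v u : ℝ) - k| ≤ k * V.card / 100)
    (b : α → ℝ) : ∃ y : α → ℝ, ∀ v ∈ V, ∑ e ∈ H with v ∈ e, ∑ u ∈ e, y u = b v := by
  have hdpos : 0 < k * V.card / 3 := by
    have : (0 : ℝ) < V.card := by exact_mod_cast (by omega : 0 < V.card)
    positivity
  let T : (α → ℝ) →ₗ[ℝ] (α → ℝ) :=
    { toFun := fun y v => if v ∈ V then ∑ e ∈ H with v ∈ e, ∑ u ∈ e, y u else y v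
      map_add' := fun y z => by
        ext v
        by_cases hv : v ∈ V <;> simp [hv, Finset.sum_add_distrib]
      map_smul' := fun c y => by
        ext v
        by_cases hv : v ∈ V <;> simp [hv, Finset.mul_sum] }
  have hT : ∀ y, ∀ v ∈ V, T y v = ∑ e ∈ H with v ∈ e, ∑ u ∈ e, y u := fun y v hv => if_pos hv
  have hinj : Function.Injective T := by
    rw [injective_iff_map_eq_zero]
    intro y hy
    ext v
    by_cases hv : v ∈ V
    · have hzero := abs_le_of_abs_sum_edges_le hsub hcard hk hV hcodeg (y := y) (ρ := 0)
        (fun v hv => by rw [← hT y v hv, hy, Pi.zero_apply, abs_zero]) v hv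
      rw [mul_zero] at hzero
      exact abs_nonpos_iff.1 (nonpos_of_mul_nonpos_right hzero hdpos)
    · exact (if_neg hv : T y v = y v).symm.trans (congrFun hy v)
  obtain ⟨y, hy⟩ := LinearMap.injective_iff_surjective.1 hinj b
  exact ⟨y, fun v hv => by rw [← hT y v hv, hy]⟩

-- Weight an edge `e` by `(1 + ∑ u ∈ e, y u) / d`, where `d` is the average degree and the vertex
-- corrections `y`, which solve a linear system, are small.
theorem exists_fractional_matching [Finite α] (hsub : ∀ e ∈ H, e ⊆ V)
    (hcard : ∀ e ∈ H, e.card = 4) (hk : 0 < k) (hV : 400 ≤ V.card)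
    (hcodeg : ∀ v ∈ V, ∑ u ∈ V.erase v, |(pairDeg H v u : ℝ) - k| ≤ k * V.card / 100)
    (hcodeg' : ∀ u v, u ≠ v → (pairDeg H u v : ℝ) ≤ 2 * k) :
    ∃ w : Finset α → ℝ, NearRegular V H w 0 (12 / V.card) := by
  have hV' : (400 : ℝ) ≤ V.card := by exact_mod_cast hV
  set d := k * V.card / 3 with hd
  have hdpos : 0 < d := by rw [hd]; positivity
  obtain ⟨y, hrow⟩ := exists_sum_edges_eq hsub hcard hk hV hcodeg fun v => d - pairDeg H v v
  have hysmall : ∀ v ∈ V, |y v| ≤ 1 / 20 := by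
    intro v hv
    have hy := abs_le_of_abs_sum_edges_le hsub hcard hk hV hcodeg (y := y) (ρ := d / 40)
      (fun v hv => by
        rw [hrow v hv, abs_sub_comm]
        refine (abs_pairDeg_self_sub_le hsub hcard hk hv (hcodeg v hv)).trans ?_
        nlinarith) v hv
    exact le_of_mul_le_mul_left (hy.trans_eq (by ring)) hdpos
  have hesmall : ∀ e ∈ H, |∑ u ∈ e, y u| ≤ 1 / 5 := by
    intro e he
    refine (Finset.abs_sum_le_sum_abs _ _).trans
      ((Finset.sum_le_card_nsmul _ _ _ fun u hu => hysmall u (hsub e he hu)).trans ?_)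
    rw [hcard e he]; norm_num
  refine ⟨fun e => (1 + ∑ u ∈ e, y u) / d, hsub, hcard, fun e he => ?_, fun v hv => ?_,
    fun u v huv => ?_⟩
  · exact div_nonneg (by linarith [(abs_le.1 (hesmall e he)).1]) hdpos.le
  · rw [← Finset.sum_div, Finset.sum_add_distrib, hrow v hv]
    have hdeg : ∑ e ∈ H with v ∈ e, (1 : ℝ) = pairDeg H v v := by simp [pairDeg]
    rw [hdeg, add_sub_cancel, div_self hdpos.ne', sub_self, abs_zero]
  · have hweight : ∀ e ∈ H.filter (fun e => u ∈ e ∧ v ∈ e), (1 + ∑ u ∈ e, y u) / d ≤ 2 / d := by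
      intro e he
      have := (abs_le.1 (hesmall e (Finset.mem_filter.1 he).1)).2
      exact div_le_div_of_nonneg_right (by linarith) hdpos.le
    calc _ ≤ (pairDeg H u v : ℝ) * (2 / d) := by
          rw [← nsmul_eq_mul]
          exact Finset.sum_le_card_nsmul _ _ _ hweight
      _ ≤ 2 * k * (2 / d) := by gcongr; exact hcodeg' u v huv
      _ = 12 / V.card := by rw [hd]; field_simp; ring

end Fractional

section NearPerfect

variable {y θ : ℝ} {r : ℕ}

theorem exists_natCast_mul_mem_Icc (hy : 10 ^ 6 ≤ y) (hθ : 0 < θ) (hθ' : θ ≤ 1) :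
    ∃ r : ℕ, 8 * Real.log y ≤ θ * r ∧ θ * r ≤ 9 * Real.log y := by
  have hlog : 1 ≤ Real.log y := by
    rw [Real.le_log_iff_exp_le (by linarith)]
    linarith [Real.exp_one_lt_d9]
  refine ⟨⌈8 * Real.log y / θ⌉₊, ?_, ?_⟩
  · rw [← div_le_iff₀' hθ]
    exact Nat.le_ceil _
  · calc θ * ⌈8 * Real.log y / θ⌉₊ ≤ θ * (8 * Real.log y / θ + 1) := by
          gcongr
          exact (Nat.ceil_lt_add_one (by positivity)).le
      _ = 8 * Real.log y + θ := by field_simp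
      _ ≤ 9 * Real.log y := by linarith

theorem one_add_mul_pow_le_pow (hy : 0 < y) (hθ : 0 ≤ θ) (hr : θ * r ≤ 9 * Real.log y) (c : ℕ) :
    (1 + c * θ) ^ r ≤ y ^ (9 * c) := by
  calc (1 + c * θ) ^ r ≤ Real.exp (c * θ) ^ r := by
        gcongr
        linarith [Real.add_one_le_exp (c * θ)]
    _ = Real.exp (c * (θ * r)) := by rw [← Real.exp_nat_mul]; ring_nf
    _ ≤ Real.exp (c * (9 * Real.log y)) := by gcongr
    _ = Real.exp ((9 * c : ℕ) * Real.log y) := by push_cast; ring_nf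
    _ = y ^ (9 * c) := by rw [Real.exp_nat_mul, Real.exp_log hy]

theorem one_sub_quarter_pow_le (hy : 0 < y) (hθ : θ ≤ 4) (hr : 8 * Real.log y ≤ θ * r) :
    (1 - θ / 4) ^ r ≤ (y ^ 2)⁻¹ := by
  calc (1 - θ / 4) ^ r ≤ Real.exp (-(θ / 4)) ^ r := by
        gcongr
        · linarith
        · linarith [Real.add_one_le_exp (-(θ / 4))]
    _ = Real.exp (-(θ * r / 4)) := by rw [← Real.exp_nat_mul]; ring_nf
    _ ≤ Real.exp (-((2 : ℕ) * Real.log y)) := by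
        rw [Real.exp_le_exp]
        push_cast
        linarith
    _ = (y ^ 2)⁻¹ := by rw [Real.exp_neg, Real.exp_nat_mul, Real.exp_log hy]

theorem mul_exp_le_inv_pow_sq (hy : 10 ^ 6 ≤ y) {m : ℝ} (hm : m ≤ y ^ 1000) :
    m * (2 * Real.exp (-((y ^ 100)⁻¹ ^ 3 / (108 * (y ^ 900)⁻¹)))) ≤ (y ^ 100)⁻¹ ^ 2 := by
  have hy0 : 0 < y := by linarith
  have hlog : (1201 : ℕ) * Real.log y ≤ y ^ 600 / 108 := by
    have hpow : 10 ^ 6 * y ≤ y ^ 600 :=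
      calc 10 ^ 6 * y ≤ y * y := by gcongr
        _ = y ^ 2 := by ring
        _ ≤ y ^ 600 := pow_le_pow_right₀ (by linarith) (by norm_num)
    push_cast
    linarith [Real.log_le_sub_one_of_pos hy0]
  have hexp : Real.exp (-((y ^ 100)⁻¹ ^ 3 / (108 * (y ^ 900)⁻¹))) ≤ (y ^ 1201)⁻¹ := by
    have hexponent : (y ^ 100)⁻¹ ^ 3 / (108 * (y ^ 900)⁻¹) = y ^ 600 / 108 := by field_simp
    calc _ ≤ Real.exp (-((1201 : ℕ) * Real.log y)) := by
          rw [hexponent]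
          gcongr
      _ = (y ^ 1201)⁻¹ := by rw [Real.exp_neg, Real.exp_nat_mul, Real.exp_log hy0]
  calc _ ≤ y ^ 1000 * (2 * (y ^ 1201)⁻¹) := by gcongr
    _ = 2 / y * (y ^ 100)⁻¹ ^ 2 := by field_simp
    _ ≤ 1 * (y ^ 100)⁻¹ ^ 2 := by
        gcongr
        rw [div_le_one hy0]
        linarith
    _ = _ := one_mul _

theorem mul_one_add_pow_le_inv (hy : 10 ^ 6 ≤ y) (hθ : 0 ≤ θ) (hr : θ * r ≤ 9 * Real.log y) {κ : ℝ}
    (hκ : 0 ≤ κ) (hκ' : κ * y ^ 999 ≤ 24) : κ * (1 + 6 * θ) ^ r ≤ (y ^ 900)⁻¹ := by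
  have hy0 : 0 < y := by linarith
  have hpow : (24 : ℝ) ≤ y ^ 45 := by
    linarith [le_self_pow₀ (by linarith : 1 ≤ y) (by norm_num : 45 ≠ 0)]
  have hgrowth := one_add_mul_pow_le_pow hy0 hθ hr 6
  push_cast at hgrowth
  have hκy : 24 * (κ * y ^ 954) ≤ 24 * 1 :=
    calc 24 * (κ * y ^ 954) ≤ y ^ 45 * (κ * y ^ 954) := by gcongr
      _ = κ * y ^ 999 := by ring
      _ ≤ 24 * 1 := by linarith
  calc κ * (1 + 6 * θ) ^ r ≤ κ * y ^ (9 * 6) := by gcongr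
    _ = κ * y ^ 954 * (y ^ 900)⁻¹ := by field_simp
    _ ≤ 1 * (y ^ 900)⁻¹ := by
        gcongr
        exact le_of_mul_le_mul_left hκy (by norm_num)
    _ = (y ^ 900)⁻¹ := one_mul _

theorem error_mul_one_add_pow_le_half (hy : 10 ^ 6 ≤ y)
    (hr : (y ^ 100)⁻¹ * r ≤ 9 * Real.log y) :
    (0 + 50 * (y ^ 100)⁻¹ ^ 2 * r) * (1 + 9 * (y ^ 100)⁻¹) ^ r ≤ 1 / 2 := by
  have hy0 : 0 < y := by linarith
  have hgrowth := one_add_mul_pow_le_pow hy0 (by positivity) hr 9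
  push_cast at hgrowth
  have hry : (y ^ 100)⁻¹ * r ≤ 9 * y := by linarith [Real.log_le_sub_one_of_pos hy0]
  have hpow : y ≤ y ^ 18 := le_self_pow₀ (by linarith) (by norm_num)
  calc _ = 50 * (y ^ 100)⁻¹ * ((y ^ 100)⁻¹ * r) * (1 + 9 * (y ^ 100)⁻¹) ^ r := by ring
    _ ≤ 50 * (y ^ 100)⁻¹ * (9 * y) * y ^ (9 * 9) := by gcongr
    _ = 450 / y ^ 18 := by field_simp; ring
    _ ≤ 1 / 2 := by
        rw [div_le_iff₀ (by positivity)]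
        linarith

theorem NearRegular.exists_nearly_perfect_matching {α : Type*} [DecidableEq α]
    {V : Finset α} {H : Finset (Finset α)} {w : Finset α → ℝ} {κ : ℝ} (hy : 10 ^ 6 ≤ y)
    (h : NearRegular V H w 0 κ) (hV : (V.card : ℝ) ≤ y ^ 1000) (hκ : 0 < κ)
    (hκ' : κ * y ^ 999 ≤ 24) :
    ∃ M ⊆ H, (M : Set (Finset α)).PairwiseDisjoint id ∧
      ((V \ M.biUnion id).card : ℝ) * y ^ 2 ≤ 2 * V.card := by
  have hy0 : 0 < y := by linarith
  have hy1 : 1 ≤ y := by linarith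
  set θ : ℝ := (y ^ 100)⁻¹ with hθdef
  have hθ : 0 < θ := by positivity
  have hθ' : θ ≤ 1 / 100 := by
    rw [hθdef, one_div]
    exact inv_anti₀ (by norm_num) (by linarith [le_self_pow₀ hy1 (by norm_num : 100 ≠ 0)])
  obtain ⟨r, hr, hr'⟩ := exists_natCast_mul_mem_Icc hy hθ (by linarith)
  obtain ⟨M, hM, hdisj, hleft⟩ := NearRegular.exists_matching hθ hθ'
    (inv_anti₀ (by positivity) (pow_le_pow_right₀ hy1 (by norm_num)) : (y ^ 900)⁻¹ ≤ θ)
    (mul_exp_le_inv_pow_sq hy hV) r h le_rfl hκ le_rfl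
    (mul_one_add_pow_le_inv hy hθ.le hr' hκ.le hκ') (error_mul_one_add_pow_le_half hy hr')
  refine ⟨M, hM, hdisj, ?_⟩
  have hθy : 48 * θ ≤ (y ^ 2)⁻¹ := by
    have hpow : (48 : ℝ) ≤ y ^ 98 := by linarith [le_self_pow₀ hy1 (by norm_num : 98 ≠ 0)]
    calc 48 * θ ≤ y ^ 98 * (y ^ 100)⁻¹ := by gcongr
      _ = (y ^ 2)⁻¹ := by field_simp
  have hry : (1 - θ / 4) ^ r ≤ (y ^ 2)⁻¹ := one_sub_quarter_pow_le hy0 (by linarith) hr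
  calc ((V \ M.biUnion id).card : ℝ) * y ^ 2
      ≤ ((48 * θ + (1 - θ / 4) ^ r) * V.card) * y ^ 2 := by gcongr
    _ ≤ (((y ^ 2)⁻¹ + (y ^ 2)⁻¹) * V.card) * y ^ 2 := by gcongr
    _ = 2 * V.card := by field_simp; ring

variable {G : Type*} [AddCommGroup G] [DecidableEq G]

/-- The elements `a` of `X` that lie in a pair `{a, t - a} ⊆ X` of distinct elements with
sum `t`. -/
def pairSet (X : Finset G) (t : G) : Finset G := X.filter fun a => t - a ∈ X ∧ a ≠ t - a

/-- The `4`-uniform hypergraph on `V` whose edges are the `4`-subsets of `V` with sum `α`. -/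
def quads (V : Finset G) (α : G) : Finset (Finset G) :=
  (V.powersetCard 4).filter fun e => ∑ x ∈ e, x = α

variable {V e : Finset G} {α t u v x : G}

theorem mem_pairSet : x ∈ pairSet V t ↔ x ∈ V ∧ t - x ∈ V ∧ x ≠ t - x := Finset.mem_filter

theorem mem_quads : e ∈ quads V α ↔ e ⊆ V ∧ e.card = 4 ∧ ∑ x ∈ e, x = α := by
  simp only [quads, Finset.mem_filter, Finset.mem_powersetCard, and_assoc]

theorem card_insert_three_eq_four {α : Type*} [DecidableEq α] {a b c d : α} :
    ({a, b, c, d} : Finset α).card = 4 ↔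
      (a ≠ b ∧ a ≠ c ∧ a ≠ d) ∧ (b ≠ c ∧ b ≠ d) ∧ c ≠ d := by
  grind

theorem insert_three_mem_quads_iff (hu : u ∈ V) (hv : v ∈ V) :
    {u, v, x, α - u - v - x} ∈ quads V α ↔ u ≠ v ∧
      x ∈ pairSet V (α - u - v) \ {u, v, α - u - v - u, α - u - v - v} := by
  have hswap : ∀ z, x = α - u - v - z ↔ z = α - u - v - x := fun z =>
    ⟨fun h => by rw [h]; abel, fun h => by rw [h]; abel⟩
  simp only [mem_quads, card_insert_three_eq_four, Finset.insert_subset_iff,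
    Finset.singleton_subset_iff, Finset.mem_sdiff, mem_pairSet, Finset.mem_insert,
    Finset.mem_singleton, hswap, not_or]
  constructor
  · rintro ⟨⟨-, -, hx, hx'⟩, ⟨⟨huv, hux, hux'⟩, ⟨hvx, hvx'⟩, hxx'⟩, -⟩
    exact ⟨huv, ⟨hx, hx', hxx'⟩, hux.symm, hvx.symm, hux', hvx'⟩
  · rintro ⟨huv, ⟨hx, hx', hxx'⟩, hux, hvx, hux', hvx'⟩
    refine ⟨⟨hu, hv, hx, hx'⟩, ⟨⟨huv, Ne.symm hux, hux'⟩, ⟨Ne.symm hvx, hvx'⟩, hxx'⟩, ?_⟩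
    rw [Finset.sum_insert (by simp [huv, Ne.symm hux, hux']),
      Finset.sum_insert (by simp [Ne.symm hvx, hvx']), Finset.sum_pair hxx']
    abel

theorem card_erase_erase_of_mem_quads (he : e ∈ quads V α) (hu : u ∈ e) (hv : v ∈ e)
    (huv : u ≠ v) : ((e.erase u).erase v).card = 2 := by
  rw [Finset.card_erase_of_mem (Finset.mem_erase.2 ⟨huv.symm, hv⟩), Finset.card_erase_of_mem hu,
    (mem_quads.1 he).2.1]

theorem eq_insert_three_of_mem_quads (he : e ∈ quads V α) (hu : u ∈ e) (hv : v ∈ e)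
    (huv : u ≠ v) (hx : x ∈ (e.erase u).erase v) : e = {u, v, x, α - u - v - x} := by
  have hv' : v ∈ e.erase u := Finset.mem_erase.2 ⟨huv.symm, hv⟩
  have hcard : (((e.erase u).erase v).erase x).card = 1 := by
    rw [Finset.card_erase_of_mem hx, card_erase_erase_of_mem_quads he hu hv huv]
  obtain ⟨x', hx'⟩ := Finset.card_eq_one.1 hcard
  have hsum : u + (v + (x + x')) = α := by
    rw [← (mem_quads.1 he).2.2, ← Finset.add_sum_erase e _ hu, ← Finset.add_sum_erase _ _ hv',
      ← Finset.add_sum_erase _ _ hx, hx', Finset.sum_singleton]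
  have hx'eq : α - u - v - x = x' := by rw [← hsum]; abel
  rw [hx'eq, ← hx', Finset.insert_erase hx, Finset.insert_erase hv', Finset.insert_erase hu]

theorem filter_insert_three_eq (he : e ∈ quads V α) (hu : u ∈ e) (hv : v ∈ e) (huv : u ≠ v) :
    {x ∈ pairSet V (α - u - v) \ {u, v, α - u - v - u, α - u - v - v} |
      {u, v, x, α - u - v - x} = e} = (e.erase u).erase v := by
  have heV := (mem_quads.1 he).1
  ext x
  simp only [Finset.mem_filter]
  constructor
  · rintro ⟨-, rfl⟩
    obtain ⟨⟨-, hux, -⟩, ⟨hvx, -⟩, -⟩ := card_insert_three_eq_four.1 (mem_quads.1 he).2.1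
    simp [hux.symm, hvx.symm]
  · intro hx
    have hxe := eq_insert_three_of_mem_quads he hu hv huv hx
    refine ⟨((insert_three_mem_quads_iff (heV hu) (heV hv)).1 ?_).2, hxe.symm⟩
    rwa [← hxe]

-- Each edge `{u, v, x, α - u - v - x}` is counted twice, through `x` and through `α - u - v - x`.
theorem card_pairSet_sdiff_eq_two_mul_pairDeg (hu : u ∈ V) (hv : v ∈ V) (huv : u ≠ v) :
    (pairSet V (α - u - v) \ {u, v, α - u - v - u, α - u - v - v}).card =
      2 * pairDeg (quads V α) u v := by
  rw [Finset.card_eq_sum_card_fiberwise (f := fun x => ({u, v, x, α - u - v - x} : Finset G))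
    (t := (quads V α).filter fun e => u ∈ e ∧ v ∈ e), pairDeg, Finset.sum_const_nat (m := 2),
    mul_comm]
  · intro e he
    obtain ⟨he, hue, hve⟩ := Finset.mem_filter.1 he
    rw [filter_insert_three_eq he hue hve huv, card_erase_erase_of_mem_quads he hue hve huv]
  · intro x hx
    refine Finset.mem_coe.2 (Finset.mem_filter.2 ⟨?_, by simp, by simp⟩)
    exact (insert_three_mem_quads_iff hu hv).2 ⟨huv, hx⟩

theorem two_mul_pairDeg_le (hu : u ∈ V) (hv : v ∈ V) (huv : u ≠ v) :
    2 * pairDeg (quads V α) u v ≤ (pairSet V (α - u - v)).card := by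
  rw [← card_pairSet_sdiff_eq_two_mul_pairDeg hu hv huv]
  exact Finset.card_le_card Finset.sdiff_subset

theorem card_pairSet_le_two_mul_pairDeg_add (hu : u ∈ V) (hv : v ∈ V) (huv : u ≠ v) :
    (pairSet V (α - u - v)).card ≤ 2 * pairDeg (quads V α) u v + 4 := by
  rw [← card_pairSet_sdiff_eq_two_mul_pairDeg hu hv huv, ← tsub_le_iff_right]
  exact (Nat.sub_le_sub_left Finset.card_le_four _).trans (Finset.le_card_sdiff _ _)

theorem pairDeg_quads_le {K : ℝ} (hK : 0 ≤ K) (hup : ∀ t, ((pairSet V t).card : ℝ) ≤ 2 * K)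
    (huv : u ≠ v) : (pairDeg (quads V α) u v : ℝ) ≤ K := by
  by_cases huvV : u ∈ V ∧ v ∈ V
  · have hdeg : (2 * pairDeg (quads V α) u v : ℝ) ≤ (pairSet V (α - u - v)).card := by
      exact_mod_cast two_mul_pairDeg_le huvV.1 huvV.2 huv
    linarith [hup (α - u - v)]
  · have hzero : pairDeg (quads V α) u v = 0 := by
      rw [pairDeg, Finset.card_eq_zero, Finset.filter_eq_empty_iff]
      exact fun e he h => huvV ⟨(mem_quads.1 he).1 h.1, (mem_quads.1 he).1 h.2⟩
    rwa [hzero, Nat.cast_zero]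

theorem sum_abs_pairDeg_quads_sub_le {D : Finset G} {k : ℝ} (hk : 4000 ≤ k)
    (hup : ∀ t, ((pairSet V t).card : ℝ) ≤ 2 * (k * (1 + 1 / 1000)))
    (hlow : ∀ t, t ∉ D → 2 * (k * (1 - 1 / 1000)) ≤ (pairSet V t).card)
    (hD : (D.card : ℝ) * 10000 ≤ V.card) (hv : v ∈ V) :
    ∑ u ∈ V.erase v, |(pairDeg (quads V α) v u : ℝ) - k| ≤ k * V.card / 100 := by
  have hdev : ∀ u ∈ V.erase v, |(pairDeg (quads V α) v u : ℝ) - k| ≤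
      (k / 1000 + 2) + if α - v - u ∈ D then k else 0 := by
    intro u hu
    obtain ⟨huv, hu⟩ := Finset.mem_erase.1 hu
    have hdeg := pairDeg_quads_le (α := α) (by positivity) hup huv.symm
    have hdeg' : ((pairSet V (α - v - u)).card : ℝ) ≤ 2 * pairDeg (quads V α) v u + 4 := by
      exact_mod_cast card_pairSet_le_two_mul_pairDeg_add hv hu huv.symm
    rw [abs_le]
    split_ifs with hD'
    · have : (0 : ℝ) ≤ pairDeg (quads V α) v u := Nat.cast_nonneg _
      constructor <;> linarith
    · have := hlow _ hD'
      constructor <;> linarith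
  have hexceptional : (((V.erase v).filter fun u => α - v - u ∈ D).card : ℝ) ≤ D.card := by
    exact_mod_cast Finset.card_le_card_of_injOn (fun u => α - v - u)
      (fun u hu => (Finset.mem_filter.1 hu).2) sub_right_injective.injOn
  have herase : ((V.erase v).card : ℝ) ≤ V.card := by
    exact_mod_cast Finset.card_erase_le
  calc ∑ u ∈ V.erase v, |(pairDeg (quads V α) v u : ℝ) - k|
      ≤ (V.erase v).card * (k / 1000 + 2) +
          ((V.erase v).filter fun u => α - v - u ∈ D).card * k := by
        refine (Finset.sum_le_sum hdev).trans_eq ?_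
        rw [Finset.sum_add_distrib, Finset.sum_const, nsmul_eq_mul, ← Finset.sum_filter,
          Finset.sum_const, nsmul_eq_mul]
    _ ≤ V.card * (k / 1000 + 2) + D.card * k := by gcongr
    _ ≤ V.card * (k / 1000 + k / 2000) + V.card / 10000 * k := by
        gcongr <;> linarith
    _ ≤ k * V.card / 100 := by nlinarith [Nat.cast_nonneg (α := ℝ) V.card]

theorem exists_nearly_perfect_quads [Finite G] {D : Finset G} {k : ℝ}
    (hy : 10 ^ 6 ≤ y) (hV : (V.card : ℝ) ≤ y ^ 1000) (hV' : y ^ 999 ≤ 2 * V.card) (hk : 4000 ≤ k)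
    (hup : ∀ t, ((pairSet V t).card : ℝ) ≤ 2 * (k * (1 + 1 / 1000)))
    (hlow : ∀ t, t ∉ D → 2 * (k * (1 - 1 / 1000)) ≤ (pairSet V t).card)
    (hD : (D.card : ℝ) * 10000 ≤ V.card) :
    ∃ M ⊆ quads V α, (M : Set (Finset G)).PairwiseDisjoint id ∧
      ((V \ M.biUnion id).card : ℝ) * y ^ 2 ≤ 2 * V.card := by
  have hVcard : (400 : ℝ) ≤ V.card := by
    linarith [le_self_pow₀ (by linarith : 1 ≤ y) (by norm_num : 999 ≠ 0)]
  obtain ⟨w, hw⟩ := exists_fractional_matching (H := quads V α) (k := k)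
    (fun e he => (mem_quads.1 he).1) (fun e he => (mem_quads.1 he).2.1) (by linarith)
    (by exact_mod_cast hVcard) (fun v hv => sum_abs_pairDeg_quads_sub_le hk hup hlow hD hv)
    (fun u v huv => (pairDeg_quads_le (by positivity) hup huv).trans (by linarith))
  refine hw.exists_nearly_perfect_matching hy hV (by positivity) ?_
  rw [div_mul_eq_mul_div, div_le_iff₀ (by linarith)]
  linarith

end NearPerfect

/-! ### Absorption -/

section Absorb

variable {G : Type*} [AddCommGroup G]

/-- `QuadSum α m` says that the multiset `m` splits into quadruples of sum `α`. -/
inductive QuadSum (α : G) : Multiset G → Prop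
  | zero : QuadSum α 0
  | add {q m : Multiset G} (hcard : q.card = 4) (hsum : q.sum = α) (hm : QuadSum α m) :
      QuadSum α (q + m)

variable {α t₀ x : G}

theorem QuadSum.of_card_eq_four {q : Multiset G} (hcard : q.card = 4) (hsum : q.sum = α) :
    QuadSum α q := by
  simpa only [add_zero] using QuadSum.add hcard hsum QuadSum.zero

theorem QuadSum.append {m₁ m₂ : Multiset G} (h₁ : QuadSum α m₁) (h₂ : QuadSum α m₂) :
    QuadSum α (m₁ + m₂) := by
  induction h₁ with
  | zero => rwa [zero_add]
  | add hcard hsum _ ih => exact add_assoc _ _ m₂ ▸ QuadSum.add hcard hsum ih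

theorem QuadSum.sum {ι : Type*} {f : ι → Multiset G} {T : Finset ι}
    (h : ∀ i ∈ T, QuadSum α (f i)) : QuadSum α (∑ i ∈ T, f i) :=
  Finset.sum_induction f (QuadSum α) (fun _ _ => QuadSum.append) QuadSum.zero h

theorem QuadSum.exists_card_sum {m : Multiset G} (h : QuadSum α m) :
    ∃ k : ℕ, m.card = 4 * k ∧ m.sum = k • α := by
  induction h with
  | zero => exact ⟨0, by simp⟩
  | add hcard hsum _ ih =>
    obtain ⟨k, hk, hks⟩ := ih
    refine ⟨k + 1, ?_, ?_⟩
    · rw [Multiset.card_add, hcard, hk]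
      ring
    · rw [Multiset.sum_add, hsum, hks, succ_nsmul']

theorem QuadSum.exists_partition [DecidableEq G] {m : Multiset G} (h : QuadSum α m) :
    ∀ {X : Finset G}, X.val = m →
      ∃ P : Finset (Finset G), (P : Set (Finset G)).PairwiseDisjoint id ∧ P.biUnion id = X ∧
        ∀ A ∈ P, A.card = 4 ∧ ∑ x ∈ A, x = α := by
  induction h with
  | zero => exact fun hX => ⟨∅, by simp, by simpa using (Finset.val_eq_zero.1 hX).symm, by simp⟩
  | @add q m hcard hsum _ ih =>
    intro X hX
    obtain ⟨hq, hm, hqm⟩ := Multiset.nodup_add.1 (hX ▸ X.nodup)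
    obtain ⟨P, hdisj, hunion, hP⟩ := ih (X := ⟨m, hm⟩) rfl
    refine ⟨insert ⟨q, hq⟩ P, ?_, ?_, ?_⟩
    · rw [Finset.coe_insert]
      refine hdisj.insert fun A hA _ => Finset.disjoint_val.1 ?_
      have hAm : A ⊆ ⟨m, hm⟩ := hunion ▸ Finset.subset_biUnion_of_mem id hA
      exact hqm.mono_right (Finset.val_le_iff.2 hAm)
    · rw [Finset.biUnion_insert, hunion]
      ext y
      rw [← Finset.mem_val (s := X), hX]
      simp [← Finset.mem_val]
    · refine Finset.forall_mem_insert _ _ _ |>.2 ⟨⟨hcard, ?_⟩, hP⟩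
      rw [Finset.sum_eq_multiset_sum, Multiset.map_id']
      exact hsum

theorem quadSum_biUnion [DecidableEq G] {M : Finset (Finset G)}
    (hM : (M : Set (Finset G)).PairwiseDisjoint id)
    (hquad : ∀ e ∈ M, e.card = 4 ∧ ∑ x ∈ e, x = α) : QuadSum α (M.biUnion id).val := by
  have hval : (M.biUnion id).val = ∑ e ∈ M, e.val := by
    rw [← Finset.disjiUnion_eq_biUnion M id hM]
    rfl
  rw [hval]
  refine QuadSum.sum fun e he => QuadSum.of_card_eq_four (hquad e he).1 ?_
  rw [← (hquad e he).2, Finset.sum_eq_multiset_sum, Multiset.map_id']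

/-- A reserve of quadruples `p i, p' i, e i, e' i` of sum `α`, indexed by `i ∈ I`, that can be
recombined. The sum `p i + p' i` is `t₀` shifted by a label `x ∈ S`, or is `t₀` itself when
`cls i = none`. After any `B` indices are used up, every sum outside `Bad` can still be completed
in a way that leaves behind a good sum. -/
structure Reserve {ι : Type*} (α t₀ : G) (S Bad : Finset G) (B : ℕ) (I : Finset ι)
    (cls : ι → Option G) (p p' e e' : ι → G) : Prop where
  sum_p : ∀ i ∈ I, p i + p' i = t₀ + (cls i).getD 0
  sum_e : ∀ i ∈ I, e i + e' i = α - t₀ - (cls i).getD 0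
  fresh : ∀ F : Finset ι, F.card ≤ B → ∀ a b : G, ∃ i ∈ I, i ∉ F ∧
    α - a - p i ∉ Bad ∧ α - b - e i ∉ Bad
  rich_p : ∀ F : Finset ι, F.card ≤ B → ∀ x ∈ S, ∀ h ∉ Bad, ∀ b : G, ∃ i ∈ I, ∃ j ∈ I,
    i ∉ F ∧ j ∉ F ∧ cls i = some x ∧ cls j = none ∧ p i + e j = h ∧ α - p' i - b ∉ Bad
  rich_e : ∀ F : Finset ι, F.card ≤ B → ∀ x ∈ S, ∀ h ∉ Bad, ∀ b : G, ∃ i ∈ I, ∃ j ∈ I,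
    i ∉ F ∧ j ∉ F ∧ cls i = some x ∧ cls j = none ∧ e i + p j = h ∧ α - e' i - b ∉ Bad

/-- A group of four elements two of which can be completed to a quadruple of sum `α` using a
reserve. -/
def IsOpenGroup (α : G) (Bad : Finset G) (g : Multiset G) : Prop :=
  ∃ u v w z : G, g = {u} + {v} + {w} + {z} ∧ α - u - v ∉ Bad

theorem IsOpenGroup.card_eq_four {Bad : Finset G} {g : Multiset G} (hg : IsOpenGroup α Bad g) :
    g.card = 4 := by
  obtain ⟨u, v, w, z, rfl, -⟩ := hg
  rfl

/-- The multiset of points of the reserve quadruples with index in `T`. -/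
def reservePoints {G ι : Type*} (p p' e e' : ι → G) (T : Finset ι) : Multiset G :=
  ∑ i ∈ T, ({p i} + {p' i} + {e i} + {e' i})

theorem reservePoints_eq_add_erase {G ι : Type*} [DecidableEq ι] (p p' e e' : ι → G)
    {T : Finset ι} {i : ι} (hi : i ∈ T) : reservePoints p p' e e' T =
      {p i} + {p' i} + {e i} + {e' i} + reservePoints p p' e e' (T.erase i) :=
  (Finset.add_sum_erase T _ hi).symm

theorem exists_eq_add_of_card_eq_mul {G : Type*} {a n : ℕ} {m : Multiset G}
    (hm : m.card = a * (n + 1)) :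
    ∃ m₁ m₂ : Multiset G, m₁.card = a ∧ m₂.card = a * n ∧ m = m₁ + m₂ := by
  induction m using Quotient.inductionOn with
  | h l =>
    have hl : l.length = a * n + a := hm
    exact ⟨l.take a, l.drop a, by simp [hl], by simp [hl], by simp⟩

namespace Reserve

variable {S Bad : Finset G} {B W : ℕ} {ι : Type*} {I A : Finset ι} {cls : ι → Option G}
  {p p' e e' : ι → G} {g g₁ g₂ m q : Multiset G}

theorem quadSum_reservePoints (hR : Reserve α t₀ S Bad B I cls p p' e e') (hA : A ⊆ I) :
    QuadSum α (reservePoints p p' e e' A) := by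
  refine QuadSum.sum fun i hi => QuadSum.of_card_eq_four rfl ?_
  simp only [Multiset.sum_add, Multiset.sum_singleton]
  rw [add_assoc, hR.sum_p i (hA hi), hR.sum_e i (hA hi)]
  abel

theorem exists_shift_up (hR : Reserve α t₀ S Bad B I cls p p' e e') (hA : A ⊆ I)
    (hB : I.card ≤ A.card + B) (hx : x ∈ S) (hg : IsOpenGroup α Bad g) :
    ∃ A' ⊆ A, A.card = A'.card + 2 ∧ ∃ g' q : Multiset G, IsOpenGroup α Bad g' ∧
      g'.sum = g.sum + x ∧ QuadSum α q ∧ ∃ a b c d : G, a + b = α - t₀ - x ∧ c + d = t₀ ∧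
      g + reservePoints p p' e e' A =
        q + g' + ({a} + {b} + {c} + {d}) + reservePoints p p' e e' A' := by
  obtain ⟨u, v, w, z, rfl, huv⟩ := hg
  obtain ⟨i, hi, j, hj, hiA, hjA, hci, hcj, hsum, hopen⟩ :=
    hR.rich_p (I \ A) (by rw [Finset.card_sdiff_of_subset hA]; omega) x hx _ huv w
  have hij : j ≠ i := fun h => by simp [← h, hcj] at hci
  have hiA : i ∈ A := by simpa [hi] using hiA
  have hjA : j ∈ A.erase i := by simpa [hj, hij] using hjA
  have hpi := hR.sum_p i hi
  have hpj := hR.sum_p j hj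
  have hei := hR.sum_e i hi
  have hej := hR.sum_e j hj
  simp only [hci, hcj, Option.getD_some, Option.getD_none, sub_zero, add_zero] at hpi hpj hei hej
  refine ⟨(A.erase i).erase j, (Finset.erase_subset _ _).trans (Finset.erase_subset _ _), ?_,
    {p' i} + {w} + {e' j} + {z}, {u} + {v} + {p i} + {e j}, ⟨_, _, _, _, rfl, hopen⟩, ?_,
    QuadSum.of_card_eq_four rfl ?_, e i, e' i, p j, p' j, hei, hpj, ?_⟩
  · rw [← Finset.card_erase_add_one hiA, ← Finset.card_erase_add_one hjA]
  · simp only [Multiset.sum_add, Multiset.sum_singleton]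
    rw [eq_sub_of_add_eq' hpi, eq_sub_of_add_eq' hej, eq_sub_of_add_eq' hsum]
    abel
  · simp only [Multiset.sum_add, Multiset.sum_singleton]
    rw [add_assoc, hsum]
    abel
  · rw [reservePoints_eq_add_erase p p' e e' hiA, reservePoints_eq_add_erase p p' e e' hjA]
    abel

theorem exists_shift_down (hR : Reserve α t₀ S Bad B I cls p p' e e') (hA : A ⊆ I)
    (hB : I.card ≤ A.card + B) (hx : x ∈ S) (hg : IsOpenGroup α Bad g) :
    ∃ A' ⊆ A, A.card = A'.card + 2 ∧ ∃ g' q : Multiset G, IsOpenGroup α Bad g' ∧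
      g'.sum = g.sum - x ∧ QuadSum α q ∧ ∃ a b c d : G, a + b = t₀ + x ∧ c + d = α - t₀ ∧
      g + reservePoints p p' e e' A =
        q + g' + ({a} + {b} + {c} + {d}) + reservePoints p p' e e' A' := by
  obtain ⟨u, v, w, z, rfl, huv⟩ := hg
  obtain ⟨i, hi, j, hj, hiA, hjA, hci, hcj, hsum, hopen⟩ :=
    hR.rich_e (I \ A) (by rw [Finset.card_sdiff_of_subset hA]; omega) x hx _ huv w
  have hij : j ≠ i := fun h => by simp [← h, hcj] at hci
  have hiA : i ∈ A := by simpa [hi] using hiA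
  have hjA : j ∈ A.erase i := by simpa [hj, hij] using hjA
  have hpi := hR.sum_p i hi
  have hpj := hR.sum_p j hj
  have hei := hR.sum_e i hi
  have hej := hR.sum_e j hj
  simp only [hci, hcj, Option.getD_some, Option.getD_none, sub_zero, add_zero] at hpi hpj hei hej
  refine ⟨(A.erase i).erase j, (Finset.erase_subset _ _).trans (Finset.erase_subset _ _), ?_,
    {e' i} + {w} + {p' j} + {z}, {u} + {v} + {e i} + {p j}, ⟨_, _, _, _, rfl, hopen⟩, ?_,
    QuadSum.of_card_eq_four rfl ?_, p i, p' i, e j, e' j, hpi, hej, ?_⟩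
  · rw [← Finset.card_erase_add_one hiA, ← Finset.card_erase_add_one hjA]
  · simp only [Multiset.sum_add, Multiset.sum_singleton]
    rw [eq_sub_of_add_eq' hei, eq_sub_of_add_eq' hpj, eq_sub_of_add_eq' hsum]
    abel
  · simp only [Multiset.sum_add, Multiset.sum_singleton]
    rw [add_assoc, hsum]
    abel
  · rw [reservePoints_eq_add_erase p p' e e' hiA, reservePoints_eq_add_erase p p' e e' hjA]
    abel

theorem exists_transfer (hR : Reserve α t₀ S Bad B I cls p p' e e') (hA : A ⊆ I)
    (hB : I.card + 2 ≤ A.card + B) (hx : x ∈ S) (h₁ : IsOpenGroup α Bad g₁)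
    (h₂ : IsOpenGroup α Bad g₂) :
    ∃ A' ⊆ A, A.card = A'.card + 4 ∧ ∃ g₁' g₂' s : Multiset G, IsOpenGroup α Bad g₁' ∧
      IsOpenGroup α Bad g₂' ∧ g₁'.sum = g₁.sum + x ∧ g₂'.sum = g₂.sum - x ∧ QuadSum α s ∧
      g₁ + g₂ + reservePoints p p' e e' A = s + g₁' + g₂' + reservePoints p p' e e' A' := by
  obtain ⟨A₁, hA₁, hcard₁, g₁', q₁, hopen₁, hsum₁, hq₁, a₁, b₁, c₁, d₁, hab₁, hcd₁, heq₁⟩ :=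
    hR.exists_shift_up hA (by omega) hx h₁
  obtain ⟨A₂, hA₂, hcard₂, g₂', q₂, hopen₂, hsum₂, hq₂, a₂, b₂, c₂, d₂, hab₂, hcd₂, heq₂⟩ :=
    hR.exists_shift_down (hA₁.trans hA) (by omega) hx h₂
  -- The leftover pairs of the two shifts are complementary.
  have hleft₁ : QuadSum α ({a₁} + {b₁} + {a₂} + {b₂}) := by
    refine QuadSum.of_card_eq_four rfl ?_
    simp only [Multiset.sum_add, Multiset.sum_singleton]
    rw [add_assoc, hab₁, hab₂]
    abel
  have hleft₂ : QuadSum α ({c₁} + {d₁} + {c₂} + {d₂}) := by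
    refine QuadSum.of_card_eq_four rfl ?_
    simp only [Multiset.sum_add, Multiset.sum_singleton]
    rw [add_assoc, hcd₁, hcd₂]
    abel
  refine ⟨A₂, hA₂.trans hA₁, by omega, g₁', g₂', _, hopen₁, hopen₂, hsum₁, hsum₂,
    (hq₁.append hq₂).append (hleft₁.append hleft₂), ?_⟩
  calc g₁ + g₂ + reservePoints p p' e e' A
      = q₁ + g₁' + ({a₁} + {b₁} + {c₁} + {d₁}) + (g₂ + reservePoints p p' e e' A₁) := by
        rw [add_right_comm, heq₁]
        abel
    _ = q₁ + q₂ + ({a₁} + {b₁} + {a₂} + {b₂} + ({c₁} + {d₁} + {c₂} + {d₂})) + g₁' + g₂' +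
          reservePoints p p' e e' A₂ := by
        rw [heq₂]
        abel

theorem exists_close (hR : Reserve α t₀ S Bad B I cls p p' e e') (l : List G) :
    ∀ {A : Finset ι} {g₁ g₂ : Multiset G}, A ⊆ I → I.card + 4 * l.length ≤ A.card + B →
    (∀ x ∈ l, x ∈ S) → IsOpenGroup α Bad g₁ → IsOpenGroup α Bad g₂ → g₁.sum + l.sum = α →
    ∃ A' ⊆ A, A.card = A'.card + 4 * l.length ∧ ∃ g s : Multiset G, IsOpenGroup α Bad g ∧
      g.sum = g₂.sum - l.sum ∧ QuadSum α s ∧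
      g₁ + g₂ + reservePoints p p' e e' A = s + g + reservePoints p p' e e' A' := by
  induction l with
  | nil =>
    intro A g₁ g₂ _ _ _ h₁ h₂ hsum
    exact ⟨A, subset_rfl, rfl, g₂, g₁, h₂, by simp,
      QuadSum.of_card_eq_four h₁.card_eq_four (by simpa using hsum), rfl⟩
  | cons x l ih =>
    intro A g₁ g₂ hA hB hl h₁ h₂ hsum
    rw [List.length_cons] at hB
    obtain ⟨hx, hl⟩ := List.forall_mem_cons.1 hl
    obtain ⟨A₁, hA₁, hcard₁, g₁', g₂', s, h₁', h₂', hsum₁, hsum₂, hs, heq⟩ :=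
      hR.exists_transfer hA (by omega) hx h₁ h₂
    obtain ⟨A₂, hA₂, hcard₂, g, s', hg, hgsum, hs', heq'⟩ :=
      ih (hA₁.trans hA) (by omega) hl h₁' h₂' (by rw [hsum₁, ← hsum, List.sum_cons]; abel)
    refine ⟨A₂, hA₂.trans hA₁, by rw [List.length_cons]; omega, g, s + s', hg, ?_, hs.append hs',
      ?_⟩
    · rw [hgsum, hsum₂, List.sum_cons]
      abel
    · rw [heq, add_assoc s, add_assoc s, heq']
      abel

theorem exists_complete (hR : Reserve α t₀ S Bad B I cls p p' e e')
    (hS : ∀ y : G, ∃ l : List G, (∀ x ∈ l, x ∈ S) ∧ l.sum = y ∧ l.length ≤ W)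
    (hA : A ⊆ I) (hB : I.card + 4 * W ≤ A.card + B) (h₁ : IsOpenGroup α Bad g₁)
    (h₂ : IsOpenGroup α Bad g₂) :
    ∃ A' ⊆ A, A.card ≤ A'.card + 4 * W ∧ ∃ g s : Multiset G, IsOpenGroup α Bad g ∧
      g.sum + α = g₁.sum + g₂.sum ∧ QuadSum α s ∧
      g₁ + g₂ + reservePoints p p' e e' A = s + g + reservePoints p p' e e' A' := by
  obtain ⟨l, hlS, hlsum, hlW⟩ := hS (α - g₁.sum)
  obtain ⟨A', hA', hcard, g, s, hg, hgsum, hs, heq⟩ :=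
    hR.exists_close l hA (by omega) hlS h₁ h₂ (by rw [hlsum]; abel)
  refine ⟨A', hA', by omega, g, s, hg, ?_, hs, heq⟩
  rw [hgsum, hlsum]
  abel

theorem exists_open (hR : Reserve α t₀ S Bad B I cls p p' e e') (hA : A ⊆ I)
    (hB : I.card ≤ A.card + B) (hq : q.card = 4) :
    ∃ A' ⊆ A, A.card = A'.card + 1 ∧ ∃ g₁ g₂ : Multiset G, IsOpenGroup α Bad g₁ ∧
      IsOpenGroup α Bad g₂ ∧ g₁.sum + g₂.sum = q.sum + α ∧
      q + reservePoints p p' e e' A = g₁ + g₂ + reservePoints p p' e e' A' := by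
  obtain ⟨a, b, c, d, rfl⟩ := Multiset.card_eq_four.1 hq
  obtain ⟨i, hi, hiA, hopen₁, hopen₂⟩ :=
    hR.fresh (I \ A) (by rw [Finset.card_sdiff_of_subset hA]; omega) a b
  have hiA : i ∈ A := by simpa [hi] using hiA
  refine ⟨A.erase i, Finset.erase_subset _ _, (Finset.card_erase_add_one hiA).symm,
    {a} + {p i} + {c} + {p' i}, {b} + {e i} + {d} + {e' i}, ⟨_, _, _, _, rfl, hopen₁⟩,
    ⟨_, _, _, _, rfl, hopen₂⟩, ?_, ?_⟩
  · simp only [Multiset.sum_add, Multiset.sum_singleton, Multiset.insert_eq_cons,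
      Multiset.sum_cons]
    rw [eq_sub_of_add_eq' (hR.sum_p i hi), eq_sub_of_add_eq' (hR.sum_e i hi)]
    abel
  · rw [reservePoints_eq_add_erase p p' e e' hiA]
    simp only [Multiset.insert_eq_cons, ← Multiset.singleton_add]
    abel

theorem exists_absorb_quadruple (hR : Reserve α t₀ S Bad B I cls p p' e e')
    (hS : ∀ y : G, ∃ l : List G, (∀ x ∈ l, x ∈ S) ∧ l.sum = y ∧ l.length ≤ W)
    (hA : A ⊆ I) (hB : I.card + (8 * W + 1) ≤ A.card + B) (hg : IsOpenGroup α Bad g)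
    (hq : q.card = 4) :
    ∃ A' ⊆ A, A.card ≤ A'.card + (8 * W + 1) ∧ ∃ g' s : Multiset G, IsOpenGroup α Bad g' ∧
      g'.sum + α = g.sum + q.sum ∧ QuadSum α s ∧
      g + q + reservePoints p p' e e' A = s + g' + reservePoints p p' e e' A' := by
  obtain ⟨A₁, hA₁, hcard₁, g₁, g₂, h₁, h₂, hsum, heq⟩ := hR.exists_open hA (by omega) hq
  obtain ⟨A₂, hA₂, hcard₂, g₃, s, h₃, hsum₃, hs, heq₃⟩ :=
    hR.exists_complete hS (hA₁.trans hA) (by omega) hg h₁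
  obtain ⟨A₃, hA₃, hcard₃, g₄, s', h₄, hsum₄, hs', heq₄⟩ :=
    hR.exists_complete hS (hA₂.trans (hA₁.trans hA)) (by omega) h₃ h₂
  refine ⟨A₃, hA₃.trans (hA₂.trans hA₁), by omega, g₄, s + s', h₄, ?_, hs.append hs', ?_⟩
  · rw [hsum₄, ← add_right_cancel_iff (a := α), add_right_comm, hsum₃, add_assoc, add_assoc,
      ← hsum]
  · calc g + q + reservePoints p p' e e' A
        = g + g₁ + reservePoints p p' e e' A₁ + g₂ := by rw [add_assoc, heq]; abel
      _ = s + (g₃ + g₂ + reservePoints p p' e e' A₂) := by rw [heq₃]; abel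
      _ = s + s' + g₄ + reservePoints p p' e e' A₃ := by rw [heq₄]; abel

theorem absorb_of_open (hR : Reserve α t₀ S Bad B I cls p p' e e')
    (hS : ∀ y : G, ∃ l : List G, (∀ x ∈ l, x ∈ S) ∧ l.sum = y ∧ l.length ≤ W) (n : ℕ) :
    ∀ {A : Finset ι} {g m : Multiset G}, A ⊆ I → I.card + n * (8 * W + 1) ≤ A.card + B →
      IsOpenGroup α Bad g → m.card = 4 * n → g.sum + m.sum = (n + 1) • α →
      QuadSum α (g + m + reservePoints p p' e e' A) := by
  induction n with
  | zero =>
    intro A g m hA _ hg hm hsum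
    obtain rfl : m = 0 := Multiset.card_eq_zero.1 hm
    rw [add_zero]
    exact QuadSum.add hg.card_eq_four (by simpa using hsum) (hR.quadSum_reservePoints hA)
  | succ n ih =>
    intro A g m hA hB hg hm hsum
    rw [add_one_mul] at hB
    obtain ⟨q, m', hq, hm', rfl⟩ := exists_eq_add_of_card_eq_mul hm
    obtain ⟨A', hA', hcard, g', s, hg', hsum', hs, heq⟩ :=
      hR.exists_absorb_quadruple hS hA (by omega) hg hq
    have hrest : QuadSum α (g' + m' + reservePoints p p' e e' A') := by
      refine ih (hA'.trans hA) (by omega) hg' hm' (add_right_cancel (b := α) ?_)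
      rw [add_right_comm, hsum', ← succ_nsmul, ← hsum, Multiset.sum_add, add_assoc]
    have hsplit : g + (q + m') + reservePoints p p' e e' A =
        s + (g' + m' + reservePoints p p' e e' A') := by
      rw [← add_assoc g, add_right_comm, heq]
      abel
    exact hsplit ▸ hs.append hrest

theorem absorb (hR : Reserve α t₀ S Bad B I cls p p' e e')
    (hS : ∀ y : G, ∃ l : List G, (∀ x ∈ l, x ∈ S) ∧ l.sum = y ∧ l.length ≤ W) {n : ℕ}
    (hcard : m.card = 4 * n) (hsum : m.sum = n • α) (hB : (n + 1) * (8 * W + 1) ≤ B) :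
    QuadSum α (m + reservePoints p p' e e' I) := by
  cases n with
  | zero =>
    rw [Multiset.card_eq_zero.1 hcard, zero_add]
    exact hR.quadSum_reservePoints subset_rfl
  | succ n =>
    rw [add_one_mul, add_one_mul] at hB
    obtain ⟨q, m', hq, hm', rfl⟩ := exists_eq_add_of_card_eq_mul hcard
    obtain ⟨A₁, hA₁, hcard₁, g₁, g₂, h₁, h₂, hsum₁, heq⟩ :=
      hR.exists_open subset_rfl (by omega) hq
    obtain ⟨A₂, hA₂, hcard₂, g, s, hg, hgsum, hs, heq'⟩ :=
      hR.exists_complete hS hA₁ (by omega) h₁ h₂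
    have hrest : QuadSum α (g + m' + reservePoints p p' e e' A₂) := by
      refine hR.absorb_of_open hS n (hA₂.trans hA₁) (by omega) hg hm' ?_
      rw [← hsum, Multiset.sum_add, add_right_cancel (hgsum.trans hsum₁)]
    have hsplit : q + m' + reservePoints p p' e e' I =
        s + (g + m' + reservePoints p p' e e' A₂) := by
      rw [add_right_comm, heq, heq']
      abel
    exact hsplit ▸ hs.append hrest

end Reserve

end Absorb

section Letters

theorem exists_list_sum_eq_sum {G : Type*} [AddCommMonoid G] {S T : Finset G} {L : ℕ} {f : G → G}
    (h : ∀ x ∈ T, ∃ l : List G, (∀ z ∈ l, z ∈ S) ∧ l.sum = f x ∧ l.length ≤ L) :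
    ∃ l : List G, (∀ z ∈ l, z ∈ S) ∧ l.sum = ∑ x ∈ T, f x ∧ l.length ≤ T.card * L := by
  choose! l hlS hlsum hlL using h
  refine ⟨(T.toList.map l).flatten, ?_, ?_, ?_⟩
  · simp only [List.mem_flatten, List.mem_map, Finset.mem_toList]
    rintro z ⟨_, ⟨x, hx, rfl⟩, hz⟩
    exact hlS x hx z hz
  · rw [List.sum_flatten, List.map_map, Finset.sum_map_toList]
    exact Finset.sum_congr rfl hlsum
  · rw [List.length_flatten, List.map_map, Finset.sum_map_toList]
    exact (Finset.sum_le_card_nsmul T _ L hlL).trans_eq (smul_eq_mul _ _)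

variable (G : Type*) [AddCommGroup G] [Finite G]

variable {G} in
theorem two_mul_card_closure_le {T : Finset G} {g : G}
    (hg : g ∉ AddSubgroup.closure (T : Set G)) [DecidableEq G] :
    2 * Nat.card (AddSubgroup.closure (T : Set G)) ≤
      Nat.card (AddSubgroup.closure ((insert g T : Finset G) : Set G)) := by
  have hle : AddSubgroup.closure (T : Set G) ≤
      AddSubgroup.closure ((insert g T : Finset G) : Set G) := AddSubgroup.closure_mono (by simp)
  have hlt : Nat.card (AddSubgroup.closure (T : Set G)) <
      Nat.card (AddSubgroup.closure ((insert g T : Finset G) : Set G)) := by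
    by_contra! hcard
    exact hg (AddSubgroup.eq_of_le_of_card_ge hle hcard ▸ AddSubgroup.subset_closure (by simp))
  obtain ⟨c, hc⟩ := AddSubgroup.card_dvd_of_le hle
  rw [hc, mul_comm 2]
  rw [hc] at hlt
  exact Nat.mul_le_mul_left _ (one_lt_of_lt_mul_left₀ (Nat.zero_le _) hlt)

theorem exists_closure_eq_top_two_pow_card_le :
    ∃ T : Finset G, AddSubgroup.closure (T : Set G) = ⊤ ∧ 2 ^ T.card ≤ Nat.card G := by
  have := Fintype.ofFinite G
  obtain ⟨T, hT, hmax⟩ := Finset.exists_max_image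
    (Finset.univ.filter fun T : Finset G => 2 ^ T.card ≤ Nat.card (AddSubgroup.closure (T : Set G)))
    Finset.card ⟨∅, by simp⟩
  simp only [Finset.mem_filter, Finset.mem_univ, true_and] at hT hmax
  refine ⟨T, (AddSubgroup.eq_top_iff' _).2 fun g => ?_, hT.trans ?_⟩
  · by_contra hg
    have hgT : g ∉ T := fun h => hg (AddSubgroup.subset_closure h)
    have hcard : (insert g T).card = T.card + 1 := Finset.card_insert_of_notMem hgT
    have := hmax (insert g T) (by
      rw [hcard, pow_succ']
      exact (Nat.mul_le_mul_left 2 hT).trans (two_mul_card_closure_le hg))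
    omega
  · exact Nat.card_le_card_of_injective _ Subtype.val_injective

variable {G} in
theorem exists_list_sum_eq_nsmul {L : ℕ} (hL : Nat.card G < 2 ^ L) (x : G) (c : ℕ) :
    ∃ l : List G, (∀ z ∈ l, ∃ i < L, z = 2 ^ i • x) ∧ l.sum = c • x ∧ l.length ≤ L := by
  set c' := c % Nat.card G
  have hc' : c' < 2 ^ L := (Nat.mod_lt _ Nat.card_pos).trans hL
  have hbits : ∀ i ∈ c'.bitIndices, i < L := fun i hi =>
    (Nat.pow_lt_pow_iff_right one_lt_two).1 ((Nat.two_pow_le_of_mem_bitIndices hi).trans_lt hc')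
  refine ⟨c'.bitIndices.map fun i => 2 ^ i • x, ?_, ?_, ?_⟩
  · intro z hz
    obtain ⟨i, hi, rfl⟩ := List.mem_map.1 hz
    exact ⟨i, hbits i hi, rfl⟩
  · calc (c'.bitIndices.map fun i => 2 ^ i • x).sum
        = (c'.bitIndices.map fun i => 2 ^ i).sum • x := by
          induction c'.bitIndices with
          | nil => simp
          | cons a l ih => simp [ih, add_smul]
      _ = c • x := by rw [Nat.sum_map_two_pow_bitIndices, mod_natCard_nsmul]
  · rw [List.length_map, ← List.toFinset_card_of_nodup Nat.bitIndices_nodup,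
      ← Finset.card_range L]
    exact Finset.card_le_card fun i hi => Finset.mem_range.2 (hbits i (List.mem_toFinset.1 hi))

theorem exists_letters :
    ∃ S : Finset G, S.card ≤ (Nat.log 2 (Nat.card G) + 1) ^ 2 ∧
      ∀ y : G, ∃ l : List G, (∀ x ∈ l, x ∈ S) ∧ l.sum = y ∧
        l.length ≤ (Nat.log 2 (Nat.card G) + 1) ^ 2 := by
  classical
  obtain ⟨T, hT, hTcard⟩ := exists_closure_eq_top_two_pow_card_le G
  set L := Nat.log 2 (Nat.card G) + 1
  have hTL : T.card * L ≤ L ^ 2 := by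
    rw [sq]
    exact Nat.mul_le_mul_right L ((Nat.le_log_of_pow_le one_lt_two hTcard).trans (Nat.le_succ _))
  let S : Finset G := (T ×ˢ Finset.range L).image fun z => 2 ^ z.2 • z.1
  refine ⟨S, ?_, fun y => ?_⟩
  · refine Finset.card_image_le.trans ?_
    rwa [Finset.card_product, Finset.card_range]
  · have hy : y ∈ AddSubmonoid.closure (T : Set G) := by
      rw [← AddSubgroup.closure_toAddSubmonoid_of_finite, hT]
      trivial
    obtain ⟨c, -, rfl⟩ := AddSubmonoid.mem_closure_finset.1 hy
    obtain ⟨l, hlS, hlsum, hlL⟩ := exists_list_sum_eq_sum (S := S) (T := T) (L := L)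
      (f := fun x => c x • x) fun x hx => by
        obtain ⟨l, hl, hlsum, hlL⟩ :=
          exists_list_sum_eq_nsmul (Nat.lt_pow_succ_log_self one_lt_two _) x (c x)
        refine ⟨l, fun z hz => ?_, hlsum, hlL⟩
        obtain ⟨i, hi, rfl⟩ := hl z hz
        exact Finset.mem_image.2 ⟨(x, i), Finset.mk_mem_product hx (Finset.mem_range.2 hi), rfl⟩
    exact ⟨l, hlS, hlsum, hlL.trans hTL⟩

end Letters

/-! ### Pairs and quadruples in random sets -/

section Counts

variable {β κ : Type*} [DecidableEq β] {S : Finset β} {q : β → ℝ} {K : Finset κ} {d : ℕ} {t : ℝ}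

theorem abs_card_filter_sub_card_filter_le {κ : Type*} (K : Finset κ) (P Q : κ → Prop)
    [DecidablePred P] [DecidablePred Q] :
    |((K.filter P).card : ℝ) - (K.filter Q).card| ≤ (K.filter fun k => ¬(P k ↔ Q k)).card := by
  have hP : ((K.filter P).card : ℝ) ≤
      (K.filter Q).card + (K.filter fun k => ¬(P k ↔ Q k)).card := by
    norm_cast
    refine (Finset.card_le_card fun k hk => ?_).trans (Finset.card_union_le _ _)
    simp only [Finset.mem_filter, Finset.mem_union] at hk ⊢
    tauto
  have hQ : ((K.filter Q).card : ℝ) ≤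
      (K.filter P).card + (K.filter fun k => ¬(P k ↔ Q k)).card := by
    norm_cast
    refine (Finset.card_le_card fun k hk => ?_).trans (Finset.card_union_le _ _)
    simp only [Finset.mem_filter, Finset.mem_union] at hk ⊢
    tauto
  rw [abs_sub_le_iff]
  constructor <;> linarith

theorem abs_card_filter_subset_sub_le {pts : κ → Finset β}
    (hdeg : ∀ x, (K.filter fun k => x ∈ pts k).card ≤ d) (X R : Finset β) :
    |((K.filter fun k => pts k ⊆ X).card : ℝ) - (K.filter fun k => pts k ⊆ R).card| ≤
      d * (symmDiff X R).card := by
  refine (abs_card_filter_sub_card_filter_le _ _ _).trans ?_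
  norm_cast
  calc _ ≤ ((symmDiff X R).biUnion fun x => K.filter fun k => x ∈ pts k).card := by
        refine Finset.card_le_card fun k hk => ?_
        obtain ⟨hkK, hk⟩ := Finset.mem_filter.1 hk
        by_contra hnot
        simp only [Finset.mem_biUnion, Finset.mem_filter, not_exists, not_and,
          Finset.mem_symmDiff] at hnot
        exact hk (forall₂_congr fun x hx => by have := fun h => hnot x h hkK hx; tauto)
    _ ≤ (symmDiff X R).card * d := Finset.card_biUnion_le_card_mul _ _ _ fun x _ => hdeg x
    _ = d * (symmDiff X R).card := mul_comm _ _

theorem bernoulliProb_card_filter_tail_le (hq : ∀ i ∈ S, 0 ≤ q i ∧ q i ≤ 1)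
    (ev : κ → Finset β → Prop) [∀ k A, Decidable (ev k A)] (hd : 0 < d) (hS : S.Nonempty)
    (ht : 0 ≤ t) (htS : t ≤ S.card)
    (hinf : ∀ i ∈ S, (K.filter fun k => ∃ A, ¬(ev k (insert i A) ↔ ev k A)).card ≤ d) :
    bernoulliProb S q (fun A =>
        t ≤ |((K.filter fun k => ev k A).card : ℝ) - ∑ k ∈ K, bernoulliProb S q (ev k)|) ≤
      2 * Real.exp (-(t ^ 2 / (4 * (d ^ 2 * S.card)))) := by
  have hmean : ∑ k ∈ K, bernoulliProb S q (ev k) =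
      bernoulliExp S q fun A => ((K.filter fun k => ev k A).card : ℝ) := by
    simp_rw [Finset.card_filter, Nat.cast_sum, Nat.cast_ite, Nat.cast_one, Nat.cast_zero,
      bernoulliExp_sum, bernoulliExp_ite]
  have hd1 : (1 : ℝ) ≤ d := by exact_mod_cast hd
  have hScard : (0 : ℝ) < S.card := by exact_mod_cast hS.card_pos
  rw [hmean]
  refine bernoulliProb_tail_le hq (mul_pos (by positivity) hScard) ht (c := fun _ => (d : ℝ))
    (fun _ _ => ?_) (fun i hi A _ _ => ?_) ?_
  · calc t * d ≤ S.card * (d * d) := mul_le_mul htS (le_mul_of_one_le_left (by positivity) hd1)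
          (by positivity) (by positivity)
      _ ≤ 2 * (d ^ 2 * S.card) := by nlinarith
  · refine (abs_card_filter_sub_card_filter_le K _ _).trans (Nat.cast_le.2 ?_)
    refine (Finset.card_le_card ?_).trans (hinf i hi)
    exact Finset.monotone_filter_right K fun k _ hk => ⟨A, hk⟩
  · calc ∑ i ∈ S, q i * (d : ℝ) ^ 2 ≤ ∑ _i ∈ S, (d : ℝ) ^ 2 :=
        Finset.sum_le_sum fun i hi => mul_le_of_le_one_left (by positivity) (hq i hi).2
      _ = d ^ 2 * S.card := by rw [Finset.sum_const, nsmul_eq_mul, mul_comm]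

theorem bernoulliProb_card_filter_subset_tail_le {p : ℝ} {m : ℕ} (hp0 : 0 ≤ p) (hp1 : p ≤ 1)
    {pts : κ → Finset β} (hpts : ∀ k ∈ K, pts k ⊆ S ∧ (pts k).card = m)
    (hd : 0 < d) (hdeg : ∀ x, (K.filter fun k => x ∈ pts k).card ≤ d) (hS : S.Nonempty)
    (ht : 0 ≤ t) (htS : t ≤ S.card) :
    bernoulliProb S (fun _ => p) (fun A =>
        t ≤ |((K.filter fun k => pts k ⊆ A).card : ℝ) - p ^ m * K.card|) ≤
      2 * Real.exp (-(t ^ 2 / (4 * (d ^ 2 * S.card)))) := by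
  have hmean : ∑ k ∈ K, bernoulliProb S (fun _ => p) (pts k ⊆ ·) = p ^ m * K.card := by
    rw [mul_comm, ← nsmul_eq_mul, ← Finset.sum_const]
    refine Finset.sum_congr rfl fun k hk => ?_
    rw [bernoulliProb_subset (hpts k hk).1, Finset.prod_const, (hpts k hk).2]
  rw [← hmean]
  refine bernoulliProb_card_filter_tail_le (fun _ _ => ⟨hp0, hp1⟩) (fun k A => pts k ⊆ A) hd hS ht
    htS fun i _ => (Finset.card_le_card ?_).trans (hdeg i)
  refine Finset.monotone_filter_right K fun k _ ⟨A, hA⟩ => ?_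
  by_contra hi
  exact hA (Finset.subset_insert_iff_of_notMem hi)

/-- The colour of `x` when the subsets of `Fin r` serve as colours: a uniformly random
`A ⊆ X × Fin r` gives the points of `X` independent uniform colours. -/
def bitColour {r : ℕ} (A : Finset (β × Fin r)) (x : β) : Finset (Fin r) :=
  Finset.univ.filter fun i => (x, i) ∈ A

variable {r : ℕ}

theorem mem_bitColour {A : Finset (β × Fin r)} {x : β} {i : Fin r} :
    i ∈ bitColour A x ↔ (x, i) ∈ A := by
  simp only [bitColour, Finset.mem_filter, Finset.mem_univ, true_and]

theorem bitColour_insert_of_ne {A : Finset (β × Fin r)} {x y : β} (hxy : x ≠ y) (i : Fin r) :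
    bitColour (insert (y, i) A) x = bitColour A x := by
  ext j
  simp [mem_bitColour, hxy]

theorem forall_bitColour_eq_iff {A : Finset (β × Fin r)} {D : Finset β}
    {γ : β → Finset (Fin r)} :
    (∀ x ∈ D, bitColour A x = γ x) ↔
      ((D ×ˢ Finset.univ).filter fun z => z.2 ∈ γ z.1) ⊆ A ∧
        Disjoint ((D ×ˢ Finset.univ).filter fun z => z.2 ∉ γ z.1) A := by
  simp only [Finset.subset_iff, Finset.disjoint_left, Finset.mem_filter, Finset.mem_product,
    Finset.mem_univ, and_true, Prod.forall, Finset.ext_iff, mem_bitColour, and_imp]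
  refine ⟨fun h => ⟨fun x i hx hi => (h x hx i).2 hi, fun x i hx hi hA => hi ((h x hx i).1 hA)⟩,
    fun h x hx i => ⟨fun hA => ?_, h.1 x i hx⟩⟩
  by_contra hi
  exact h.2 x i hx hi hA

theorem bernoulliProb_bitColour_eq {X D : Finset β} (hD : D ⊆ X) (γ : β → Finset (Fin r)) :
    bernoulliProb (X ×ˢ Finset.univ) (fun _ => 1 / 2) (fun A => ∀ x ∈ D, bitColour A x = γ x) =
      1 / ((2 : ℝ) ^ r) ^ D.card := by
  have hDX : D ×ˢ (Finset.univ : Finset (Fin r)) ⊆ X ×ˢ Finset.univ :=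
    Finset.product_subset_product_left hD
  simp_rw [forall_bitColour_eq_iff]
  rw [bernoulliProb_subset_and_disjoint ((Finset.filter_subset _ _).trans hDX)
    ((Finset.filter_subset _ _).trans hDX) (Finset.disjoint_filter_filter_not _ _ _),
    Finset.prod_const, Finset.prod_const, sub_half, ← pow_add,
    Finset.card_filter_add_card_filter_not, Finset.card_product, Finset.card_univ,
    Fintype.card_fin, one_div_pow, ← pow_mul, mul_comm]

theorem bernoulliProb_card_filter_bitColour_tail_le {X : Finset β} {m : ℕ} {pts : κ → Finset β}
    (γ : κ → β → Finset (Fin r)) (hpts : ∀ k ∈ K, pts k ⊆ X ∧ (pts k).card = m)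
    (hd : 0 < d) (hdeg : ∀ x, (K.filter fun k => x ∈ pts k).card ≤ d) (hX : X.Nonempty)
    (hr : 0 < r) (ht : 0 ≤ t) (htX : t ≤ X.card) :
    bernoulliProb (X ×ˢ Finset.univ) (fun _ => 1 / 2) (fun A =>
        t ≤ |((K.filter fun k => ∀ x ∈ pts k, bitColour A x = γ k x).card : ℝ) -
          K.card / ((2 : ℝ) ^ r) ^ m|) ≤
      2 * Real.exp (-(t ^ 2 / (4 * (d ^ 2 * (X.card * r : ℕ))))) := by
  have hmean : ∑ k ∈ K, bernoulliProb (X ×ˢ Finset.univ) (fun _ => 1 / 2)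
      (fun A => ∀ x ∈ pts k, bitColour A x = γ k x) = K.card / ((2 : ℝ) ^ r) ^ m := by
    rw [div_eq_mul_one_div (K.card : ℝ), ← nsmul_eq_mul, ← Finset.sum_const]
    refine Finset.sum_congr rfl fun k hk => ?_
    rw [bernoulliProb_bitColour_eq (hpts k hk).1, (hpts k hk).2]
  have hcard : (X ×ˢ (Finset.univ : Finset (Fin r))).card = X.card * r := by
    rw [Finset.card_product, Finset.card_univ, Fintype.card_fin]
  have hr' : (Finset.univ : Finset (Fin r)).Nonempty := ⟨⟨0, hr⟩, Finset.mem_univ _⟩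
  rw [← hmean, ← hcard]
  refine bernoulliProb_card_filter_tail_le (fun _ _ => by norm_num)
    (fun k A => ∀ x ∈ pts k, bitColour A x = γ k x) hd (hX.product hr') ht ?_ ?_
  · rw [hcard]
    exact htX.trans (by exact_mod_cast Nat.le_mul_of_pos_right _ hr)
  · rintro ⟨y, i⟩ _
    refine (Finset.card_le_card ?_).trans (hdeg y)
    refine Finset.monotone_filter_right K fun k _ ⟨A, hA⟩ => ?_
    by_contra hy
    refine hA (forall₂_congr fun x hx => ?_)
    rw [bitColour_insert_of_ne (ne_of_mem_of_not_mem hx hy)]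

end Counts

section Typical

variable {G : Type*} [AddCommGroup G] [DecidableEq G]

/-- The configuration `a`, `t₁ - a`, `h - a`, `t₂ - (h - a)`: two pairs with sums `t₁` and `t₂`
whose first elements `a` and `h - a` have sum `h`. -/
def quadPoints (t₁ t₂ h a : G) : Finset G :=
  {a, t₁ - a, h - a, t₂ - (h - a)}

/-- The elements `a` for which `quadPoints t₁ t₂ h a` consists of four distinct elements of `X`. -/
def quadSet (X : Finset G) (t₁ t₂ h : G) : Finset G :=
  X.filter fun a => quadPoints t₁ t₂ h a ⊆ X ∧ (quadPoints t₁ t₂ h a).card = 4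

theorem mem_quadSet {X : Finset G} {t₁ t₂ h a : G} :
    a ∈ quadSet X t₁ t₂ h ↔ quadPoints t₁ t₂ h a ⊆ X ∧ (quadPoints t₁ t₂ h a).card = 4 := by
  refine Finset.mem_filter.trans (and_iff_right_of_imp fun ha => ha.1 ?_)
  exact Finset.mem_insert_self _ _

/-- `X` has, up to an error `E`, the size of a `p`-random set, and contains as many pairs and
quadruples of each type as a `p`-random set does on average. -/
structure Typical [Fintype G] (X : Finset G) (p E : ℝ) : Prop where
  card : |(X.card : ℝ) - p * Fintype.card G| ≤ E
  pair : ∀ t, |((pairSet X t).card : ℝ) - p ^ 2 * (pairSet Finset.univ t).card| ≤ E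
  quad : ∀ t₁ t₂ h,
    |((quadSet X t₁ t₂ h).card : ℝ) - p ^ 4 * (quadSet Finset.univ t₁ t₂ h).card| ≤ E

theorem card_filter_mem_pair_le (K : Finset G) (t x : G) :
    (K.filter fun a => x ∈ ({a, t - a} : Finset G)).card ≤ 2 := by
  refine (Finset.card_le_card fun a ha => ?_).trans (Finset.card_le_two (a := x) (b := t - x))
  simp only [Finset.mem_filter, Finset.mem_insert, Finset.mem_singleton] at ha ⊢
  rcases ha.2 with rfl | rfl
  · exact Or.inl rfl
  · exact Or.inr (sub_sub_cancel t a).symm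

theorem card_filter_mem_quadPoints_le (K : Finset G) (t₁ t₂ h x : G) :
    (K.filter fun a => x ∈ quadPoints t₁ t₂ h a).card ≤ 4 := by
  refine (Finset.card_le_card fun a ha => ?_).trans
    (Finset.card_le_four (a := x) (b := t₁ - x) (c := h - x) (d := h - (t₂ - x)))
  simp only [quadPoints, Finset.mem_filter, Finset.mem_insert, Finset.mem_singleton] at ha ⊢
  rcases ha.2 with rfl | rfl | rfl | rfl <;> simp

theorem pairSet_eq_filter [Fintype G] (X : Finset G) (t : G) :
    pairSet X t = (pairSet Finset.univ t).filter fun a => ({a, t - a} : Finset G) ⊆ X := by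
  ext a
  simp only [pairSet, Finset.mem_filter, Finset.mem_univ, true_and, Finset.insert_subset_iff,
    Finset.singleton_subset_iff]
  tauto

theorem quadSet_eq_filter [Fintype G] (X : Finset G) (t₁ t₂ h : G) :
    quadSet X t₁ t₂ h = (quadSet Finset.univ t₁ t₂ h).filter (quadPoints t₁ t₂ h · ⊆ X) := by
  ext a
  simp only [mem_quadSet, Finset.mem_filter, Finset.subset_univ, true_and, and_comm]

theorem Typical.of_symmDiff [Fintype G] {R X : Finset G} {p E E' : ℝ} (hR : Typical R p E)
    (h : E + 4 * (symmDiff X R).card ≤ E') : Typical X p E' := by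
  have transfer {K : Finset G} {pts : G → Finset G} {μ : ℝ}
      (hdeg : ∀ x, (K.filter fun a => x ∈ pts a).card ≤ 4)
      (hK : |((K.filter fun a => pts a ⊆ R).card : ℝ) - μ| ≤ E) :
      |((K.filter fun a => pts a ⊆ X).card : ℝ) - μ| ≤ E' := by
    have hXR := abs_card_filter_subset_sub_le hdeg X R
    exact (abs_sub_le _ _ _).trans ((add_le_add hXR hK).trans (by push_cast; linarith))
  refine ⟨?_, fun t => ?_, fun t₁ t₂ s => ?_⟩
  · have := transfer (K := Finset.univ) (pts := fun a => {a}) (fun x => by simp [Finset.filter_eq])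
      (by simpa using hR.card)
    simpa using this
  · rw [pairSet_eq_filter]
    refine transfer (fun x => (card_filter_mem_pair_le _ t x).trans (by norm_num)) ?_
    rw [← pairSet_eq_filter]
    exact hR.pair t
  · rw [quadSet_eq_filter]
    refine transfer (card_filter_mem_quadPoints_le _ t₁ t₂ s) ?_
    rw [← quadSet_eq_filter]
    exact hR.quad t₁ t₂ s

theorem bernoulliProb_not_typical_le_add_sum [Fintype G] {S : Finset G} {q : G → ℝ}
    (hq : ∀ i ∈ S, 0 ≤ q i ∧ q i ≤ 1) (p E : ℝ) :
    bernoulliProb S q (fun R => ¬ Typical R p E) ≤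
      bernoulliProb S q (fun R => E ≤ |(R.card : ℝ) - p * Fintype.card G|) +
        (∑ t : G, bernoulliProb S q (fun R =>
            E ≤ |((pairSet R t).card : ℝ) - p ^ 2 * (pairSet Finset.univ t).card|) +
          ∑ w : G × G × G, bernoulliProb S q (fun R => E ≤ |((quadSet R w.1 w.2.1 w.2.2).card : ℝ) -
            p ^ 4 * (quadSet Finset.univ w.1 w.2.1 w.2.2).card|)) := by
  refine le_trans (bernoulliProb_mono hq fun R _ hR => ?_) <|
    (bernoulliProb_or_le hq _ _).trans <| add_le_add le_rfl <|
    (bernoulliProb_or_le hq _ _).trans <| add_le_add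
      (bernoulliProb_exists_le hq Finset.univ _) (bernoulliProb_exists_le hq Finset.univ _)
  contrapose! hR
  exact ⟨hR.1.le, fun t => (hR.2.1 t (Finset.mem_univ t)).le,
    fun t₁ t₂ h => (hR.2.2 (t₁, t₂, h) (Finset.mem_univ _)).le⟩

theorem bernoulliProb_not_typical_le [Fintype G] {p E : ℝ} (hp0 : 0 ≤ p) (hp1 : p ≤ 1)
    (hE : 0 ≤ E) (hEn : E ≤ Fintype.card G) :
    bernoulliProb (Finset.univ : Finset G) (fun _ => p) (fun R => ¬ Typical R p E) ≤
      6 * (Fintype.card G : ℝ) ^ 3 * Real.exp (-(E ^ 2 / (64 * Fintype.card G))) := by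
  set n : ℝ := (Fintype.card G : ℝ)
  set η : ℝ := 2 * Real.exp (-(E ^ 2 / (64 * n))) with hη
  have tail {K : Finset G} {pts : G → Finset G} {m : ℕ} (hcard : ∀ a ∈ K, (pts a).card = m)
      (hdeg : ∀ x, (K.filter fun a => x ∈ pts a).card ≤ 4) :
      bernoulliProb Finset.univ (fun _ => p) (fun R =>
        E ≤ |((K.filter fun a => pts a ⊆ R).card : ℝ) - p ^ m * K.card|) ≤ η := by
    have := bernoulliProb_card_filter_subset_tail_le hp0 hp1
      (fun a ha => ⟨Finset.subset_univ (pts a), hcard a ha⟩) (by norm_num) hdeg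
      Finset.univ_nonempty hE hEn
    rwa [Finset.card_univ, ← mul_assoc, show (4 : ℝ) * (4 : ℕ) ^ 2 = 64 by norm_num] at this
  have hcard := tail (K := Finset.univ) (pts := fun a => {a}) (m := 1) (by simp)
    (fun x => by simp [Finset.filter_eq])
  have hpair (t : G) := tail (K := pairSet Finset.univ t) (pts := fun a => {a, t - a}) (m := 2)
    (fun a ha => Finset.card_pair (mem_pairSet.1 ha).2.2)
    (fun x => (card_filter_mem_pair_le _ t x).trans (by norm_num))
  have hquad (w : G × G × G) := tail (K := quadSet Finset.univ w.1 w.2.1 w.2.2)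
    (fun a ha => (mem_quadSet.1 ha).2) (card_filter_mem_quadPoints_le _ w.1 w.2.1 w.2.2)
  simp only [Finset.singleton_subset_iff, Finset.filter_univ_mem, pow_one, Finset.card_univ,
    ← pairSet_eq_filter, ← quadSet_eq_filter] at hcard hpair hquad
  have hn : 1 ≤ n := Nat.one_le_cast.2 Fintype.card_pos
  calc _ ≤ η + (∑ _t : G, η + ∑ _w : G × G × G, η) :=
        (bernoulliProb_not_typical_le_add_sum (fun _ _ => ⟨hp0, hp1⟩) p E).trans <|
          add_le_add hcard <| add_le_add (Finset.sum_le_sum fun t _ => hpair t)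
            (Finset.sum_le_sum fun w _ => hquad w)
    _ = (1 + n + n ^ 3) * η := by
        simp only [Finset.sum_const, Finset.card_univ, Fintype.card_prod, nsmul_eq_mul]
        push_cast
        ring
    _ ≤ (3 * n ^ 3) * η := by
        gcongr
        linarith [one_le_pow₀ hn (n := 3), le_self_pow₀ hn (by norm_num : 3 ≠ 0)]
    _ = _ := by rw [hη]; ring

/-- In the colouring `col` of `G` by the `2 ^ r` subsets of `Fin r`, every colour pattern occurs
on about the same number of pairs and of quadruples of `X` of each type, up to an error `E`. -/
structure EquiColoured {r : ℕ} (X : Finset G) (col : G → Finset (Fin r)) (E : ℝ) : Prop where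
  pair : ∀ t c₁ c₂, |(((pairSet X t).filter fun a => col a = c₁ ∧ col (t - a) = c₂).card : ℝ) -
    (pairSet X t).card / ((2 : ℝ) ^ r) ^ 2| ≤ E
  quad : ∀ t₁ t₂ h c₁ c₂ c₃ c₄, |(((quadSet X t₁ t₂ h).filter fun a => col a = c₁ ∧
    col (t₁ - a) = c₂ ∧ col (h - a) = c₃ ∧ col (t₂ - (h - a)) = c₄).card : ℝ) -
    (quadSet X t₁ t₂ h).card / ((2 : ℝ) ^ r) ^ 4| ≤ E

section Colouring

variable {X : Finset G} {r : ℕ} {E : ℝ}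

theorem bernoulliProb_bitColour_pair_tail_le (hX : X.Nonempty) (hr : 0 < r) (hE : 0 ≤ E)
    (hEX : E ≤ X.card) (t : G) (c₁ c₂ : Finset (Fin r)) :
    bernoulliProb (X ×ˢ Finset.univ) (fun _ => 1 / 2) (fun A =>
        E ≤ |(((pairSet X t).filter fun a =>
          bitColour A a = c₁ ∧ bitColour A (t - a) = c₂).card : ℝ) -
            (pairSet X t).card / ((2 : ℝ) ^ r) ^ 2|) ≤
      2 * Real.exp (-(E ^ 2 / (64 * (X.card * r : ℕ)))) := by
  have hpts : ∀ a ∈ pairSet X t, {a, t - a} ⊆ X ∧ ({a, t - a} : Finset G).card = 2 := by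
    intro a ha
    obtain ⟨haX, hbX, hne⟩ := mem_pairSet.1 ha
    exact ⟨Finset.insert_subset haX (Finset.singleton_subset_iff.2 hbX), Finset.card_pair hne⟩
  have htail := bernoulliProb_card_filter_bitColour_tail_le
    (fun a x => if x = a then c₁ else c₂) hpts (by norm_num : 0 < 4)
    (fun x => (card_filter_mem_pair_le _ t x).trans (by norm_num)) hX hr hE hEX
  rw [← mul_assoc, show (4 : ℝ) * (4 : ℕ) ^ 2 = 64 by norm_num] at htail
  convert htail using 7 with A
  refine congrArg _ (Finset.filter_congr fun a ha => ?_)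
  have hne : t - a ≠ a := (mem_pairSet.1 ha).2.2.symm
  simp [hne]

theorem bernoulliProb_bitColour_quad_tail_le (hX : X.Nonempty) (hr : 0 < r) (hE : 0 ≤ E)
    (hEX : E ≤ X.card) (t₁ t₂ h : G) (c₁ c₂ c₃ c₄ : Finset (Fin r)) :
    bernoulliProb (X ×ˢ Finset.univ) (fun _ => 1 / 2) (fun A =>
        E ≤ |(((quadSet X t₁ t₂ h).filter fun a => bitColour A a = c₁ ∧
          bitColour A (t₁ - a) = c₂ ∧ bitColour A (h - a) = c₃ ∧
            bitColour A (t₂ - (h - a)) = c₄).card : ℝ) -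
              (quadSet X t₁ t₂ h).card / ((2 : ℝ) ^ r) ^ 4|) ≤
      2 * Real.exp (-(E ^ 2 / (64 * (X.card * r : ℕ)))) := by
  have htail := bernoulliProb_card_filter_bitColour_tail_le
    (fun a x => if x = a then c₁ else if x = t₁ - a then c₂ else if x = h - a then c₃ else c₄)
    (fun a ha => mem_quadSet.1 ha) (by norm_num)
    (card_filter_mem_quadPoints_le (quadSet X t₁ t₂ h) t₁ t₂ h) hX hr hE hEX
  rw [← mul_assoc, show (4 : ℝ) * (4 : ℕ) ^ 2 = 64 by norm_num] at htail
  convert htail using 7 with A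
  refine congrArg _ (Finset.filter_congr fun a ha => ?_)
  obtain ⟨⟨hab, hac, had⟩, ⟨hbc, hbd⟩, hcd⟩ := card_insert_three_eq_four.1 (mem_quadSet.1 ha).2
  simp [quadPoints, hab.symm, hac.symm, had.symm, hbc.symm, hbd.symm, hcd.symm]

theorem bernoulliProb_not_equiColoured_le [Fintype G] (hX : X.Nonempty) (hr : 0 < r) (hE : 0 ≤ E)
    (hEX : E ≤ X.card) :
    bernoulliProb (X ×ˢ (Finset.univ : Finset (Fin r))) (fun _ => 1 / 2)
        (fun A => ¬ EquiColoured X (bitColour A) E) ≤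
      4 * ((Fintype.card G : ℝ) ^ 3 * ((2 : ℝ) ^ r) ^ 4) *
        Real.exp (-(E ^ 2 / (64 * (X.card * r : ℕ)))) := by
  have hn : (1 : ℝ) ≤ Fintype.card G := Nat.one_le_cast.2 Fintype.card_pos
  have hq : ∀ i ∈ X ×ˢ (Finset.univ : Finset (Fin r)), (0 : ℝ) ≤ 1 / 2 ∧ (1 : ℝ) / 2 ≤ 1 :=
    fun _ _ => by norm_num
  have hpair (w : G × Finset (Fin r) × Finset (Fin r)) :=
    bernoulliProb_bitColour_pair_tail_le hX hr hE hEX w.1 w.2.1 w.2.2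
  have hquad (w : (G × G × G) × (Finset (Fin r) × Finset (Fin r)) ×
      Finset (Fin r) × Finset (Fin r)) :=
    bernoulliProb_bitColour_quad_tail_le hX hr hE hEX w.1.1 w.1.2.1 w.1.2.2
      w.2.1.1 w.2.1.2 w.2.2.1 w.2.2.2
  have hunion := (bernoulliProb_or_le hq _ _).trans <| add_le_add
    ((bernoulliProb_exists_le hq Finset.univ _).trans (Finset.sum_le_sum fun w _ => hpair w))
    ((bernoulliProb_exists_le hq Finset.univ _).trans (Finset.sum_le_sum fun w _ => hquad w))
  refine ((bernoulliProb_mono hq fun A _ hA => ?_).trans hunion).trans ?_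
  · contrapose! hA
    exact ⟨fun t c₁ c₂ => (hA.1 (t, c₁, c₂) (Finset.mem_univ _)).le, fun t₁ t₂ h c₁ c₂ c₃ c₄ =>
      (hA.2 ((t₁, t₂, h), (c₁, c₂), c₃, c₄) (Finset.mem_univ _)).le⟩
  · calc _ = (2 * ((Fintype.card G : ℝ) * ((2 : ℝ) ^ r) ^ 2) +
            2 * ((Fintype.card G : ℝ) ^ 3 * ((2 : ℝ) ^ r) ^ 4)) *
              Real.exp (-(E ^ 2 / (64 * (X.card * r : ℕ)))) := by
          simp only [Finset.sum_const, Finset.card_univ, Fintype.card_prod, Fintype.card_finset,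
            Fintype.card_fin, nsmul_eq_mul]
          push_cast
          ring
      _ ≤ (2 * ((Fintype.card G : ℝ) ^ 3 * ((2 : ℝ) ^ r) ^ 4) +
            2 * ((Fintype.card G : ℝ) ^ 3 * ((2 : ℝ) ^ r) ^ 4)) *
              Real.exp (-(E ^ 2 / (64 * (X.card * r : ℕ)))) := by
          gcongr
          · exact le_self_pow₀ hn (by norm_num)
          · exact one_le_pow₀ one_le_two
          · norm_num
      _ = _ := by ring

theorem exists_equiColoured [Fintype G] (hX : X.Nonempty) (hr : 0 < r) (hE : 0 ≤ E)
    (hEX : E ≤ X.card)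
    (hprob : 4 * ((Fintype.card G : ℝ) ^ 3 * ((2 : ℝ) ^ r) ^ 4) *
      Real.exp (-(E ^ 2 / (64 * (X.card * r : ℕ)))) < 1) :
    ∃ col : G → Finset (Fin r), EquiColoured X col E := by
  obtain ⟨A, -, hA⟩ := exists_of_bernoulliProb_not_lt_one (fun _ _ => by norm_num)
    ((bernoulliProb_not_equiColoured_le hX hr hE hEX).trans_lt hprob)
  exact ⟨bitColour A, hA⟩

end Colouring

end Typical

/-! ### Construction of the reserve -/

section Families

theorem card_filter_mem_le_of_injOn {κ β : Type*} [DecidableEq β] {K : Finset κ} {f : κ → β}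
    (hf : Set.InjOn f K) (F : Finset β) : (K.filter fun a => f a ∈ F).card ≤ F.card :=
  Finset.card_le_card_of_injOn f (fun _ ha => (Finset.mem_filter.1 ha).2)
    fun _ ha _ hb h => hf (Finset.mem_filter.1 ha).1 (Finset.mem_filter.1 hb).1 h

theorem exists_avoiding_of_injOn {κ β₁ β₂ β₃ : Type*} {K : Finset κ} {f₁ : κ → β₁} {f₂ : κ → β₂}
    {f₃ : κ → β₃} (h₁ : Set.InjOn f₁ K) (h₂ : Set.InjOn f₂ K) (h₃ : Set.InjOn f₃ K)
    {F₁ : Finset β₁} {F₂ : Finset β₂} {F₃ : Finset β₃}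
    (h : F₁.card + F₂.card + F₃.card < K.card) : ∃ a ∈ K, f₁ a ∉ F₁ ∧ f₂ a ∉ F₂ ∧ f₃ a ∉ F₃ := by
  by_contra! hcon
  have hcover : K ⊆ (K.filter fun a => f₁ a ∈ F₁) ∪ (K.filter fun a => f₂ a ∈ F₂) ∪
      (K.filter fun a => f₃ a ∈ F₃) := by
    intro a ha
    have := hcon a ha
    simp only [Finset.mem_union, Finset.mem_filter, ha, true_and]
    tauto
  have hcard := (Finset.card_le_card hcover).trans
    ((Finset.card_union_le _ _).trans (Nat.add_le_add_right (Finset.card_union_le _ _) _))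
  have := card_filter_mem_le_of_injOn h₁ F₁
  have := card_filter_mem_le_of_injOn h₂ F₂
  have := card_filter_mem_le_of_injOn h₃ F₃
  omega

variable {G : Type*} [DecidableEq G] {S : Finset G} {P Q : Option G → Finset G}

/-- The index set of a reserve that consists, for each class `c` in `S ∪ {none}`, of one quadruple
for every first point in `P c`. -/
def familyIndex (S : Finset G) (P : Option G → Finset G) : Finset (Option G × G) :=
  (Finset.insertNone S).biUnion fun c => (P c).image fun a => (c, a)

theorem mem_familyIndex {i : Option G × G} :
    i ∈ familyIndex S P ↔ i.1 ∈ Finset.insertNone S ∧ i.2 ∈ P i.1 := by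
  obtain ⟨c, a⟩ := i
  simp only [familyIndex, Finset.mem_biUnion, Finset.mem_image, Prod.mk.injEq]
  constructor
  · rintro ⟨d, hd, b, hb, rfl, rfl⟩
    exact ⟨hd, hb⟩
  · exact fun h => ⟨c, h.1, a, h.2, rfl, rfl⟩

theorem card_familyIndex_le {m : ℕ} (hP : ∀ c ∈ Finset.insertNone S, (P c).card = m) :
    (familyIndex S P).card ≤ (S.card + 1) * m := by
  rw [familyIndex, ← Finset.card_insertNone]
  exact Finset.card_biUnion_le_card_mul _ _ _ fun c hc =>
    Finset.card_image_le.trans (hP c hc).le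

variable [AddCommGroup G] {Bad : Finset G} {B : ℕ} {φ : Option G → G → G}

theorem exists_fresh_of_bijOn {a b α : G} (hφ : Set.BijOn (φ none) (P none) (Q none))
    (hcard : B + 2 * Bad.card < (P none).card) {F : Finset (Option G × G)} (hF : F.card ≤ B) :
    ∃ i ∈ familyIndex S P, i ∉ F ∧ α - a - i.2 ∉ Bad ∧ α - b - φ i.1 i.2 ∉ Bad := by
  obtain ⟨c, hc, hfresh, hp, he⟩ := exists_avoiding_of_injOn (K := P none)
    (f₁ := fun c => ((none : Option G), c)) (f₂ := fun c => α - a - c)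
    (f₃ := fun c => α - b - φ none c) (F₁ := F) (F₂ := Bad) (F₃ := Bad)
    (fun _ _ _ _ huv => (Prod.mk.inj huv).2) (fun _ _ _ _ huv => sub_right_injective huv)
    (fun u hu v hv huv => hφ.injOn hu hv (sub_right_injective huv)) (by omega)
  exact ⟨(none, c), mem_familyIndex.2 ⟨Finset.none_mem_insertNone, hc⟩, hfresh, hp, he⟩

theorem exists_rich_fst_of_bijOn {x h t : G} (hx : x ∈ S)
    (hφ : Set.BijOn (φ none) (P none) (Q none))
    (hcard : 2 * B + Bad.card < ((P (some x)).filter fun a => h - a ∈ Q none).card)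
    {F : Finset (Option G × G)} (hF : F.card ≤ B) :
    ∃ a, (some x, a) ∈ familyIndex S P ∧ (some x, a) ∉ F ∧
      ∃ b, (none, b) ∈ familyIndex S P ∧ (none, b) ∉ F ∧ a + φ none b = h ∧ t + a ∉ Bad := by
  have hsurj : ∀ a, h - a ∈ Q none → ∃ b ∈ P none, φ none b = h - a := fun a ha => hφ.surjOn ha
  choose! ψ hψP hψ using hsurj
  obtain ⟨a, ha, hfresh, hfresh', ht⟩ := exists_avoiding_of_injOn
    (K := (P (some x)).filter fun a => h - a ∈ Q none)
    (f₁ := fun a => (some x, a)) (f₂ := fun a => ((none : Option G), ψ a))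
    (f₃ := fun a => t + a) (F₁ := F) (F₂ := F) (F₃ := Bad)
    (fun _ _ _ _ huv => (Prod.mk.inj huv).2)
    (fun u hu v hv huv => by
      have hψuv := hψ u (Finset.mem_filter.1 hu).2
      rw [(Prod.mk.inj huv).2, hψ v (Finset.mem_filter.1 hv).2] at hψuv
      exact (sub_right_injective hψuv).symm)
    (fun _ _ _ _ huv => add_right_injective t huv) (by omega)
  obtain ⟨haP, haQ⟩ := Finset.mem_filter.1 ha
  exact ⟨a, mem_familyIndex.2 ⟨Finset.some_mem_insertNone.2 hx, haP⟩, hfresh, ψ a,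
    mem_familyIndex.2 ⟨Finset.none_mem_insertNone, hψP a haQ⟩, hfresh',
    by rw [hψ a haQ, add_sub_cancel], ht⟩

theorem exists_rich_snd_of_bijOn {x h t : G} (hx : x ∈ S)
    (hφ : Set.BijOn (φ (some x)) (P (some x)) (Q (some x)))
    (hcard : 2 * B + Bad.card < ((Q (some x)).filter fun a => h - a ∈ P none).card)
    {F : Finset (Option G × G)} (hF : F.card ≤ B) :
    ∃ a, (some x, a) ∈ familyIndex S P ∧ (some x, a) ∉ F ∧
      ∃ b, (none, b) ∈ familyIndex S P ∧ (none, b) ∉ F ∧ φ (some x) a + b = h ∧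
        t + φ (some x) a ∉ Bad := by
  have hsurj : ∀ a ∈ Q (some x), ∃ b ∈ P (some x), φ (some x) b = a := fun a ha => hφ.surjOn ha
  choose! ψ hψP hψ using hsurj
  obtain ⟨a, ha, hfresh, hfresh', ht⟩ := exists_avoiding_of_injOn
    (K := (Q (some x)).filter fun a => h - a ∈ P none)
    (f₁ := fun a => (some x, ψ a)) (f₂ := fun a => ((none : Option G), h - a))
    (f₃ := fun a => t + a) (F₁ := F) (F₂ := F) (F₃ := Bad)
    (fun u hu v hv huv => by
      rw [← hψ u (Finset.mem_filter.1 hu).1, (Prod.mk.inj huv).2, hψ v (Finset.mem_filter.1 hv).1])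
    (fun _ _ _ _ huv => sub_right_injective (Prod.mk.inj huv).2)
    (fun _ _ _ _ huv => add_right_injective t huv) (by omega)
  obtain ⟨haQ, haP⟩ := Finset.mem_filter.1 ha
  exact ⟨ψ a, mem_familyIndex.2 ⟨Finset.some_mem_insertNone.2 hx, hψP a haQ⟩, hfresh, h - a,
    mem_familyIndex.2 ⟨Finset.none_mem_insertNone, haP⟩, hfresh',
    by rw [hψ a haQ, add_sub_cancel], by rwa [hψ a haQ]⟩

theorem Reserve.of_families {α t₀ : G}
    (hφ : ∀ c ∈ Finset.insertNone S, Set.BijOn (φ c) (P c) (Q c))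
    (hfresh : B + 2 * Bad.card < (P none).card)
    (hP : ∀ x ∈ S, ∀ h ∉ Bad,
      2 * B + Bad.card < ((P (some x)).filter fun a => h - a ∈ Q none).card)
    (hQ : ∀ x ∈ S, ∀ h ∉ Bad,
      2 * B + Bad.card < ((Q (some x)).filter fun a => h - a ∈ P none).card) :
    Reserve α t₀ S Bad B (familyIndex S P) Prod.fst Prod.snd
      (fun i => t₀ + i.1.getD 0 - i.2) (fun i => φ i.1 i.2)
      (fun i => α - t₀ - i.1.getD 0 - φ i.1 i.2) where
  sum_p _ _ := add_sub_cancel _ _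
  sum_e _ _ := add_sub_cancel _ _
  fresh _ hF _ _ := exists_fresh_of_bijOn (hφ none Finset.none_mem_insertNone) hfresh hF
  rich_p F hF x hx h hh b := by
    obtain ⟨a, ha, haF, a', ha', haF', hsum, hbad⟩ := exists_rich_fst_of_bijOn
      (t := α - (t₀ + x) - b) hx (hφ none Finset.none_mem_insertNone) (hP x hx h hh) hF
    refine ⟨_, ha, _, ha', haF, haF', rfl, rfl, hsum, ?_⟩
    convert hbad using 2
    simp only [Option.getD_some]
    abel
  rich_e F hF x hx h hh b := by
    obtain ⟨a, ha, haF, a', ha', haF', hsum, hbad⟩ := exists_rich_snd_of_bijOn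
      (t := t₀ + x - b) hx (hφ _ (Finset.some_mem_insertNone.2 hx)) (hQ x hx h hh) hF
    refine ⟨_, ha, _, ha', haF, haF', rfl, rfl, hsum, ?_⟩
    convert hbad using 2
    simp only [Option.getD_some]
    abel

end Families

theorem reservePoints_eq_map_add {G ι : Type*} (p p' e e' : ι → G) (I : Finset ι) :
    reservePoints p p' e e' I = I.val.map p + I.val.map p' + I.val.map e + I.val.map e' := by
  have hmap : ∀ f : ι → G, ∑ i ∈ I, ({f i} : Multiset G) = I.val.map f := fun f => by
    have := Multiset.sum_map_singleton (I.val.map f)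
    rwa [Multiset.map_map] at this
  simp only [reservePoints, Finset.sum_add_distrib, hmap]

theorem mem_reservePoints {G ι : Type*} {p p' e e' : ι → G} {I : Finset ι} {x : G} :
    x ∈ reservePoints p p' e e' I ↔ ∃ i ∈ I, p i = x ∨ p' i = x ∨ e i = x ∨ e' i = x := by
  simp only [reservePoints_eq_map_add, Multiset.mem_add, Multiset.mem_map, Finset.mem_val]
  aesop

theorem card_reservePoints {G ι : Type*} (p p' e e' : ι → G) (I : Finset ι) :
    (reservePoints p p' e e' I).card = 4 * I.card := by
  simp only [reservePoints_eq_map_add, Multiset.card_add, Multiset.card_map, Finset.card_val]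
  ring

theorem nodup_reservePoints {G ι Γ : Type*} {p p' e e' : ι → G} {I : Finset ι} {col : G → Γ}
    {γ : Fin 4 → ι → Γ} (hp : Set.InjOn p I) (hp' : Set.InjOn p' I) (he : Set.InjOn e I)
    (he' : Set.InjOn e' I) (hγ : ∀ a b, a ≠ b → ∀ i ∈ I, ∀ j ∈ I, γ a i ≠ γ b j)
    (hcp : ∀ i ∈ I, col (p i) = γ 0 i) (hcp' : ∀ i ∈ I, col (p' i) = γ 1 i)
    (hce : ∀ i ∈ I, col (e i) = γ 2 i) (hce' : ∀ i ∈ I, col (e' i) = γ 3 i) :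
    (reservePoints p p' e e' I).Nodup := by
  have hnd : ∀ f : ι → G, Set.InjOn f I → (I.val.map f).Nodup := fun f hf =>
    I.nodup.map_on fun a ha b hb h => hf ha hb h
  have hdis : ∀ (a b : Fin 4) (f g : ι → G), a ≠ b → (∀ i ∈ I, col (f i) = γ a i) →
      (∀ i ∈ I, col (g i) = γ b i) → Disjoint (I.val.map f) (I.val.map g) := by
    intro a b f g hab hf hg
    rw [Multiset.disjoint_left]
    intro x hx hx'
    obtain ⟨i, hi, rfl⟩ := Multiset.mem_map.1 hx
    obtain ⟨j, hj, hij⟩ := Multiset.mem_map.1 hx'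
    exact hγ a b hab i hi j hj (by rw [← hf i hi, ← hg j hj, hij])
  simp only [reservePoints_eq_map_add, Multiset.nodup_add, Multiset.disjoint_add_left]
  exact ⟨⟨⟨hnd p hp, hnd p' hp', hdis 0 1 p p' (by decide) hcp hcp'⟩, hnd e he,
    hdis 0 2 p e (by decide) hcp hce, hdis 1 2 p' e (by decide) hcp' hce⟩, hnd e' he',
    ⟨hdis 0 3 p e' (by decide) hcp hce', hdis 1 3 p' e' (by decide) hcp' hce'⟩,
    hdis 2 3 e e' (by decide) hce hce'⟩

section Degenerate

variable {G : Type*} [AddCommGroup G] [DecidableEq G]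

theorem card_quadPoints_eq_four {t₁ t₂ h a : G} (ht₁ : h ≠ t₁) (ht₂ : h ≠ t₂) (ha₁ : a ≠ t₁ - a)
    (ha₂ : h - a ≠ t₂ - (h - a)) (hah : a ≠ h - a) (hat : a ≠ t₁ - t₂ + h - a) :
    (quadPoints t₁ t₂ h a).card = 4 := by
  refine card_insert_three_eq_four.2 ⟨⟨ha₁, hah, fun he => ht₂ ?_⟩, ⟨fun he => ht₁ ?_,
    fun he => hat ?_⟩, ha₂⟩
  · have : t₂ - (h - a) = a + (t₂ - h) := by abel
    rw [this] at he
    exact (sub_eq_zero.1 (left_eq_add.1 he)).symm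
  · exact (sub_left_injective he).symm
  · have : t₁ - t₂ + h - a = (t₁ - a) - t₂ + h := by abel
    rw [this, he]
    abel

theorem card_filter_sub_mem_le (K F : Finset G) (h : G) :
    (K.filter fun a => h - a ∈ F).card ≤ F.card :=
  card_filter_mem_le_of_injOn sub_right_injective.injOn F

variable [Fintype G]

/-- The elements `a` with `a + a = t`. -/
def halves (t : G) : Finset G := Finset.univ.filter fun a => a = t - a

theorem mem_halves {t a : G} : a ∈ halves t ↔ a = t - a := by
  simp only [halves, Finset.mem_filter_univ]

theorem sum_card_halves : ∑ t : G, (halves t).card = Fintype.card G := by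
  rw [← Finset.card_univ, Finset.card_eq_sum_card_fiberwise (f := fun a : G => a + a)
    (t := Finset.univ) fun _ _ => Finset.mem_coe.2 (Finset.mem_univ _)]
  simp only [halves, eq_sub_iff_add_eq]

variable (G) in
/-- The `t` that can be written in more than `E` ways as `a + a`. -/
noncomputable def degenerateSums (E : ℝ) : Finset G :=
  Finset.univ.filter fun t => E < ((halves t).card : ℝ)

theorem card_halves_le {E : ℝ} {t : G} (ht : t ∉ degenerateSums G E) :
    ((halves t).card : ℝ) ≤ E := by
  simpa only [degenerateSums, Finset.mem_filter_univ, not_lt] using ht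

variable (G) in
theorem card_degenerateSums_mul_le (E : ℝ) :
    ((degenerateSums G E).card : ℝ) * E ≤ Fintype.card G :=
  calc ((degenerateSums G E).card : ℝ) * E = ∑ _t ∈ degenerateSums G E, E := by
        rw [Finset.sum_const, nsmul_eq_mul]
    _ ≤ ∑ t ∈ degenerateSums G E, ((halves t).card : ℝ) :=
        Finset.sum_le_sum fun _ ht => (Finset.mem_filter.1 ht).2.le
    _ ≤ ∑ t : G, ((halves t).card : ℝ) :=
        Finset.sum_le_sum_of_subset_of_nonneg (Finset.subset_univ _) fun _ _ _ => by positivity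
    _ = Fintype.card G := by exact_mod_cast sum_card_halves

theorem card_le_card_pairSet_univ_add (t : G) :
    Fintype.card G ≤ (pairSet Finset.univ t).card + (halves t).card := by
  rw [← Finset.card_univ]
  refine (Finset.card_le_card fun a _ => ?_).trans (Finset.card_union_le _ _)
  simp only [Finset.mem_union, mem_pairSet, mem_halves, Finset.mem_univ, true_and]
  tauto

/-- The `h` for which many of the quadruples `quadPoints t₁ t₂ h a` may have a coincidence between
a point of `{a, t₁ - a}` and a point of `{h - a, t₂ - (h - a)}` other than `a = h - a`. -/
noncomputable def degenerateShifts (E : ℝ) (t₁ t₂ : G) : Finset G :=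
  {t₁, t₂} ∪ Finset.univ.filter fun h => t₁ - t₂ + h ∈ degenerateSums G E

theorem mem_degenerateShifts {E : ℝ} {t₁ t₂ h : G} : h ∈ degenerateShifts E t₁ t₂ ↔
    (h = t₁ ∨ h = t₂) ∨ t₁ - t₂ + h ∈ degenerateSums G E := by
  simp only [degenerateShifts, Finset.mem_union, Finset.mem_insert, Finset.mem_singleton,
    Finset.mem_filter_univ]

theorem card_degenerateShifts_le (E : ℝ) (t₁ t₂ : G) :
    (degenerateShifts E t₁ t₂).card ≤ (degenerateSums G E).card + 2 := by
  have htwo := Finset.card_le_two (a := t₁) (b := t₂)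
  have hfilter := card_filter_mem_le_of_injOn (K := Finset.univ)
    (add_right_injective (t₁ - t₂)).injOn (degenerateSums G E)
  exact (Finset.card_union_le _ _).trans (by omega)

theorem card_le_card_quadSet_univ_add {t₁ t₂ h : G} (ht₁ : h ≠ t₁) (ht₂ : h ≠ t₂) :
    Fintype.card G ≤ (quadSet Finset.univ t₁ t₂ h).card + (halves t₁).card + (halves t₂).card +
      (halves h).card + (halves (t₁ - t₂ + h)).card := by
  have hcover : (Finset.univ : Finset G) ⊆ quadSet Finset.univ t₁ t₂ h ∪ halves t₁ ∪
      (Finset.univ.filter fun a => h - a ∈ halves t₂) ∪ halves h ∪ halves (t₁ - t₂ + h) := by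
    intro a _
    simp only [Finset.mem_union, mem_quadSet, mem_halves, Finset.mem_filter_univ,
      Finset.subset_univ, true_and]
    by_contra! hcon
    obtain ⟨⟨⟨⟨hcard, ha₁⟩, ha₂⟩, hah⟩, hat⟩ := hcon
    exact hcard (card_quadPoints_eq_four ht₁ ht₂ ha₁ ha₂ hah hat)
  rw [← Finset.card_univ]
  have := card_filter_sub_mem_le Finset.univ (halves t₂) h
  calc _ ≤ _ := Finset.card_le_card hcover
    _ ≤ (quadSet Finset.univ t₁ t₂ h).card + (halves t₁).card +
        (Finset.univ.filter fun a => h - a ∈ halves t₂).card + (halves h).card +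
        (halves (t₁ - t₂ + h)).card := by
      iterate 3 refine (Finset.card_union_le _ _).trans (Nat.add_le_add_right ?_ _)
      exact Finset.card_union_le _ _
    _ ≤ _ := by omega

theorem card_le_card_quadSet_univ {E : ℝ} {t₁ t₂ h : G} (ht₁ : t₁ ∉ degenerateSums G E)
    (ht₂ : t₂ ∉ degenerateSums G E) (hh : h ∉ degenerateSums G E)
    (hs : h ∉ degenerateShifts E t₁ t₂) :
    (Fintype.card G : ℝ) ≤ (quadSet (Finset.univ : Finset G) t₁ t₂ h).card + 4 * E := by
  simp only [mem_degenerateShifts, not_or] at hs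
  have hcard : (Fintype.card G : ℝ) ≤ (quadSet Finset.univ t₁ t₂ h).card + (halves t₁).card +
      (halves t₂).card + (halves h).card + (halves (t₁ - t₂ + h)).card := by
    exact_mod_cast card_le_card_quadSet_univ_add hs.1.1 hs.1.2
  linarith [card_halves_le ht₁, card_halves_le ht₂, card_halves_le hh, card_halves_le hs.2]

namespace Typical

variable {X : Finset G} {p E : ℝ} {t t₁ t₂ h : G}

theorem le_card_pairSet (hX : Typical X p E) (hp : 0 ≤ p) (hp1 : p ≤ 1) (hE : 0 ≤ E)
    (ht : t ∉ degenerateSums G E) : p ^ 2 * Fintype.card G - 2 * E ≤ (pairSet X t).card := by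
  have huniv : (Fintype.card G : ℝ) ≤ (pairSet (Finset.univ : Finset G) t).card + E :=
    (by exact_mod_cast card_le_card_pairSet_univ_add t : (Fintype.card G : ℝ) ≤ _ + _).trans
      (add_le_add_right (card_halves_le ht) _)
  have hp2 : p ^ 2 * E ≤ E := mul_le_of_le_one_left hE (pow_le_one₀ hp hp1)
  have := mul_le_mul_of_nonneg_left huniv (sq_nonneg p)
  linarith [(abs_le.1 (hX.pair t)).1]

theorem card_pairSet_le (hX : Typical X p E) (t : G) :
    ((pairSet X t).card : ℝ) ≤ p ^ 2 * Fintype.card G + E := by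
  have huniv : ((pairSet (Finset.univ : Finset G) t).card : ℝ) ≤ Fintype.card G := by
    exact_mod_cast Finset.card_le_univ _
  have := mul_le_mul_of_nonneg_left huniv (sq_nonneg p)
  linarith [(abs_le.1 (hX.pair t)).2]

theorem le_card_quadSet (hX : Typical X p E) (hp : 0 ≤ p) (hp1 : p ≤ 1) (hE : 0 ≤ E)
    (ht₁ : t₁ ∉ degenerateSums G E) (ht₂ : t₂ ∉ degenerateSums G E) (hh : h ∉ degenerateSums G E)
    (hs : h ∉ degenerateShifts E t₁ t₂) :
    p ^ 4 * Fintype.card G - 5 * E ≤ (quadSet X t₁ t₂ h).card := by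
  have hp4 : p ^ 4 * E ≤ E := mul_le_of_le_one_left hE (pow_le_one₀ hp hp1)
  have := mul_le_mul_of_nonneg_left (card_le_card_quadSet_univ ht₁ ht₂ hh hs)
    (by positivity : 0 ≤ p ^ 4)
  linarith [(abs_le.1 (hX.quad t₁ t₂ h)).1]

end Typical

theorem exists_notMem_degenerateSums {S : Finset G} {E : ℝ} (α : G)
    (hS : 2 * ((S.card : ℝ) + 1) < E) :
    ∃ t₀ : G, ∀ c ∈ Finset.insertNone S, t₀ + c.getD 0 ∉ degenerateSums G E ∧
      α - t₀ - c.getD 0 ∉ degenerateSums G E := by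
  by_contra! hcon
  have hcover : (Finset.univ : Finset G) ⊆ (Finset.insertNone S).biUnion fun c =>
      (Finset.univ.filter fun t => t + c.getD 0 ∈ degenerateSums G E) ∪
      (Finset.univ.filter fun t => α - c.getD 0 - t ∈ degenerateSums G E) := by
    intro t _
    obtain ⟨c, hc, h⟩ := hcon t
    simp only [Finset.mem_biUnion, Finset.mem_union, Finset.mem_filter_univ]
    rw [sub_right_comm] at h
    exact ⟨c, hc, or_iff_not_imp_left.2 h⟩
  have hcard := (Finset.card_le_card hcover).trans (Finset.card_biUnion_le_card_mul _ _
    (2 * (degenerateSums G E).card) fun c _ => (Finset.card_union_le _ _).trans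
      ((add_le_add (card_filter_mem_le_of_injOn (add_left_injective _).injOn _)
        (card_filter_sub_mem_le _ _ _)).trans_eq (two_mul _).symm))
  rw [Finset.card_univ, Finset.card_insertNone] at hcard
  have hcard' : (Fintype.card G : ℝ) ≤ (S.card + 1) * (2 * (degenerateSums G E).card) := by
    exact_mod_cast hcard
  have hmul := card_degenerateSums_mul_le G E
  have hpos : (0 : ℝ) < Fintype.card G := by exact_mod_cast Fintype.card_pos
  have : (0 : ℝ) ≤ (degenerateSums G E).card := Nat.cast_nonneg _
  nlinarith

/-- The sums `h` that may be realised by too few pairs of points of a reserve with base sum `t₀`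
and classes `S`: those with degenerate quadruples for one of the types that the reserve uses. -/
noncomputable def badSums (E : ℝ) (α t₀ : G) (S : Finset G) : Finset G :=
  degenerateSums G E ∪ S.biUnion fun x =>
    degenerateShifts E (t₀ + x) (α - t₀) ∪ degenerateShifts E (α - t₀ - x) t₀

theorem notMem_badSums {E : ℝ} {α t₀ h : G} {S : Finset G} : h ∉ badSums E α t₀ S ↔
    h ∉ degenerateSums G E ∧ ∀ x ∈ S, h ∉ degenerateShifts E (t₀ + x) (α - t₀) ∧
      h ∉ degenerateShifts E (α - t₀ - x) t₀ := by
  simp only [badSums, Finset.mem_union, Finset.mem_biUnion, not_or, not_exists, not_and]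

theorem card_badSums_le {E : ℝ} (hE : 0 < E) (α t₀ : G) (S : Finset G) :
    ((badSums E α t₀ S).card : ℝ) ≤ 2 * (S.card + 1) * (Fintype.card G / E + 2) := by
  have hcard : (badSums E α t₀ S).card ≤ (degenerateSums G E).card +
      S.card * (2 * ((degenerateSums G E).card + 2)) := by
    refine (Finset.card_union_le _ _).trans (Nat.add_le_add_left
      (Finset.card_biUnion_le_card_mul _ _ _ fun x _ => (Finset.card_union_le _ _).trans ?_) _)
    have := card_degenerateShifts_le E (t₀ + x) (α - t₀)
    have := card_degenerateShifts_le E (α - t₀ - x) t₀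
    omega
  have hcard' : ((badSums E α t₀ S).card : ℝ) ≤ (degenerateSums G E).card +
      S.card * (2 * ((degenerateSums G E).card + 2)) := by exact_mod_cast hcard
  have hdeg : ((degenerateSums G E).card : ℝ) ≤ Fintype.card G / E :=
    (le_div_iff₀ hE).2 (card_degenerateSums_mul_le G E)
  calc ((badSums E α t₀ S).card : ℝ)
      ≤ 2 * (S.card + 1) * ((degenerateSums G E).card + 2) := by
        linarith [(Nat.cast_nonneg _ : (0 : ℝ) ≤ (degenerateSums G E).card)]
    _ ≤ 2 * (S.card + 1) * (Fintype.card G / E + 2) := by gcongr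

end Degenerate

theorem exists_injOn_finset_fin {κ : Type*} (T : Finset κ) {r : ℕ} (h : T.card ≤ 2 ^ r) :
    ∃ γ : κ → Finset (Fin r), Set.InjOn γ T := by
  obtain ⟨f⟩ := Function.Embedding.nonempty_of_card_le (α := T) (β := Finset (Fin r))
    (by simpa using h)
  refine ⟨fun x => if hx : x ∈ T then f ⟨x, hx⟩ else ∅, fun a ha b hb hab => ?_⟩
  simpa only [Finset.mem_coe.1 ha, Finset.mem_coe.1 hb, dif_pos, EmbeddingLike.apply_eq_iff_eq,
    Subtype.mk.injEq] using hab

theorem exists_bijOn_of_card_eq {κ β : Type*} [Nonempty β] {s : Finset κ} {t : Finset β}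
    (h : s.card = t.card) : ∃ φ : κ → β, Set.BijOn φ s t :=
  s.finite_toSet.exists_bijOn_of_encard_eq (by simp only [Set.encard_coe_eq_coe_finsetCard, h])

section ColouredPairs

variable {G : Type*} [AddCommGroup G] [DecidableEq G]

/-- The pairs in `X` of sum `t` whose members have colours `c₁` and `c₂`, given by their first
member. -/
def colouredPairs {Γ : Type*} [DecidableEq Γ] (col : G → Γ) (X : Finset G) (t : G) (c₁ c₂ : Γ) :
    Finset G :=
  (pairSet X t).filter fun a => col a = c₁ ∧ col (t - a) = c₂

theorem mem_colouredPairs {Γ : Type*} [DecidableEq Γ] {col : G → Γ} {X : Finset G} {t a : G}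
    {c₁ c₂ : Γ} : a ∈ colouredPairs col X t c₁ c₂ ↔
      (a ∈ X ∧ t - a ∈ X ∧ a ≠ t - a) ∧ col a = c₁ ∧ col (t - a) = c₂ := by
  rw [colouredPairs, Finset.mem_filter, mem_pairSet]

theorem card_filter_sub_mem_trim {A A' B B' : Finset G} (h : G) (hA : A' ⊆ A) (hB : B' ⊆ B) :
    (A.filter fun a => h - a ∈ B).card + A'.card + B'.card ≤
      (A'.filter fun a => h - a ∈ B').card + A.card + B.card := by
  have hcover : (A.filter fun a => h - a ∈ B) ⊆ (A'.filter fun a => h - a ∈ B') ∪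
      ((A \ A') ∪ A.filter fun a => h - a ∈ B \ B') := by
    intro a
    simp only [Finset.mem_union, Finset.mem_filter, Finset.mem_sdiff]
    tauto
  have hcard := (Finset.card_le_card hcover).trans ((Finset.card_union_le _ _).trans
    (Nat.add_le_add_left (Finset.card_union_le _ _) _))
  have hfilter := card_filter_sub_mem_le A (B \ B') h
  rw [Finset.card_sdiff_of_subset hA] at hcard
  rw [Finset.card_sdiff_of_subset hB] at hfilter
  have := Finset.card_le_card hA
  have := Finset.card_le_card hB
  omega

variable [Fintype G] {X A A' : Finset G} {p E : ℝ} {r : ℕ} {col : G → Finset (Fin r)}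

namespace Typical

theorem le_card_colouredPairs (hX : Typical X p E) (hcol : EquiColoured X col E) (hp : 0 ≤ p)
    (hp1 : p ≤ 1) (hE : 0 ≤ E) {t : G} (ht : t ∉ degenerateSums G E) (c₁ c₂ : Finset (Fin r)) :
    p ^ 2 * Fintype.card G / ((2 : ℝ) ^ r) ^ 2 - 3 * E ≤ (colouredPairs col X t c₁ c₂).card := by
  have hpair : (p ^ 2 * Fintype.card G - 2 * E) / ((2 : ℝ) ^ r) ^ 2 ≤
      (pairSet X t).card / ((2 : ℝ) ^ r) ^ 2 := by
    gcongr
    exact hX.le_card_pairSet hp hp1 hE ht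
  have herr : 2 * E / ((2 : ℝ) ^ r) ^ 2 ≤ 2 * E :=
    div_le_self (by linarith) (one_le_pow₀ (one_le_pow₀ one_le_two))
  rw [sub_div] at hpair
  unfold colouredPairs
  linarith [(abs_le.1 (hcol.pair t c₁ c₂)).1]

theorem card_colouredPairs_le (hX : Typical X p E) (hcol : EquiColoured X col E) (hE : 0 ≤ E)
    (t : G) (c₁ c₂ : Finset (Fin r)) : ((colouredPairs col X t c₁ c₂).card : ℝ) ≤
      p ^ 2 * Fintype.card G / ((2 : ℝ) ^ r) ^ 2 + 2 * E := by
  have hpair : ((pairSet X t).card : ℝ) / ((2 : ℝ) ^ r) ^ 2 ≤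
      (p ^ 2 * Fintype.card G + E) / ((2 : ℝ) ^ r) ^ 2 := by
    gcongr
    exact hX.card_pairSet_le t
  have herr : E / ((2 : ℝ) ^ r) ^ 2 ≤ E := div_le_self hE (one_le_pow₀ (one_le_pow₀ one_le_two))
  rw [add_div] at hpair
  unfold colouredPairs
  linarith [(abs_le.1 (hcol.pair t c₁ c₂)).2]

theorem le_card_filter_colouredPairs (hX : Typical X p E) (hcol : EquiColoured X col E)
    (hp : 0 ≤ p) (hp1 : p ≤ 1) (hE : 0 ≤ E) {t₁ t₂ h : G} (ht₁ : t₁ ∉ degenerateSums G E)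
    (ht₂ : t₂ ∉ degenerateSums G E) (hh : h ∉ degenerateSums G E)
    (hs : h ∉ degenerateShifts E t₁ t₂) (c₁ c₂ c₃ c₄ : Finset (Fin r)) :
    p ^ 4 * Fintype.card G / ((2 : ℝ) ^ r) ^ 4 - 6 * E ≤
      ((colouredPairs col X t₁ c₁ c₂).filter fun a =>
        h - a ∈ colouredPairs col X t₂ c₃ c₄).card := by
  have hquad : (p ^ 4 * Fintype.card G - 5 * E) / ((2 : ℝ) ^ r) ^ 4 ≤
      (quadSet X t₁ t₂ h).card / ((2 : ℝ) ^ r) ^ 4 := by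
    gcongr
    exact hX.le_card_quadSet hp hp1 hE ht₁ ht₂ hh hs
  have herr : 5 * E / ((2 : ℝ) ^ r) ^ 4 ≤ 5 * E :=
    div_le_self (by linarith) (one_le_pow₀ (one_le_pow₀ one_le_two))
  rw [sub_div] at hquad
  have hsub : ((quadSet X t₁ t₂ h).filter fun a => col a = c₁ ∧
      col (t₁ - a) = c₂ ∧ col (h - a) = c₃ ∧ col (t₂ - (h - a)) = c₄) ⊆
      (colouredPairs col X t₁ c₁ c₂).filter fun a => h - a ∈ colouredPairs col X t₂ c₃ c₄ := by
    intro a ha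
    simp only [Finset.mem_filter, mem_quadSet, quadPoints, Finset.insert_subset_iff,
      Finset.singleton_subset_iff, card_insert_three_eq_four] at ha
    simp only [Finset.mem_filter, mem_colouredPairs]
    tauto
  have hcard : (_ : ℝ) ≤ _ := Nat.cast_le.2 (Finset.card_le_card hsub)
  linarith [(abs_le.1 (hcol.quad t₁ t₂ h c₁ c₂ c₃ c₄)).1]

theorem le_card_filter_of_subset_colouredPairs (hX : Typical X p E) (hcol : EquiColoured X col E)
    (hp : 0 ≤ p) (hp1 : p ≤ 1) (hE : 0 ≤ E) {t₁ t₂ h : G} (ht₁ : t₁ ∉ degenerateSums G E)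
    (ht₂ : t₂ ∉ degenerateSums G E) (hh : h ∉ degenerateSums G E)
    (hs : h ∉ degenerateShifts E t₁ t₂) {c₁ c₂ c₃ c₄ : Finset (Fin r)}
    (hA : A ⊆ colouredPairs col X t₁ c₁ c₂) (hA' : A' ⊆ colouredPairs col X t₂ c₃ c₄)
    (hAcard : p ^ 2 * Fintype.card G / ((2 : ℝ) ^ r) ^ 2 - 3 * E ≤ A.card)
    (hAcard' : p ^ 2 * Fintype.card G / ((2 : ℝ) ^ r) ^ 2 - 3 * E ≤ A'.card) :
    p ^ 4 * Fintype.card G / ((2 : ℝ) ^ r) ^ 4 - 16 * E ≤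
      (A.filter fun a => h - a ∈ A').card := by
  have htrim : (((colouredPairs col X t₁ c₁ c₂).filter fun a =>
      h - a ∈ colouredPairs col X t₂ c₃ c₄).card : ℝ) + A.card + A'.card ≤
      (A.filter fun a => h - a ∈ A').card + (colouredPairs col X t₁ c₁ c₂).card +
        (colouredPairs col X t₂ c₃ c₄).card := by
    exact_mod_cast card_filter_sub_mem_trim h hA hA'
  linarith [hX.le_card_filter_colouredPairs hcol hp hp1 hE ht₁ ht₂ hh hs c₁ c₂ c₃ c₄,
    hX.card_colouredPairs_le hcol hE t₁ c₁ c₂, hX.card_colouredPairs_le hcol hE t₂ c₃ c₄]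

end Typical

end ColouredPairs

/-- For each class `c` in `S ∪ {none}`, sets `P c` and `Q c` of `m` pairs in `X` of sums `t₀ + c`
and `α - t₀ - c` (given by their first members; `none` stands for the element `0`), together with
a bijection `φ c` that combines the pairs into quadruples of sum `α`. The colours `γ (c, k)` of the
`k`-th points of the quadruples of class `c` keep different quadruples apart. -/
structure ColouredFamilies {G Γ : Type*} [AddCommGroup G] [DecidableEq G] [DecidableEq Γ]
    (X S : Finset G) (col : G → Γ) (γ : Option G × Fin 4 → Γ) (α t₀ : G) (m : ℕ)
    (P Q : Option G → Finset G) (φ : Option G → G → G) : Prop where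
  subset_p : ∀ c ∈ Finset.insertNone S,
    P c ⊆ colouredPairs col X (t₀ + c.getD 0) (γ (c, 0)) (γ (c, 1))
  subset_q : ∀ c ∈ Finset.insertNone S,
    Q c ⊆ colouredPairs col X (α - t₀ - c.getD 0) (γ (c, 2)) (γ (c, 3))
  card_p : ∀ c ∈ Finset.insertNone S, (P c).card = m
  bijOn : ∀ c ∈ Finset.insertNone S, Set.BijOn (φ c) (P c) (Q c)

theorem exists_colouredFamilies {G Γ : Type*} [AddCommGroup G] [DecidableEq G] [DecidableEq Γ]
    {X S : Finset G} {col : G → Γ} {γ : Option G × Fin 4 → Γ} {α t₀ : G} {m : ℕ}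
    (hP : ∀ c ∈ Finset.insertNone S,
      m ≤ (colouredPairs col X (t₀ + c.getD 0) (γ (c, 0)) (γ (c, 1))).card)
    (hQ : ∀ c ∈ Finset.insertNone S,
      m ≤ (colouredPairs col X (α - t₀ - c.getD 0) (γ (c, 2)) (γ (c, 3))).card) :
    ∃ P Q φ, ColouredFamilies X S col γ α t₀ m P Q φ := by
  choose! P hPsub hPcard using fun c hc => Finset.exists_subset_card_eq (hP c hc)
  choose! Q hQsub hQcard using fun c hc => Finset.exists_subset_card_eq (hQ c hc)
  choose! φ hφ using fun c hc => exists_bijOn_of_card_eq ((hPcard c hc).trans (hQcard c hc).symm)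
  exact ⟨P, Q, φ, hPsub, hQsub, hPcard, hφ⟩

namespace ColouredFamilies

variable {G Γ : Type*} [AddCommGroup G] [DecidableEq G] [DecidableEq Γ] {X S : Finset G}
  {col : G → Γ} {γ : Option G × Fin 4 → Γ} {α t₀ : G} {m : ℕ} {P Q : Option G → Finset G}
  {φ : Option G → G → G} {i : Option G × G}

theorem card_q (hF : ColouredFamilies X S col γ α t₀ m P Q φ) {c : Option G}
    (hc : c ∈ Finset.insertNone S) : (Q c).card = m := by
  rw [← hF.card_p c hc]
  exact (Finset.card_nbij (φ c) (hF.bijOn c hc).mapsTo (hF.bijOn c hc).injOn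
    (hF.bijOn c hc).surjOn).symm

theorem mem_colouredPairs_p (hF : ColouredFamilies X S col γ α t₀ m P Q φ)
    (hi : i ∈ familyIndex S P) :
    i.2 ∈ colouredPairs col X (t₀ + i.1.getD 0) (γ (i.1, 0)) (γ (i.1, 1)) :=
  hF.subset_p _ (mem_familyIndex.1 hi).1 (mem_familyIndex.1 hi).2

theorem mem_colouredPairs_q (hF : ColouredFamilies X S col γ α t₀ m P Q φ)
    (hi : i ∈ familyIndex S P) :
    φ i.1 i.2 ∈ colouredPairs col X (α - t₀ - i.1.getD 0) (γ (i.1, 2)) (γ (i.1, 3)) :=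
  hF.subset_q _ (mem_familyIndex.1 hi).1
    ((hF.bijOn _ (mem_familyIndex.1 hi).1).mapsTo (mem_familyIndex.1 hi).2)

theorem mem_of_mem_reservePoints (hF : ColouredFamilies X S col γ α t₀ m P Q φ) {x : G}
    (hx : x ∈ reservePoints Prod.snd (fun i => t₀ + i.1.getD 0 - i.2) (fun i => φ i.1 i.2)
      (fun i => α - t₀ - i.1.getD 0 - φ i.1 i.2) (familyIndex S P)) : x ∈ X := by
  obtain ⟨i, hi, hx⟩ := mem_reservePoints.1 hx
  have hp := (mem_colouredPairs.1 (hF.mem_colouredPairs_p hi)).1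
  have hq := (mem_colouredPairs.1 (hF.mem_colouredPairs_q hi)).1
  rcases hx with rfl | rfl | rfl | rfl
  exacts [hp.1, hp.2.1, hq.1, hq.2.1]

theorem nodup_reservePoints (hF : ColouredFamilies X S col γ α t₀ m P Q φ)
    (hγ : Set.InjOn γ (Finset.insertNone S ×ˢ Finset.univ : Finset (Option G × Fin 4))) :
    (reservePoints Prod.snd (fun i => t₀ + i.1.getD 0 - i.2) (fun i => φ i.1 i.2)
      (fun i => α - t₀ - i.1.getD 0 - φ i.1 i.2) (familyIndex S P)).Nodup := by
  have hγ' : ∀ i ∈ familyIndex S P, ∀ j ∈ familyIndex S P, ∀ k l, γ (i.1, k) = γ (j.1, l) →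
      i.1 = j.1 ∧ k = l := fun i hi j hj k l h => Prod.mk.inj (hγ
    (Finset.mem_product.2 ⟨(mem_familyIndex.1 hi).1, Finset.mem_univ k⟩)
    (Finset.mem_product.2 ⟨(mem_familyIndex.1 hj).1, Finset.mem_univ l⟩) h)
  have hinj : ∀ (k : Fin 4) (f : Option G × G → G),
      (∀ i ∈ familyIndex S P, col (f i) = γ (i.1, k)) →
      (∀ c ∈ Finset.insertNone S, Set.InjOn (fun a => f (c, a)) (P c)) →
      Set.InjOn f (familyIndex S P) := by
    rintro k f hf hfi ⟨c, a⟩ hi ⟨d, b⟩ hj hij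
    obtain rfl : c = d := (hγ' _ hi _ hj k k (by rw [← hf _ hi, ← hf _ hj, hij])).1
    obtain ⟨hc, ha⟩ := mem_familyIndex.1 hi
    exact Prod.ext rfl (hfi c hc ha (mem_familyIndex.1 hj).2 hij)
  have hp := fun i hi => (mem_colouredPairs.1 (hF.mem_colouredPairs_p (i := i) hi)).2
  have hq := fun i hi => (mem_colouredPairs.1 (hF.mem_colouredPairs_q (i := i) hi)).2
  refine _root_.nodup_reservePoints (γ := fun k i => γ (i.1, k))
    (hinj 0 _ (fun i hi => (hp i hi).1) fun c _ => Function.injective_id.injOn)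
    (hinj 1 _ (fun i hi => (hp i hi).2) fun c _ _ _ _ _ h => sub_right_injective h)
    (hinj 2 _ (fun i hi => (hq i hi).1) fun c hc => (hF.bijOn c hc).injOn)
    (hinj 3 _ (fun i hi => (hq i hi).2) fun c hc _ ha _ hb h =>
      (hF.bijOn c hc).injOn ha hb (sub_right_injective h))
    (fun a b hab i hi j hj h => hab (hγ' i hi j hj a b h).2)
    (fun i hi => (hp i hi).1) (fun i hi => (hp i hi).2)
    (fun i hi => (hq i hi).1) (fun i hi => (hq i hi).2)

theorem reserve {r B : ℕ} {col : G → Finset (Fin r)} {γ : Option G × Fin 4 → Finset (Fin r)}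
    {p E : ℝ} [Fintype G] (hF : ColouredFamilies X S col γ α t₀ m P Q φ) (hX : Typical X p E)
    (hcol : EquiColoured X col E) (hp : 0 ≤ p) (hp1 : p ≤ 1) (hE : 0 ≤ E)
    (ht₀ : ∀ c ∈ Finset.insertNone S, t₀ + c.getD 0 ∉ degenerateSums G E ∧
      α - t₀ - c.getD 0 ∉ degenerateSums G E)
    (hm : p ^ 2 * Fintype.card G / ((2 : ℝ) ^ r) ^ 2 - 3 * E ≤ m)
    (hfresh : B + 2 * (badSums E α t₀ S).card < m)
    (hrich : 2 * B + (badSums E α t₀ S).card <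
      p ^ 4 * Fintype.card G / ((2 : ℝ) ^ r) ^ 4 - 16 * E) :
    Reserve α t₀ S (badSums E α t₀ S) B (familyIndex S P) Prod.fst Prod.snd
      (fun i => t₀ + i.1.getD 0 - i.2) (fun i => φ i.1 i.2)
      (fun i => α - t₀ - i.1.getD 0 - φ i.1 i.2) := by
  have hnone := Finset.none_mem_insertNone (s := S)
  have ht := ht₀ none hnone
  have hPnone := hF.subset_p none hnone
  have hQnone := hF.subset_q none hnone
  simp only [Option.getD_none, add_zero, sub_zero] at ht hPnone hQnone
  have hPcard : ∀ c ∈ Finset.insertNone S,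
      p ^ 2 * Fintype.card G / ((2 : ℝ) ^ r) ^ 2 - 3 * E ≤ (P c).card := fun c hc => by
    rwa [hF.card_p c hc]
  have hQcard : ∀ c ∈ Finset.insertNone S,
      p ^ 2 * Fintype.card G / ((2 : ℝ) ^ r) ^ 2 - 3 * E ≤ (Q c).card := fun c hc => by
    rwa [hF.card_q hc]
  refine Reserve.of_families hF.bijOn (by rwa [hF.card_p none hnone]) (fun x hx h hh => ?_)
    fun x hx h hh => ?_
  all_goals
    have hsome := Finset.some_mem_insertNone.2 hx
    obtain ⟨hdeg, hshift⟩ := notMem_badSums.1 hh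
    rw [← Nat.cast_lt (α := ℝ)]
    push_cast
    refine hrich.trans_le ?_
  · exact hX.le_card_filter_of_subset_colouredPairs hcol hp hp1 hE (ht₀ _ hsome).1 ht.2 hdeg
      (hshift x hx).1 (hF.subset_p _ hsome) hQnone (hPcard _ hsome) (hQcard _ hnone)
  · exact hX.le_card_filter_of_subset_colouredPairs hcol hp hp1 hE (ht₀ _ hsome).2 ht.1 hdeg
      (hshift x hx).2 (hF.subset_q _ hsome) hPnone (hQcard _ hsome) (hPcard _ hnone)

end ColouredFamilies

section ExistsReserve

theorem pow_four_mul_div_le_sq_mul_div {p n C : ℝ} (hp : 0 ≤ p) (hp1 : p ≤ 1) (hn : 0 ≤ n)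
    (hC : 1 ≤ C) : p ^ 4 * n / C ^ 4 ≤ p ^ 2 * n / C ^ 2 := by
  gcongr ?_ * n / ?_
  · exact pow_le_pow_of_le_one hp hp1 (by norm_num)
  · exact pow_le_pow_right₀ hC (by norm_num)

/-- `X` contains the points, all distinct and at most `K` in number, of a reserve for `α` with
letters `S` that withstands the removal of any `B` of its quadruples. -/
def HasReserve {G : Type*} [AddCommGroup G] (α : G) (S : Finset G) (B : ℕ) (X : Finset G) (K : ℝ) :
    Prop :=
  ∃ (t₀ : G) (Bad : Finset G) (I : Finset (Option G × G)) (cls : Option G × G → Option G)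
    (p p' e e' : Option G × G → G), Reserve α t₀ S Bad B I cls p p' e e' ∧
    (reservePoints p p' e e' I).Nodup ∧ (∀ x ∈ reservePoints p p' e e' I, x ∈ X) ∧
    ((reservePoints p p' e e' I).card : ℝ) ≤ K

theorem HasReserve.mono {G : Type*} [AddCommGroup G] {α : G} {S X : Finset G} {B : ℕ} {K K' : ℝ}
    (h : HasReserve α S B X K) (hK : K ≤ K') : HasReserve α S B X K' := by
  obtain ⟨t₀, Bad, I, cls, p, p', e, e', hR, hnodup, hmem, hcard⟩ := h
  exact ⟨t₀, Bad, I, cls, p, p', e, e', hR, hnodup, hmem, hcard.trans hK⟩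

variable {G : Type*} [AddCommGroup G] [DecidableEq G] [Fintype G] {X S : Finset G} {p E : ℝ}
  {r B : ℕ}

theorem exists_reserve_of_equiColoured {col : G → Finset (Fin r)} (α : G) (hX : Typical X p E)
    (hcol : EquiColoured X col E) (hp : 0 ≤ p) (hp1 : p ≤ 1)
    (hS : 4 * (S.card + 1) ≤ 2 ^ r) (hSE : 2 * ((S.card : ℝ) + 1) < E)
    (hEC : 64 * E ≤ p ^ 4 * Fintype.card G / ((2 : ℝ) ^ r) ^ 4)
    (hB : 2 * (B : ℝ) + 4 * (S.card + 1) * (Fintype.card G / E + 2) <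
      p ^ 4 * Fintype.card G / ((2 : ℝ) ^ r) ^ 4 / 2) :
    HasReserve α S B X (4 * (S.card + 1) * (p ^ 2 * Fintype.card G / ((2 : ℝ) ^ r) ^ 2)) := by
  have hE0 : 0 < E := by linarith
  have hpow := pow_four_mul_div_le_sq_mul_div hp hp1 (Nat.cast_nonneg (Fintype.card G))
    (one_le_pow₀ one_le_two : (1 : ℝ) ≤ 2 ^ r)
  obtain ⟨t₀, ht₀⟩ := exists_notMem_degenerateSums α hSE
  obtain ⟨γ, hγ⟩ := exists_injOn_finset_fin
    (Finset.insertNone S ×ˢ (Finset.univ : Finset (Fin 4))) (r := r) (by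
      rw [Finset.card_product, Finset.card_insertNone, Finset.card_univ, Fintype.card_fin]
      omega)
  set m : ℕ := ⌈p ^ 2 * Fintype.card G / ((2 : ℝ) ^ r) ^ 2 - 3 * E⌉₊
  have hm : p ^ 2 * Fintype.card G / ((2 : ℝ) ^ r) ^ 2 - 3 * E ≤ m := Nat.le_ceil _
  have hm' : (m : ℝ) ≤ p ^ 2 * Fintype.card G / ((2 : ℝ) ^ r) ^ 2 := by
    linarith [Nat.ceil_lt_add_one (a := p ^ 2 * Fintype.card G / ((2 : ℝ) ^ r) ^ 2 - 3 * E)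
      (by linarith)]
  obtain ⟨P, Q, φ, hF⟩ := exists_colouredFamilies (m := m)
    (fun c hc => Nat.ceil_le.2 (hX.le_card_colouredPairs hcol hp hp1 hE0.le (ht₀ c hc).1 _ _))
    (fun c hc => Nat.ceil_le.2 (hX.le_card_colouredPairs hcol hp hp1 hE0.le (ht₀ c hc).2
      (γ (c, 2)) (γ (c, 3))))
  have hbad := card_badSums_le hE0 α t₀ S
  have hbad0 : (0 : ℝ) ≤ (badSums E α t₀ S).card := Nat.cast_nonneg _
  have hB0 : (0 : ℝ) ≤ B := Nat.cast_nonneg _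
  refine ⟨t₀, _, _, _, _, _, _, _, hF.reserve hX hcol hp hp1 hE0.le ht₀ hm ?_ (by linarith),
    hF.nodup_reservePoints hγ, fun _ => hF.mem_of_mem_reservePoints, ?_⟩
  · have : (B : ℝ) + 2 * (badSums E α t₀ S).card < m := by linarith
    exact_mod_cast this
  · have hcard : ((familyIndex S P).card : ℝ) ≤ (S.card + 1) * m := by
      exact_mod_cast card_familyIndex_le hF.card_p
    rw [card_reservePoints, Nat.cast_mul, Nat.cast_ofNat, mul_assoc]
    gcongr
    exact hcard.trans (by gcongr)

theorem exists_reserve (α : G) (hX : Typical X p E) (hp : 0 ≤ p) (hp1 : p ≤ 1)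
    (hr : 0 < r) (hS : 4 * (S.card + 1) ≤ 2 ^ r) (hSE : 2 * ((S.card : ℝ) + 1) < E)
    (hEC : 64 * E ≤ p ^ 4 * Fintype.card G / ((2 : ℝ) ^ r) ^ 4)
    (hprob : 4 * ((Fintype.card G : ℝ) ^ 3 * ((2 : ℝ) ^ r) ^ 4) *
      Real.exp (-(E ^ 2 / (64 * (X.card * r : ℕ)))) < 1)
    (hB : 2 * (B : ℝ) + 4 * (S.card + 1) * (Fintype.card G / E + 2) <
      p ^ 4 * Fintype.card G / ((2 : ℝ) ^ r) ^ 4 / 2) :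
    HasReserve α S B X (4 * (S.card + 1) * (p ^ 2 * Fintype.card G / ((2 : ℝ) ^ r) ^ 2)) := by
  have hEX : E ≤ X.card := by
    have hquads_card : p ^ 4 * Fintype.card G / ((2 : ℝ) ^ r) ^ 4 ≤ p * Fintype.card G :=
      (div_le_self (by positivity) (one_le_pow₀ (one_le_pow₀ one_le_two))).trans
        (mul_le_mul_of_nonneg_right (pow_le_of_le_one hp hp1 (by norm_num)) (Nat.cast_nonneg _))
    linarith [(abs_le.1 hX.card).1]
  obtain ⟨col, hcol⟩ := exists_equiColoured
    (Finset.card_pos.1 (Nat.cast_pos.1 (by linarith : (0 : ℝ) < X.card))) hr (by linarith) hEX hprob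
  exact exists_reserve_of_equiColoured α hX hcol hp hp1 hS hSE hEC hB

end ExistsReserve

/-! ### The partition -/

section Combination

variable {G : Type*} [AddCommGroup G] {α : G}

theorem QuadSum.exists_card_sum_of_add {z m : Multiset G} {k : ℕ} (hm : QuadSum α m)
    (hcard : (z + m).card = 4 * k) (hsum : (z + m).sum = k • α) :
    ∃ j, z.card = 4 * j ∧ z.sum = j • α := by
  obtain ⟨i, hi, hiα⟩ := hm.exists_card_sum
  rw [Multiset.card_add, hi] at hcard
  rw [Multiset.sum_add, hiα] at hsum
  refine ⟨k - i, by omega, add_right_cancel (b := i • α) ?_⟩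
  rw [hsum, ← add_nsmul, Nat.sub_add_cancel (by omega)]

variable [DecidableEq G]

theorem card_pairSet_le_card_pairSet_sdiff_add (X Y : Finset G) (t : G) :
    (pairSet X t).card ≤ (pairSet (X \ Y) t).card + 2 * Y.card := by
  have hsub : pairSet X t ⊆ pairSet (X \ Y) t ∪ (Y ∪ X.filter fun a => t - a ∈ Y) := by
    intro a
    simp only [mem_pairSet, Finset.mem_union, Finset.mem_filter, Finset.mem_sdiff]
    tauto
  have hunion := (Finset.card_le_card hsub).trans (Finset.card_union_le _ _)
  have hunion' := Finset.card_union_le Y (X.filter fun a => t - a ∈ Y)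
  have hreflect := card_filter_sub_mem_le X Y t
  omega

theorem card_pairSet_mono {X Y : Finset G} (h : X ⊆ Y) (t : G) :
    (pairSet X t).card ≤ (pairSet Y t).card :=
  Finset.card_le_card fun x hx => by
    rw [mem_pairSet] at hx ⊢
    exact ⟨h hx.1, h hx.2.1, hx.2.2⟩

theorem Reserve.exists_partition {ι : Type*} {t₀ : G} {S Bad : Finset G} {B W : ℕ} {I : Finset ι}
    {cls : ι → Option G} {p p' e e' : ι → G} (hR : Reserve α t₀ S Bad B I cls p p' e e')
    (hS : ∀ y, ∃ l : List G, (∀ x ∈ l, x ∈ S) ∧ l.sum = y ∧ l.length ≤ W) {X Y : Finset G}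
    (hYX : Y ⊆ X) (hY : Y.val = reservePoints p p' e e' I) {M : Finset (Finset G)}
    (hM : M ⊆ quads (X \ Y) α) (hMdisj : (M : Set (Finset G)).PairwiseDisjoint id)
    (hB : (((X \ Y) \ M.biUnion id).card / 4 + 1) * (8 * W + 1) ≤ B) (h4 : 4 ∣ X.card)
    (hsum : ∑ x ∈ X, x = (X.card / 4) • α) :
    ∃ P : Finset (Finset G), (P : Set (Finset G)).PairwiseDisjoint id ∧ P.biUnion id = X ∧
      ∀ A ∈ P, A.card = 4 ∧ ∑ x ∈ A, x = α := by
  have hMquad : QuadSum α (M.biUnion id).val :=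
    quadSum_biUnion hMdisj fun f hf => (mem_quads.1 (hM hf)).2
  have hYquad : QuadSum α (reservePoints p p' e e' I) :=
    hR.quadSum_reservePoints (Finset.Subset.refl I)
  have hMsub : M.biUnion id ⊆ X \ Y :=
    Finset.biUnion_subset.2 fun f hf => (mem_quads.1 (hM hf)).1
  set Z := (X \ Y) \ M.biUnion id with hZ
  have hX : X.val = Z.val + (reservePoints p p' e e' I + (M.biUnion id).val) := by
    rw [hZ, Finset.sdiff_val _ (M.biUnion id), ← hY, add_left_comm,
      Multiset.sub_add_cancel (Finset.val_le_iff.2 hMsub), Finset.sdiff_val, add_comm,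
      Multiset.sub_add_cancel (Finset.val_le_iff.2 hYX)]
  obtain ⟨j, hj, hjα⟩ := (hYquad.append hMquad).exists_card_sum_of_add (z := Z.val)
    (k := X.card / 4) (by rw [← hX, Finset.card_val, Nat.mul_div_cancel' h4])
    (by rw [← hX, Finset.sum_val]; exact hsum)
  have hjZ : Z.card / 4 = j := by rw [← Finset.card_val, hj, Nat.mul_div_cancel_left _ four_pos]
  have hZquad := hR.absorb hS hj hjα (by rwa [← hjZ])
  exact (hZquad.append hMquad).exists_partition (by rw [hX, add_assoc])

end Combination

section Regime

theorem pow_mul_exp_neg_le {y T : ℝ} (hy : 4001 ≤ y) (hT : y ^ 2 ≤ T) :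
    y ^ 4000 * Real.exp (-T) ≤ Real.exp (-y) := by
  have hpow : y ^ 4000 ≤ Real.exp (4000 * y) := by
    calc y ^ 4000 ≤ Real.exp y ^ 4000 :=
          pow_le_pow_left₀ (by linarith) (by linarith [Real.add_one_le_exp y]) _
      _ = Real.exp (4000 * y) := by rw [← Real.exp_nat_mul, Nat.cast_ofNat]
  calc y ^ 4000 * Real.exp (-T) ≤ Real.exp (4000 * y) * Real.exp (-T) := by gcongr
    _ = Real.exp (4000 * y - T) := by rw [← Real.exp_add, sub_eq_add_neg]
    _ ≤ Real.exp (-y) := Real.exp_le_exp.2 (by nlinarith)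

theorem exists_pow_two_between {q : ℕ} (hq : 2 ≤ q) :
    ∃ r : ℕ, 0 < r ∧ q ≤ 2 ^ r ∧ 2 ^ r ≤ 2 * q := by
  have hpos := Nat.clog_pos one_lt_two hq
  refine ⟨Nat.clog 2 q, hpos, Nat.le_pow_clog one_lt_two q, ?_⟩
  have hlt := Nat.pow_pred_clog_lt_self one_lt_two (x := q) (by omega)
  rw [← Nat.succ_pred_eq_of_pos hpos, pow_succ]
  omega

/-- The numerical regime of the proof: `n` is the order of the group, `p` the density of the random
set, `y` a small power of `n` that still beats every bounded power of `1 / p`, `l` a polylogarithmic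
scale, and `E` the error allowed in the counts of points, pairs and quadruples. -/
structure Regime (n p y l E : ℝ) : Prop where
  order : n = y ^ 1000
  pos : 0 < p
  le_one : p ≤ 1
  one_le_mul_pow : 1 ≤ y * p ^ 4
  le_scale : 10 ^ 7 ≤ l
  scale_pow_le : l ^ 10 ≤ y
  error : 64 * l ^ 4 * E = p ^ 4 * n

namespace Regime

variable {n p y l E : ℝ}

theorem le_y (h : Regime n p y l E) : 10 ^ 70 ≤ y :=
  calc (10 : ℝ) ^ 70 = (10 ^ 7) ^ 10 := by norm_num
    _ ≤ l ^ 10 := pow_le_pow_left₀ (by norm_num) h.le_scale _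
    _ ≤ y := h.scale_pow_le

theorem one_le_y (h : Regime n p y l E) : 1 ≤ y := by linarith [h.le_y]

theorem one_le_scale (h : Regime n p y l E) : 1 ≤ l := by linarith [h.le_scale]

theorem mul_scale_pow_le (h : Regime n p y l E) {k : ℕ} (hk : k ≤ 5) : 128 * l ^ k ≤ y := by
  have hl := h.le_scale
  have hl1 := h.one_le_scale
  calc 128 * l ^ k ≤ l ^ 5 * l ^ 5 := by
        gcongr
        linarith [le_self_pow₀ hl1 (by norm_num : 5 ≠ 0)]
    _ = l ^ 10 := by ring
    _ ≤ y := h.scale_pow_le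

theorem pow_le (h : Regime n p y l E) : y ^ 999 ≤ p ^ 4 * n := by
  have hy := h.one_le_y
  calc y ^ 999 ≤ y ^ 999 * (y * p ^ 4) := le_mul_of_one_le_right (by positivity) h.one_le_mul_pow
    _ = p ^ 4 * n := by rw [h.order]; ring

theorem two_mul_le_error (h : Regime n p y l E) : 2 * (y ^ 998 * l) ≤ E := by
  have hy := h.one_le_y
  have hl := h.one_le_scale
  refine le_of_mul_le_mul_left ?_ (by positivity : 0 < 64 * l ^ 4)
  calc 64 * l ^ 4 * (2 * (y ^ 998 * l)) = y ^ 998 * (128 * l ^ 5) := by ring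
    _ ≤ y ^ 998 * y := by gcongr; exact h.mul_scale_pow_le le_rfl
    _ = y ^ 999 := by ring
    _ ≤ 64 * l ^ 4 * E := h.error ▸ h.pow_le

theorem two_mul_pow_le_error (h : Regime n p y l E) : 2 * y ^ 998 ≤ E := by
  have hy := h.one_le_y
  linarith [h.two_mul_le_error,
    le_mul_of_one_le_right (by positivity : 0 ≤ y ^ 998) h.one_le_scale]

theorem le_error (h : Regime n p y l E) {k : ℕ} (hk : k ≤ 998) : y ^ k ≤ E := by
  have hy := h.one_le_y
  linarith [h.two_mul_pow_le_error, pow_le_pow_right₀ hy hk, pow_pos (by linarith : 0 < y) 998]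

theorem error_pos (h : Regime n p y l E) : 0 < E := by
  linarith [h.le_error (k := 0) (by norm_num), pow_zero y]

theorem order_div_error_le (h : Regime n p y l E) : n / E ≤ y ^ 2 := by
  have hy := h.one_le_y
  rw [div_le_iff₀ h.error_pos, h.order]
  calc y ^ 1000 = y ^ 2 * y ^ 998 := by ring
    _ ≤ y ^ 2 * E := by gcongr; exact h.le_error le_rfl

theorem mul_error_le (h : Regime n p y l E) : 10 ^ 7 * E ≤ p ^ 4 * n := by
  rw [← h.error]
  gcongr
  · exact h.error_pos.le
  · linarith [h.le_scale, le_self_pow₀ h.one_le_scale (by norm_num : 4 ≠ 0)]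

theorem order_pos (h : Regime n p y l E) : 0 < n := by
  have hy := h.one_le_y
  rw [h.order]
  positivity

theorem density_chain (h : Regime n p y l E) :
    p ^ 4 * n ≤ p ^ 2 * n ∧ p ^ 2 * n ≤ p * n ∧ p * n ≤ n := by
  have hn := h.order_pos.le
  refine ⟨?_, ?_, mul_le_of_le_one_left hn h.le_one⟩ <;> refine mul_le_mul_of_nonneg_right ?_ hn
  · exact pow_le_pow_of_le_one h.pos.le h.le_one (by norm_num)
  · exact pow_le_of_le_one h.pos.le h.le_one two_ne_zero

theorem mul_exp_neg_le (h : Regime n p y l E) {m F : ℝ} (hm : 0 < m) (hmn : m ≤ n * l)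
    (hF : y ^ 998 ≤ F) :
    64 * l ^ 4 * n ^ 3 * Real.exp (-(F ^ 2 / (64 * m))) ≤ Real.exp (-y) := by
  have hy := h.one_le_y
  have hl := h.one_le_scale
  have hn := h.order_pos
  have hexponent : y ^ 2 ≤ F ^ 2 / (64 * m) := by
    rw [le_div_iff₀ (by positivity)]
    calc y ^ 2 * (64 * m) ≤ y ^ 2 * (64 * (n * l)) := by gcongr
      _ = y ^ 1002 * (64 * l ^ 1) := by rw [h.order]; ring
      _ ≤ y ^ 1002 * y := by
          gcongr
          linarith [h.mul_scale_pow_le (k := 1) (by norm_num)]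
      _ = y ^ 1003 := by ring
      _ ≤ y ^ 1996 := pow_le_pow_right₀ hy (by norm_num)
      _ = (y ^ 998) ^ 2 := by ring
      _ ≤ F ^ 2 := by gcongr
  have hfactor : 64 * l ^ 4 * n ^ 3 ≤ y ^ 4000 := by
    calc 64 * l ^ 4 * n ^ 3 ≤ y * n ^ 3 := by
          gcongr
          linarith [h.mul_scale_pow_le (k := 4) (by norm_num), pow_pos (by linarith : 0 < l) 4]
      _ = y ^ 3001 := by rw [h.order]; ring
      _ ≤ y ^ 4000 := pow_le_pow_right₀ hy (by norm_num)
  exact (mul_le_mul_of_nonneg_right hfactor (Real.exp_pos _).le).trans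
    (pow_mul_exp_neg_le (by linarith [h.le_y]) hexponent)

theorem mul_exp_neg_lt_one (h : Regime n p y l E) {m C : ℝ} (hm : 0 < m) (hmn : m ≤ n * l)
    (hC : 0 ≤ C) (hCl : C ≤ l) :
    4 * (n ^ 3 * C ^ 4) * Real.exp (-(E ^ 2 / (64 * m))) < 1 := by
  have hy := h.one_le_y
  have hn := h.order_pos
  calc 4 * (n ^ 3 * C ^ 4) * Real.exp (-(E ^ 2 / (64 * m)))
      ≤ 64 * (n ^ 3 * l ^ 4) * Real.exp (-(E ^ 2 / (64 * m))) := by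
        gcongr
        norm_num
    _ = 64 * l ^ 4 * n ^ 3 * Real.exp (-(E ^ 2 / (64 * m))) := by ring
    _ ≤ Real.exp (-y) := h.mul_exp_neg_le hm hmn (h.le_error le_rfl)
    _ < 1 := Real.exp_lt_one_iff.2 (by linarith)

theorem scale_mul_le_error (h : Regime n p y l E) : l * (n / E + 2) ≤ E := by
  have hy := h.le_y
  have hn := h.order_pos
  have hE := h.error_pos
  calc l * (n / E + 2) ≤ y * (y ^ 2 + y ^ 2) := by
        gcongr ?_ * (?_ + ?_)
        · linarith [h.mul_scale_pow_le (k := 1) (by norm_num)]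
        · exact h.order_div_error_le
        · linarith [le_self_pow₀ h.one_le_y two_ne_zero]
    _ ≤ y * (y * y ^ 2) := by
        rw [← two_mul]
        gcongr
        linarith
    _ = y ^ 4 := by ring
    _ ≤ E := h.le_error (by norm_num)

end Regime

end Regime

section TypicalPartition

variable {G : Type*} [AddCommGroup G] [DecidableEq G] [Fintype G] {X Y S : Finset G} {p y l E : ℝ}

theorem Typical.three_mul_le_four_mul_card (hX : Typical X p E)
    (h : Regime (Fintype.card G) p y l E) :
    3 * (p * Fintype.card G) ≤ 4 * X.card := by
  linarith [(abs_le.1 hX.card).1, h.mul_error_le, h.density_chain, h.error_pos]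

theorem Regime.hasReserve (h : Regime (Fintype.card G) p y l E) (hX : Typical X p E) (α : G)
    (hS : 80000 * ((S.card : ℝ) + 1) ≤ l) :
    HasReserve α S ⌊y ^ 998 * l⌋₊ X (p ^ 2 * Fintype.card G / 10 ^ 4) := by
  have hy := h.one_le_y
  have hl := h.one_le_scale
  have hn := h.order_pos
  have hp := h.pos
  have hlE : l ≤ E := by
    linarith [h.le_error (k := 1) (by norm_num), h.mul_scale_pow_le (k := 1) (by norm_num),
      pow_one y, pow_one l]
  obtain ⟨r, hr, hCS, hCS'⟩ := exists_pow_two_between (q := 40000 * (S.card + 1)) (by omega)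
  have hSC : 40000 * ((S.card : ℝ) + 1) ≤ 2 ^ r := by exact_mod_cast hCS
  have hCl : (2 : ℝ) ^ r ≤ l := by
    have : (2 : ℝ) ^ r ≤ 2 * (40000 * ((S.card : ℝ) + 1)) := by exact_mod_cast hCS'
    linarith
  have hEC : 64 * E ≤ p ^ 4 * Fintype.card G / ((2 : ℝ) ^ r) ^ 4 := by
    rw [le_div_iff₀ (by positivity), ← h.error, mul_right_comm]
    have := h.error_pos.le
    gcongr
  refine (exists_reserve α hX h.pos.le h.le_one hr (by omega) (by linarith) hEC ?_ ?_).mono ?_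
  · have hX0 : (0 : ℝ) < X.card := by
      linarith [hX.three_mul_le_four_mul_card h, mul_pos hp hn]
    have hXr : ((X.card * r : ℕ) : ℝ) ≤ Fintype.card G * l := by
      have hrl : (r : ℝ) ≤ l := le_trans (by exact_mod_cast Nat.lt_two_pow_self.le) hCl
      rw [Nat.cast_mul]
      gcongr
      exact Finset.card_le_univ X
    exact h.mul_exp_neg_lt_one (by push_cast; positivity) hXr (by positivity) hCl
  · have hfloor : (⌊y ^ 998 * l⌋₊ : ℝ) ≤ y ^ 998 * l := Nat.floor_le (by positivity)
    have hbad : 4 * ((S.card : ℝ) + 1) * (Fintype.card G / E + 2) ≤ E :=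
      (mul_le_mul_of_nonneg_right (by linarith) (by have := h.error_pos; positivity)).trans
        h.scale_mul_le_error
    linarith [h.two_mul_le_error, h.error_pos]
  · have hC : 4 * ((S.card : ℝ) + 1) * 10 ^ 4 ≤ ((2 : ℝ) ^ r) ^ 2 := by
      nlinarith
    rw [mul_div_assoc', div_le_div_iff₀ (by positivity) (by positivity), mul_right_comm,
      mul_comm _ (((2 : ℝ) ^ r) ^ 2)]
    gcongr

theorem Regime.exists_nearly_perfect_quads_sdiff (h : Regime (Fintype.card G) p y l E)
    (hX : Typical X p E) (α : G) (hYX : Y ⊆ X)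
    (hY : (Y.card : ℝ) ≤ p ^ 2 * Fintype.card G / 10 ^ 4) :
    ∃ M ⊆ quads (X \ Y) α, (M : Set (Finset G)).PairwiseDisjoint id ∧
      (((X \ Y) \ M.biUnion id).card : ℝ) ≤ 2 * y ^ 998 := by
  have hy := h.le_y
  have hE := h.mul_error_le
  have hE0 := h.error_pos
  obtain ⟨hp4, hp2, -⟩ := h.density_chain
  have hpow := h.pow_le
  have hVcard : ((X \ Y).card : ℝ) = X.card - Y.card := by
    rw [Finset.card_sdiff_of_subset hYX, Nat.cast_sub (Finset.card_le_card hYX)]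
  have hVn : ((X \ Y).card : ℝ) ≤ y ^ 1000 := by
    rw [← h.order]
    exact_mod_cast Finset.card_le_univ _
  have hVlow : y ^ 999 ≤ 2 * ((X \ Y).card : ℝ) := by
    linarith [hX.three_mul_le_four_mul_card h]
  have hup (t : G) : ((pairSet (X \ Y) t).card : ℝ) ≤
      2 * (p ^ 2 * Fintype.card G / 2 * (1 + 1 / 1000)) := by
    have := Nat.cast_le (α := ℝ).2 (card_pairSet_mono (Finset.sdiff_subset (s := X) (t := Y)) t)
    linarith [hX.card_pairSet_le t]
  have hlow (t : G) (ht : t ∉ degenerateSums G E) :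
      2 * (p ^ 2 * Fintype.card G / 2 * (1 - 1 / 1000)) ≤ (pairSet (X \ Y) t).card := by
    have := Nat.cast_le (α := ℝ).2 (card_pairSet_le_card_pairSet_sdiff_add X Y t)
    push_cast at this
    linarith [hX.le_card_pairSet h.pos.le h.le_one hE0.le ht]
  have hD : ((degenerateSums G E).card : ℝ) * 10000 ≤ (X \ Y).card := by
    have hDE := ((le_div_iff₀ hE0).2 (card_degenerateSums_mul_le G E)).trans h.order_div_error_le
    have hyy : 10 ^ 70 * y ^ 2 ≤ y ^ 999 :=
      calc 10 ^ 70 * y ^ 2 ≤ y * y ^ 2 := by gcongr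
        _ = y ^ 3 := by ring
        _ ≤ y ^ 999 := pow_le_pow_right₀ h.one_le_y (by norm_num)
    linarith [sq_nonneg y]
  obtain ⟨M, hM, hMdisj, hMcard⟩ := exists_nearly_perfect_quads (α := α) (y := y) (by linarith) hVn
    hVlow (by linarith [le_self_pow₀ h.one_le_y (by norm_num : 999 ≠ 0)]) hup hlow hD
  refine ⟨M, hM, hMdisj, le_of_mul_le_mul_right ?_ (by positivity : 0 < y ^ 2)⟩
  calc _ ≤ 2 * ((X \ Y).card : ℝ) := hMcard
    _ ≤ 2 * y ^ 1000 := by gcongr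
    _ = 2 * y ^ 998 * y ^ 2 := by ring

theorem Typical.exists_partition {α : G} (hX : Typical X p E) (h : Regime (Fintype.card G) p y l E)
    (hl : 10 ^ 7 * ((Nat.log 2 (Fintype.card G) : ℝ) + 1) ^ 2 ≤ l) (h4 : 4 ∣ X.card)
    (hsum : ∑ x ∈ X, x = (X.card / 4) • α) :
    ∃ P : Finset (Finset G), (P : Set (Finset G)).PairwiseDisjoint id ∧ P.biUnion id = X ∧
      ∀ A ∈ P, A.card = 4 ∧ ∑ x ∈ A, x = α := by
  obtain ⟨S, hScard, hS⟩ := exists_letters G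
  rw [Nat.card_eq_fintype_card] at hScard hS
  set W := (Nat.log 2 (Fintype.card G) + 1) ^ 2 with hW
  have hWl : 10 ^ 7 * (W : ℝ) ≤ l := by rwa [hW, Nat.cast_pow, Nat.cast_succ]
  have hW1 : (1 : ℝ) ≤ W := Nat.one_le_cast.2 (Nat.one_le_pow _ _ (Nat.succ_pos _))
  have hSW : (S.card : ℝ) ≤ W := Nat.cast_le.2 hScard
  obtain ⟨t₀, Bad, I, cls, q, q', e, e', hR, hnodup, hmem, hYcard⟩ :=
    h.hasReserve hX α (S := S) (by linarith)
  set Y : Finset G := ⟨reservePoints q q' e e' I, hnodup⟩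
  have hYX : Y ⊆ X := hmem
  obtain ⟨M, hM, hMdisj, hMcard⟩ := h.exists_nearly_perfect_quads_sdiff hX α hYX hYcard
  refine hR.exists_partition hS hYX rfl hM hMdisj (Nat.le_floor ?_) h4 hsum
  have hy : 2 ≤ y ^ 998 := by
    linarith [h.le_y, le_self_pow₀ h.one_le_y (by norm_num : 998 ≠ 0)]
  have hquarter := Nat.cast_div_le (α := ℝ) (m := ((X \ Y) \ M.biUnion id).card) (n := 4)
  push_cast at hquarter ⊢
  gcongr <;> linarith

end TypicalPartition

section RandomSets

variable {p y l E : ℝ}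

theorem sum_ite_setProb_eq_bernoulliProb {G : Type} [Fintype G] [DecidableEq G] (p : ℝ)
    (P : Finset G → Prop) [DecidablePred P] :
    ∑ R : Finset G, (if P R then setProb G p R else 0) =
      bernoulliProb Finset.univ (fun _ => p) P := by
  rw [← bernoulliExp_ite]
  simp only [bernoulliExp, Finset.powerset_univ, setProb]
  refine Finset.sum_congr rfl fun R _ => ?_
  simp [Finset.prod_const, ← Finset.compl_eq_univ_sdiff, Finset.card_compl]

variable {G : Type*} [AddCommGroup G] [Fintype G] [DecidableEq G]

theorem Regime.one_sub_inv_le_bernoulliProb_typical (h : Regime (Fintype.card G) p y l E) :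
    1 - 1 / y ≤
      bernoulliProb (Finset.univ : Finset G) (fun _ => p) fun R => Typical R p (E / 2) := by
  have hy := h.one_le_y
  have hn := h.order_pos
  have hEn : E / 2 ≤ Fintype.card G := by linarith [h.mul_error_le, h.density_chain, h.error_pos]
  have htail := bernoulliProb_not_typical_le h.pos.le h.le_one (half_pos h.error_pos).le hEn
  rw [bernoulliProb_not] at htail
  have hexp := h.mul_exp_neg_le hn (le_mul_of_one_le_right hn.le h.one_le_scale)
    (F := E / 2) (by linarith [h.two_mul_pow_le_error])
  have hsix : 6 * (Fintype.card G : ℝ) ^ 3 ≤ 64 * l ^ 4 * (Fintype.card G : ℝ) ^ 3 := by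
    gcongr
    linarith [one_le_pow₀ h.one_le_scale (n := 4)]
  have hinv : Real.exp (-y) ≤ 1 / y := by
    rw [Real.exp_neg, one_div]
    exact inv_anti₀ (by linarith) (by linarith [Real.add_one_le_exp y])
  linarith [mul_le_mul_of_nonneg_right hsix
    (Real.exp_pos (-((E / 2) ^ 2 / (64 * Fintype.card G)))).le]

theorem exists_forall_log_pow_le (c : ℝ) : ∃ N : ℕ, ∀ n : ℕ, N ≤ n →
    10 ^ 8 ≤ Real.log n ∧ Real.log n ^ 30 ≤ (n : ℝ) ^ (1 / 1000 : ℝ) ∧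
      c ≤ (n : ℝ) ^ (1 / 1000 : ℝ) := by
  have hn := tendsto_natCast_atTop_atTop (R := ℝ)
  have hlog := (Real.tendsto_log_atTop.comp hn).eventually_ge_atTop (10 ^ 8)
  have hrpow :=
    ((tendsto_rpow_atTop (by norm_num : (0 : ℝ) < 1 / 1000)).comp hn).eventually_ge_atTop c
  have hlittleO := hn.eventually ((isLittleO_log_rpow_rpow_atTop ((30 : ℕ) : ℝ)
    (by norm_num : (0 : ℝ) < 1 / 1000)).def one_pos)
  obtain ⟨N, hN⟩ := Filter.eventually_atTop.1 (hlog.and (hlittleO.and hrpow))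
  refine ⟨N, fun n hNn => ⟨(hN n hNn).1, ?_, (hN n hNn).2.2⟩⟩
  have hlogpow := (hN n hNn).2.1
  rwa [one_mul, Real.rpow_natCast, Real.norm_of_nonneg (by positivity),
    Real.norm_of_nonneg (by positivity)] at hlogpow

theorem natLog_two_add_one_le {n : ℕ} (h : 1 ≤ Real.log n) :
    (Nat.log 2 n : ℝ) + 1 ≤ 3 * Real.log n := by
  have hlogb : Real.logb (2 : ℕ) n ≤ 2 * Real.log n := by
    have hlog2 := Real.log_two_gt_d9
    rw [Real.logb, Nat.cast_ofNat, div_le_iff₀ (by linarith)]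
    nlinarith
  linarith [Real.natLog_le_logb n 2]

theorem regime_of_log_pow_le {n : ℕ} (hlog : 10 ^ 8 ≤ Real.log n)
    (hpow : Real.log n ^ 30 ≤ (n : ℝ) ^ (1 / 1000 : ℝ)) (hp : (n : ℝ) ^ (-(1 / 4000) : ℝ) ≤ p)
    (hp1 : p ≤ 1) :
    Regime n p ((n : ℝ) ^ (1 / 1000 : ℝ)) (Real.log n ^ 3)
      (p ^ 4 * n / (64 * (Real.log n ^ 3) ^ 4)) := by
  have hn : (0 : ℝ) < n :=
    (Nat.cast_nonneg n).lt_of_ne' fun h0 => by norm_num [h0] at hlog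
  refine ⟨?_, (Real.rpow_pos_of_pos hn _).trans_le hp, hp1, ?_, ?_, ?_, ?_⟩
  · rw [← Real.rpow_mul_natCast hn.le]
    norm_num
  · calc (1 : ℝ) = (n : ℝ) ^ (1 / 1000 : ℝ) * ((n : ℝ) ^ (-(1 / 4000) : ℝ)) ^ 4 := by
          rw [← Real.rpow_mul_natCast hn.le, ← Real.rpow_add hn]
          norm_num
      _ ≤ _ := by gcongr
  · linarith [le_self_pow₀ (by linarith : 1 ≤ Real.log n) three_ne_zero]
  · rwa [← pow_mul]
  · have : 0 < Real.log n := by linarith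
    field_simp

theorem mul_div_log_pow_le {n b : ℝ} {s t : ℕ} (hs : 4 ≤ s) (ht : 13 ≤ t) (hn : 0 ≤ n)
    (hp : 0 ≤ p) (hp1 : p ≤ 1) (hb : 512 ≤ b) :
    p ^ s * n / b ^ t ≤ p ^ 4 * n / (64 * (b ^ 3) ^ 4) / 8 := by
  have hbt : 512 * (b ^ 3) ^ 4 ≤ b ^ t := by
    calc 512 * (b ^ 3) ^ 4 ≤ b * (b ^ 3) ^ 4 := by gcongr
      _ = b ^ 13 := by ring
      _ ≤ b ^ t := pow_le_pow_right₀ (by linarith) ht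
  calc p ^ s * n / b ^ t ≤ p ^ 4 * n / (512 * (b ^ 3) ^ 4) := by
        gcongr ?_ * n / ?_
        exact pow_le_pow_of_le_one hp hp1 hs
    _ = p ^ 4 * n / (64 * (b ^ 3) ^ 4) / 8 := by ring

end RandomSets

theorem partition_into_four_sets_with_sum_general {s t : ℕ} (hs : 4 ≤ s) (ht : 13 ≤ t) {δ : ℝ}
    (hδ : 0 < δ) :
    ∃ N : ℕ, ∀ (G : Type*) [AddCommGroup G] [Fintype G] [DecidableEq G] (p : ℝ),
      N ≤ Fintype.card G → (Fintype.card G : ℝ) ^ (-(1 / 4000) : ℝ) ≤ p → p ≤ 1 →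
      1 - δ ≤ bernoulliProb Finset.univ (fun _ => p) fun R : Finset G =>
        ∀ (X : Finset G) (α : G),
          ((symmDiff X R).card : ℝ) ≤
            p ^ s * Fintype.card G / Real.log (Fintype.card G) ^ t →
          4 ∣ X.card → ∑ x ∈ X, x = (X.card / 4) • α →
          ∃ P : Finset (Finset G), (P : Set (Finset G)).PairwiseDisjoint id ∧ P.biUnion id = X ∧
            ∀ A ∈ P, A.card = 4 ∧ ∑ x ∈ A, x = α := by
  obtain ⟨N, hN⟩ := exists_forall_log_pow_le (1 / δ)
  refine ⟨N, fun G _ _ _ p hNG hp hp1 => ?_⟩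
  obtain ⟨hlog, hpow, hδy⟩ := hN _ hNG
  have h := regime_of_log_pow_le hlog hpow hp hp1
  have hδ' : 1 / (Fintype.card G : ℝ) ^ (1 / 1000 : ℝ) ≤ δ :=
    (one_div_le (by linarith [h.one_le_y]) hδ).2 hδy
  refine (sub_le_sub_left hδ' 1).trans <| h.one_sub_inv_le_bernoulliProb_typical.trans <|
    bernoulliProb_mono (fun _ _ => ⟨h.pos.le, hp1⟩) fun R _ hR X α hXR h4 hsum => ?_
  have herror := mul_div_log_pow_le hs ht h.order_pos.le h.pos.le hp1
    (by linarith : 512 ≤ Real.log (Fintype.card G))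
  refine (hR.of_symmDiff (by linarith)).exists_partition h ?_ h4 hsum
  have hlog2 := natLog_two_add_one_le (by linarith : 1 ≤ Real.log (Fintype.card G))
  calc _ ≤ 10 ^ 7 * (3 * Real.log (Fintype.card G)) ^ 2 := by gcongr
    _ = 9 * 10 ^ 7 * Real.log (Fintype.card G) ^ 2 := by ring
    _ ≤ Real.log (Fintype.card G) * Real.log (Fintype.card G) ^ 2 := by gcongr; linarith
    _ = Real.log (Fintype.card G) ^ 3 := by ring

/-- With high probability, any set `X` close to a `p`-random set, avoiding `0`, with
`4 ∣ |X|` and `∑ X = (|X|/4)·α`, can be partitioned into `4`-sets each of sum `α`. -/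
theorem partition_into_four_sets_with_sum :
    ∀ δ : ℝ, 0 < δ → ∃ N : ℕ,
      ∀ (G : Type) [AddCommGroup G] [Fintype G] [DecidableEq G], ∀ p : ℝ,
      N ≤ Fintype.card G →
      (Fintype.card G : ℝ) ^ (-(1 : ℝ) / 10 ^ 100) ≤ p → p ≤ 1 →
      1 - δ ≤ ∑ R : Finset G,
        (if (∀ (X : Finset G) (α : G),
              ((symmDiff X R).card : ℝ) ≤
                p ^ (10 ^ 10 : ℕ) * Fintype.card G
                  / (Real.log (Fintype.card G)) ^ (10 ^ 22 : ℕ) →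
              (0 : G) ∉ X → 4 ∣ X.card →
              (∑ x ∈ X, x) = (X.card / 4) • α →
              ∃ P : Finset (Finset G),
                (∀ A ∈ P, ∀ B ∈ P, A ≠ B → Disjoint A B) ∧
                P.biUnion id = X ∧
                (∀ A ∈ P, A.card = 4 ∧ (∑ x ∈ A, x) = α))
        then setProb G p R else 0) := by
  intro δ hδ
  obtain ⟨N, hN⟩ := partition_into_four_sets_with_sum_general (s := 10 ^ 10) (t := 10 ^ 22)
    (by norm_num) (by norm_num) hδ
  refine ⟨max N 1, fun G _ _ _ p hNG hp hp1 => ?_⟩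
  have hn : (1 : ℝ) ≤ Fintype.card G := Nat.one_le_cast.2 (le_of_max_le_right hNG)
  have hp0 : 0 ≤ p := (Real.rpow_nonneg (by linarith) _).trans hp
  rw [sum_ite_setProb_eq_bernoulliProb]
  refine (hN G p (le_of_max_le_left hNG)
    ((Real.rpow_le_rpow_of_exponent_le hn (by norm_num)).trans hp) hp1).trans <|
    bernoulliProb_mono (fun _ _ => ⟨hp0, hp1⟩) fun R _ hR X α hXR _ h4 hsum => ?_
  obtain ⟨P, hdisj, hunion, hP⟩ := hR X α hXR h4 hsum
  exact ⟨P, fun A hA B hB => hdisj hA hB, hunion, hP⟩
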